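/- Let f = Σ_{λ∈Λ} Σ_n p_n(λ) δ_λ^{(n)} be a tempered distribution on ℝ, where δ_λ^{(n)} is the n-th derivative of the Dirac delta at λ, such that Λ = supp f and Γ = supp f̂ are uniformly discrete. Then there exist a lattice L = αℤ with α > 0, a finite set of quadruples (τ, ω, l, n) with τ, ω real numbers and l, n nonnegative integers, and complex numbers c(τ,ω,l,n), such that f = Σ_{(τ,ω,l,n)} c(τ,ω,l,n) Σ_{λ∈L} λ^l e^{2πiλω} δ_{λ+τ}^{(n)}. -/

import Mathlib

open MeasureTheory SchwartzMap Metric Set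
open scoped Pointwise ENNReal NNReal

noncomputable section

/-- The space `S*(ℝ)` of tempered distributions on the real line. -/
abbrev TemperedDistR : Type := SchwartzMap ℝ ℂ →L[ℂ] ℂ

/-- The Fourier transform of a tempered distribution on `ℝ`: `f̂(φ) = f(φ̂)`. -/
def fourierTDR (f : TemperedDistR) : TemperedDistR :=
  f.comp (fourierTransformCLM ℂ)

/-- The support of a tempered distribution on `ℝ`. -/
def tdSupportR (f : TemperedDistR) : Set ℝ :=
  {x | ∀ U : Set ℝ, IsOpen U → x ∈ U →
    ∃ φ : SchwartzMap ℝ ℂ, HasCompactSupport (⇑φ) ∧ tsupport (⇑φ) ⊆ U ∧ f φ ≠ 0}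

/-- A set in `ℝ` is locally finite if its intersection with every ball is finite. -/
def LocFiniteR (A : Set ℝ) : Prop :=
  ∀ (x : ℝ) (r : ℝ), (A ∩ Metric.ball x r).Finite

/-- A set in `ℝ` is uniformly discrete if distances between distinct points
are bounded below by a positive constant. -/
def UniformlyDiscreteR (A : Set ℝ) : Prop :=
  ∃ η > (0:ℝ), ∀ x ∈ A, ∀ y ∈ A, x ≠ y → η ≤ dist x y

/-- The exponential `e^{2πixw}`. -/
def e2piR (x w : ℝ) : ℂ :=
  Complex.exp (((2 * Real.pi * (x * w) : ℝ) : ℂ) * Complex.I)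

/-- A trigonometric polynomial on `ℝ`: a finite sum `Σ c_ω e^{2πixω}`. -/
def IsTrigPolyR (P : ℝ → ℂ) : Prop :=
  ∃ (n : ℕ) (cc : Fin n → ℂ) (w : Fin n → ℝ),
    ∀ x, P x = ∑ i, cc i * e2piR x (w i)

/-- The pure point measure `μ = Σ_λ a(λ) δ_λ` on `ℝ` belongs to `S*(ℝ)` and is
represented there by the tempered distribution `f`. -/
def RepMeasureR (a : ℝ → ℂ) (f : TemperedDistR) : Prop :=
  {x | a x ≠ 0}.Countable ∧
  (∀ φ : SchwartzMap ℝ ℂ, Summable fun lam => ‖a lam‖ * ‖φ lam‖) ∧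
  (∀ φ : SchwartzMap ℝ ℂ, f φ = ∑' lam, a lam * φ lam)

/-!
Since the support is separated, `f` is a series of jets `∑ pₙ(λ) δ_λ⁽ⁿ⁾` with slowly growing
coefficients, and so is its Fourier transform. The quantitative tool is a density theorem in the
spirit of Beurling: such a series which annihilates all test functions with spectrum in a fixed band
is either zero or its points have lower density bounded below by a constant depending only on the
order of the jets, the separation and the width of the band; if the band is too wide, it must be
zero.

If `ψ` is band-limited then `G(x) = f(ψ(· + x))` is an exponential polynomial with frequencies in
`-Γ`. The differences `Γ - Γ` avoid an interval next to the origin, so for `φ` with spectrum in this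
interval the product `φ G` has spectrum off `Γ` and is annihilated by `f`. Letting `ψ` vary, this
says that for each `s` the jet series with points `Λ ∩ (s - Λ)` and coefficients the products of
those of `f` at `x` and at `s - x` annihilates a band. So `Λ ∩ (s - Λ)` has lower density bounded
below uniformly in `s ∈ Λ + Λ`, and counting pairs shows that `Λ + Λ` is locally finite.

A relation `∑ cᵢ pₙ(z - yᵢ) = 0` holds everywhere, and gives `∑ cᵢ e^{-2πi yᵢ γ} = 0` on `Γ`, as
soon as it holds for `|z| ≤ R`. For `yᵢ ∈ Λ` only the finitely many points of `Λ + Λ` in this window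
matter, so the restrictions to `Γ` of the characters with frequencies in `Λ` span a finite
dimensional space and form a totally bounded set. Therefore there are arbitrarily fine common almost
periods `x > 0` of the characters in `Γ`. As almost periods are separated, the same dimension count
applies to `yᵢ = i x` and yields a linear recurrence `∑ cᵢ pₙ(z - i x) = 0`.

By slow growth, the solutions of this recurrence along each progression `z + ℤ x` are exponential
polynomials with real frequencies, and only finitely many progressions occur.
-/

section

open Filter Topology
open scoped FourierTransform ContDiff

/-! ### Schwartz functions -/

/-- The `n`-th derivative as an operation on Schwartz functions. -/
def schwartzIteratedDeriv (n : ℕ) : 𝓢(ℝ, ℂ) →L[ℂ] 𝓢(ℝ, ℂ) :=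
  derivCLM ℂ ℂ ^ n

lemma coe_schwartzIteratedDeriv (n : ℕ) (φ : 𝓢(ℝ, ℂ)) :
    ⇑(schwartzIteratedDeriv n φ) = iteratedDeriv n φ := by
  induction n with
  | zero => simp [schwartzIteratedDeriv]
  | succ k ih =>
    have hsucc : schwartzIteratedDeriv (k + 1) φ = derivCLM ℂ ℂ (schwartzIteratedDeriv k φ) := by
      rw [schwartzIteratedDeriv, pow_succ']
      rfl
    ext x
    rw [hsucc, derivCLM_apply, ih, iteratedDeriv_succ]

lemma hasDerivAt_iteratedDeriv_schwartz (φ : 𝓢(ℝ, ℂ)) (k : ℕ) (x : ℝ) :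
    HasDerivAt (iteratedDeriv k φ) (iteratedDeriv (k + 1) φ x) x := by
  rw [← coe_schwartzIteratedDeriv, iteratedDeriv_succ, ← coe_schwartzIteratedDeriv]
  exact (schwartzIteratedDeriv k φ).hasDerivAt x

lemma exists_iteratedDeriv_decay (φ : 𝓢(ℝ, ℂ)) (A B : ℕ) :
    ∃ M > (0 : ℝ), ∀ l ≤ A, ∀ x : ℝ, (1 + |x|) ^ B * ‖iteratedDeriv l φ x‖ ≤ M := by
  refine ⟨2 ^ B * ((Finset.Iic (B, A)).sup fun m => SchwartzMap.seminorm ℂ m.1 m.2) φ + 1,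
    by positivity, fun l hl x => ?_⟩
  have h := one_add_le_sup_seminorm_apply (𝕜 := ℂ) (m := (B, A)) (k := B) (n := l) le_rfl hl φ x
  rw [norm_iteratedFDeriv_eq_norm_iteratedDeriv, Real.norm_eq_abs] at h
  exact h.trans (by simp)

lemma iteratedDeriv_eq_zero_of_eventuallyEq {φ : ℝ → ℂ} {x : ℝ} (h : φ =ᶠ[𝓝 x] 0) (n : ℕ) :
    iteratedDeriv n φ x = 0 := by
  have h0 : φ =ᶠ[𝓝 x] fun _ => (0 : ℂ) := h
  rw [h0.iteratedDeriv_eq, iteratedDeriv_const]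
  simp

/-- The pointwise product of two Schwartz functions. -/
def schwartzMul (φ ψ : 𝓢(ℝ, ℂ)) : 𝓢(ℝ, ℂ) :=
  smulLeftCLM ℂ φ ψ

lemma schwartzMul_apply (φ ψ : 𝓢(ℝ, ℂ)) (x : ℝ) : schwartzMul φ ψ x = φ x * ψ x := by
  simp [schwartzMul, smulLeftCLM_apply_apply φ.hasTemperateGrowth]

lemma iteratedDeriv_schwartzMul (φ ψ : 𝓢(ℝ, ℂ)) (n : ℕ) (x : ℝ) :
    iteratedDeriv n (schwartzMul φ ψ) x = ∑ i ∈ Finset.range (n + 1),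
      (n.choose i : ℂ) * iteratedDeriv i φ x * iteratedDeriv (n - i) ψ x := by
  rw [show ⇑(schwartzMul φ ψ) = fun x => φ x * ψ x from funext (schwartzMul_apply φ ψ)]
  exact iteratedDeriv_fun_mul (φ.smooth n).contDiffAt (ψ.smooth n).contDiffAt

/-- The affine change of variables `φ ↦ φ (a * (· - s))`. -/
def affineComp (a : ℝˣ) (s : ℝ) : 𝓢(ℝ, ℂ) →L[ℂ] 𝓢(ℝ, ℂ) :=
  (compSubConstCLM ℂ s).comp
    (compCLMOfContinuousLinearEquiv ℂ (ContinuousLinearEquiv.unitsEquivAut ℝ a))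

lemma affineComp_apply (a : ℝˣ) (s : ℝ) (φ : 𝓢(ℝ, ℂ)) (x : ℝ) :
    affineComp a s φ x = φ (a * (x - s)) := by
  simp [affineComp, compSubConstCLM_apply, mul_comm]

lemma iteratedDeriv_affineComp (a : ℝˣ) (s : ℝ) (φ : 𝓢(ℝ, ℂ)) (n : ℕ) (x : ℝ) :
    iteratedDeriv n (affineComp a s φ) x =
      ((a : ℝ) : ℂ) ^ n * iteratedDeriv n φ (a * (x - s)) := by
  rw [show ⇑(affineComp a s φ) = fun x => φ (a * (x - s)) from funext (affineComp_apply a s φ),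
    iteratedDeriv_comp_sub_const n (fun y => φ (a * y)) s,
    iteratedDeriv_comp_const_smul (φ.smooth n) (a : ℝ)]
  simp [Complex.real_smul]

/-- A compactly supported Schwartz function equal to `1` on `[-1, 1]` and to `0` off `(-2, 2)`. -/
def cutoff : 𝓢(ℝ, ℂ) :=
  let b : ContDiffBump (0 : ℝ) := ⟨1, 2, by norm_num, by norm_num⟩
  HasCompactSupport.toSchwartzMap (f := fun x => ((b x : ℝ) : ℂ))
    (b.hasCompactSupport.comp_left (g := fun x : ℝ => (x : ℂ)) Complex.ofReal_zero)
    (Complex.ofRealCLM.contDiff.comp b.contDiff)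

lemma cutoff_eq_one {x : ℝ} (hx : |x| ≤ 1) : cutoff x = 1 :=
  congrArg Complex.ofReal (ContDiffBump.one_of_mem_closedBall _ (by simpa using hx))

lemma cutoff_eq_zero {x : ℝ} (hx : 2 ≤ |x|) : cutoff x = 0 :=
  congrArg Complex.ofReal (ContDiffBump.zero_of_le_dist _ (by simpa [Real.dist_eq] using hx))

/-- The restriction of `φ` to the neighbourhood of `s` of size `ε`, obtained by multiplying it with
a cutoff at scale `ε`. -/
def localize (ε : ℝˣ) (s : ℝ) (φ : 𝓢(ℝ, ℂ)) : 𝓢(ℝ, ℂ) :=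
  schwartzMul (affineComp ε⁻¹ s cutoff) φ

lemma localize_apply (ε : ℝˣ) (s : ℝ) (φ : 𝓢(ℝ, ℂ)) (x : ℝ) :
    localize ε s φ x = cutoff ((ε : ℝ)⁻¹ * (x - s)) * φ x := by
  rw [localize, schwartzMul_apply, affineComp_apply, Units.val_inv_eq_inv_val]

lemma cutoff_inv_mul_eq_one {ε : ℝ} (hε : 0 < ε) {x : ℝ} (hx : |x| ≤ ε) : cutoff (ε⁻¹ * x) = 1 :=
  cutoff_eq_one (by rwa [abs_mul, abs_of_pos (inv_pos.2 hε), ← div_eq_inv_mul, div_le_one hε])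

lemma cutoff_inv_mul_eq_zero {ε : ℝ} (hε : 0 < ε) {x : ℝ} (hx : 2 * ε ≤ |x|) :
    cutoff (ε⁻¹ * x) = 0 :=
  cutoff_eq_zero (by rwa [abs_mul, abs_of_pos (inv_pos.2 hε), ← div_eq_inv_mul, le_div_iff₀ hε])

lemma exists_norm_iteratedDeriv_localize_le_sum (A : ℕ) :
    ∃ X > (0 : ℝ), ∀ (φ : 𝓢(ℝ, ℂ)) (s : ℝ) (ε : ℝˣ), 0 < (ε : ℝ) → ∀ l ≤ A, ∀ x,
      ‖iteratedDeriv l (localize ε s φ) x‖ ≤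
        X * ∑ i ∈ Finset.range (l + 1), (ε : ℝ)⁻¹ ^ i * ‖iteratedDeriv (l - i) φ x‖ := by
  obtain ⟨X, hX, hcut⟩ := exists_iteratedDeriv_decay cutoff A 0
  refine ⟨2 ^ A * X, by positivity, fun φ s ε hε l hl x => ?_⟩
  rw [localize, iteratedDeriv_schwartzMul, Finset.mul_sum]
  refine (norm_sum_le _ _).trans (Finset.sum_le_sum fun i hi => ?_)
  have hil : i ≤ l := Nat.lt_succ_iff.1 (Finset.mem_range.1 hi)
  have hchoose : ‖((l.choose i : ℕ) : ℂ)‖ ≤ 2 ^ A := by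
    rw [Complex.norm_natCast]
    exact_mod_cast (Nat.choose_le_two_pow l i).trans (Nat.pow_le_pow_right two_pos hl)
  have hcutoff : ‖iteratedDeriv i (affineComp ε⁻¹ s cutoff) x‖ ≤ (ε : ℝ)⁻¹ ^ i * X := by
    rw [iteratedDeriv_affineComp, norm_mul, norm_pow, Complex.norm_real, Real.norm_eq_abs,
      Units.val_inv_eq_inv_val, abs_of_pos (inv_pos.2 hε)]
    gcongr
    simpa using hcut i (hil.trans hl) ((ε : ℝ)⁻¹ * (x - s))
  rw [norm_mul, norm_mul]
  calc _ ≤ 2 ^ A * ((ε : ℝ)⁻¹ ^ i * X) * ‖iteratedDeriv (l - i) φ x‖ := by gcongr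
    _ = 2 ^ A * X * ((ε : ℝ)⁻¹ ^ i * ‖iteratedDeriv (l - i) φ x‖) := by ring

lemma iteratedDeriv_ofReal_sub_pow (s : ℝ) (n l : ℕ) :
    iteratedDeriv l (fun x : ℝ => ((x : ℂ) - s) ^ n) =
      fun x : ℝ => (n.descFactorial l : ℂ) * ((x : ℂ) - s) ^ (n - l) := by
  induction l with
  | zero => simp
  | succ k ih =>
    rw [iteratedDeriv_succ, ih]
    ext x
    have h1 : HasDerivAt (fun x : ℝ => (x : ℂ) - s) 1 x := by
      simpa using (Complex.ofRealCLM.hasDerivAt (x := x)).sub_const (s : ℂ)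
    rw [((h1.fun_pow (n - k)).const_mul (n.descFactorial k : ℂ)).deriv, Nat.descFactorial_succ,
      show n - k - 1 = n - (k + 1) by omega]
    push_cast
    ring

lemma hasTemperateGrowth_ofReal_sub_pow (s : ℝ) (n : ℕ) :
    (fun x : ℝ => ((x : ℂ) - s) ^ n).HasTemperateGrowth :=
  (Function.Complex.hasTemperateGrowth_ofReal.sub (.const (s : ℂ))).pow n

lemma contDiff_ofReal_sub_pow (s : ℝ) (n m : ℕ) : ContDiff ℝ m fun x : ℝ => ((x : ℂ) - s) ^ n :=
  (hasTemperateGrowth_ofReal_sub_pow s n).1.of_le (by exact_mod_cast le_top)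

lemma exists_schwartz_with_jet {r : ℝ} (hr : 0 < r) (n : ℕ) :
    ∃ e : 𝓢(ℝ, ℂ), (∀ x, r ≤ |x| → e x = 0) ∧
      ∀ l, iteratedDeriv l e 0 = if l = n then 1 else 0 := by
  have hr2 : 0 < r / 2 := by positivity
  let e : 𝓢(ℝ, ℂ) := (n.factorial : ℂ)⁻¹ • smulLeftCLM ℂ (fun x : ℝ => ((x : ℂ) - (0 : ℝ)) ^ n)
    (affineComp (Units.mk0 (r / 2) hr2.ne')⁻¹ 0 cutoff)
  have he : ∀ x, e x = (n.factorial : ℂ)⁻¹ *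
      (((x : ℂ) - (0 : ℝ)) ^ n * cutoff ((r / 2)⁻¹ * x)) := fun x => by
    simp only [e, smul_apply, smulLeftCLM_apply_apply (hasTemperateGrowth_ofReal_sub_pow 0 n),
      affineComp_apply, Units.val_inv_eq_inv_val, Units.val_mk0, sub_zero, smul_eq_mul]
  refine ⟨e, fun x hx => ?_, fun l => ?_⟩
  · rw [he, cutoff_inv_mul_eq_zero hr2 (by linarith), mul_zero, mul_zero]
  have hpow : ⇑e =ᶠ[𝓝 0] fun x => (n.factorial : ℂ)⁻¹ * ((x : ℂ) - (0 : ℝ)) ^ n := by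
    filter_upwards [Metric.ball_mem_nhds (0 : ℝ) hr2] with x hx
    rw [Metric.mem_ball, Real.dist_eq, sub_zero] at hx
    rw [he, cutoff_inv_mul_eq_one hr2 hx.le, mul_one]
  rw [hpow.iteratedDeriv_eq, iteratedDeriv_const_mul_field, iteratedDeriv_ofReal_sub_pow]
  rcases lt_trichotomy l n with h | rfl | h
  · simp [h.ne, (Nat.sub_pos_of_lt h).ne']
  · simp [Nat.descFactorial_self, Nat.factorial_ne_zero]
  · simp [h.ne', Nat.descFactorial_of_lt h]

lemma exists_sum_tsupport_subset {E F ι : Type*} [NormedAddCommGroup E] [NormedSpace ℝ E]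
    [FiniteDimensional ℝ E] [NormedAddCommGroup F] [NormedSpace ℝ F] {φ : 𝓢(E, F)}
    (hφ : HasCompactSupport φ) {U : ι → Set E} (hU : ∀ i, IsOpen (U i))
    (hcover : tsupport φ ⊆ ⋃ i, U i) :
    ∃ (s : Finset ι) (ψ : ι → 𝓢(E, F)), φ = ∑ i ∈ s, ψ i ∧
      ∀ i, HasCompactSupport (ψ i) ∧ tsupport (ψ i) ⊆ U i := by
  obtain ⟨ρ, hρ⟩ := SmoothPartitionOfUnity.exists_isSubordinate (modelWithCornersSelf ℝ E)
    (isClosed_tsupport φ) U hU hcover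
  have hfin : {i | (Function.support (ρ i) ∩ tsupport φ).Nonempty}.Finite :=
    ρ.locallyFinite.finite_nonempty_inter_compact hφ
  have hcs : ∀ i, HasCompactSupport (fun x => ρ i x • φ x) := fun i => hφ.smul_left
  let ψ : ι → 𝓢(E, F) := fun i =>
    (hcs i).toSchwartzMap ((ρ i).contMDiff.contDiff.smul (φ.smooth ⊤))
  refine ⟨hfin.toFinset, ψ, ?_, fun i => ⟨hcs i, (tsupport_smul_subset_left _ _).trans (hρ i)⟩⟩
  ext x
  have hsum : (∑ i ∈ hfin.toFinset, ψ i) x = (∑ i ∈ hfin.toFinset, ρ i x) • φ x := by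
    rw [sum_apply, Finset.sum_smul]
    rfl
  rw [hsum]
  by_cases hx : x ∈ tsupport φ
  · rw [← finsum_eq_sum_of_support_subset, ρ.sum_eq_one hx, one_smul]
    intro i hi
    simpa using ⟨x, hi, hx⟩
  · rw [image_eq_zero_of_notMem_tsupport hx, smul_zero]

/-! ### Separated sets -/

/-- Distinct points of `A` are at distance at least `η > 0`. -/
structure SeparatedBy (η : ℝ) (A : Set ℝ) : Prop where
  pos : 0 < η
  le_abs_sub : ∀ x ∈ A, ∀ y ∈ A, x ≠ y → η ≤ |x - y|

namespace SeparatedBy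

variable {η : ℝ} {A B : Set ℝ}

lemma mono (h : SeparatedBy η B) (hAB : A ⊆ B) : SeparatedBy η A :=
  ⟨h.pos, fun x hx y hy => h.le_abs_sub x (hAB hx) y (hAB hy)⟩

lemma injOn_floor_div (h : SeparatedBy η A) (a : ℝ) : InjOn (fun x : ℝ => ⌊(x - a) / η⌋) A := by
  have hη := h.pos
  intro x hx y hy hxy
  by_contra hne
  have hlt := Int.abs_sub_lt_one_of_floor_eq_floor hxy
  rw [← sub_div, abs_div, abs_of_pos hη, div_lt_one hη, sub_sub_sub_cancel_right] at hlt
  exact hlt.not_ge (h.le_abs_sub x hx y hy hne)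

lemma finite_inter_Icc (h : SeparatedBy η A) (a b : ℝ) : (A ∩ Icc a b).Finite := by
  have hη := h.pos
  refine Set.Finite.of_finite_image ((Set.finite_Icc 0 ⌊(b - a) / η⌋).subset ?_)
    ((h.injOn_floor_div a).mono inter_subset_left)
  rintro _ ⟨x, ⟨-, hax, hxb⟩, rfl⟩
  exact ⟨Int.floor_nonneg.2 (div_nonneg (sub_nonneg.2 hax) hη.le),
    Int.floor_le_floor (by gcongr)⟩

lemma card_le {S : Finset ℝ} (h : SeparatedBy η S) {a b : ℝ} (hab : a ≤ b)
    (hS : ∀ s ∈ S, s ∈ Icc a b) : (S.card : ℝ) ≤ (b - a) / η + 1 := by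
  have hη := h.pos
  have hdiv : 0 ≤ (b - a) / η := div_nonneg (sub_nonneg.2 hab) hη.le
  have hmaps : ∀ s ∈ S, ⌊(s - a) / η⌋ ∈ Finset.Icc 0 ⌊(b - a) / η⌋ := fun s hs => by
    obtain ⟨has, hsb⟩ := hS s hs
    exact Finset.mem_Icc.2 ⟨Int.floor_nonneg.2 (div_nonneg (sub_nonneg.2 has) hη.le), by gcongr⟩
  have hcard := Finset.card_le_card_of_injOn _ hmaps (h.injOn_floor_div a)
  rw [Int.card_Icc, sub_zero] at hcard
  calc (S.card : ℝ) ≤ ((⌊(b - a) / η⌋ + 1).toNat : ℝ) := by exact_mod_cast hcard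
    _ = ⌊(b - a) / η⌋ + 1 := by
      exact_mod_cast Int.toNat_of_nonneg (add_nonneg (Int.floor_nonneg.2 hdiv) zero_le_one)
    _ ≤ (b - a) / η + 1 := by
      gcongr
      exact Int.floor_le _

lemma ncard_inter_Icc_le (h : SeparatedBy η A) {a b : ℝ} (hab : a ≤ b) :
    ((A ∩ Icc a b).ncard : ℝ) ≤ (b - a) / η + 1 := by
  have hfin := h.finite_inter_Icc a b
  rw [Set.ncard_eq_toFinset_card _ hfin]
  refine card_le (h.mono ?_) hab fun s hs => (hfin.mem_toFinset.1 hs).2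
  rw [hfin.coe_toFinset]
  exact inter_subset_left

lemma pow_mul_factorial_le_prod_abs_sub {s₀ : ℝ} {S : Finset ℝ} (hs₀ : s₀ ∉ S)
    (h : SeparatedBy η (insert s₀ (S : Set ℝ))) :
    (η / 2) ^ S.card * S.card.factorial ≤ ∏ s ∈ S, |s₀ - s| := by
  classical
  have hη := h.pos
  obtain ⟨m, hm⟩ : ∃ m, S.card = m := ⟨_, rfl⟩
  rw [hm]
  induction m generalizing S with
  | zero => simp [Finset.card_eq_zero.1 hm]
  | succ m ih =>
    obtain ⟨t, htS, hmax⟩ := Finset.exists_max_image S (fun s => |s₀ - s|)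
      (Finset.card_pos.1 (by omega))
    have hrest := ih (S := S.erase t) (fun hs => hs₀ (Finset.mem_of_mem_erase hs))
      (h.mono (insert_subset_insert (by simp)))
      (by rw [Finset.card_erase_of_mem htS, hm, Nat.add_sub_cancel])
    have hfarthest : η / 2 * (m + 1) ≤ |s₀ - t| := by
      have hcount := card_le (S := insert s₀ S) (by simpa using h)
        (a := s₀ - |s₀ - t|) (b := s₀ + |s₀ - t|) (by linarith [abs_nonneg (s₀ - t)]) fun s hs => by
          rcases Finset.mem_insert.1 hs with rfl | hs
          · exact ⟨by linarith [abs_nonneg (s - t)], by linarith [abs_nonneg (s - t)]⟩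
          · have := abs_le.1 (hmax s hs)
            exact ⟨by linarith, by linarith⟩
      rw [Finset.card_insert_of_notMem hs₀, hm] at hcount
      push_cast at hcount
      have hdiv : (m : ℝ) + 1 ≤ (s₀ + |s₀ - t| - (s₀ - |s₀ - t|)) / η := by linarith
      rw [le_div_iff₀ hη] at hdiv
      linarith
    rw [← Finset.mul_prod_erase S _ htS]
    calc (η / 2) ^ (m + 1) * ((m + 1).factorial : ℝ)
        = (η / 2 * (m + 1)) * ((η / 2) ^ m * m.factorial) := by
          rw [Nat.factorial_succ]
          push_cast
          ring
      _ ≤ _ := by gcongr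

end SeparatedBy

/-! ### Tempered distributions with separated support -/

/-- `f` is bounded, with constant `C`, by the Schwartz norm that weighs the first `A` derivatives
with `(1 + |x|) ^ A`. -/
def HasOrderBound (f : TemperedDistR) (C : ℝ) (A : ℕ) : Prop :=
  ∀ (φ : 𝓢(ℝ, ℂ)) (M : ℝ),
    (∀ l ≤ A, ∀ x : ℝ, (1 + |x|) ^ A * ‖iteratedDeriv l φ x‖ ≤ M) → ‖f φ‖ ≤ C * M

lemma exists_hasOrderBound (f : TemperedDistR) : ∃ (C : ℝ) (A : ℕ), HasOrderBound f C A := by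
  let q : Seminorm ℂ 𝓢(ℝ, ℂ) := (normSeminorm ℂ ℂ).comp f.toLinearMap
  have hq : Continuous q := continuous_norm.comp f.continuous
  obtain ⟨s, C, -, hC⟩ := Seminorm.bound_of_continuous (schwartz_withSeminorms ℂ ℝ ℂ) q hq
  let A := s.sup fun m => max m.1 m.2
  refine ⟨C, A, fun φ M hM => ?_⟩
  have hM0 : 0 ≤ M := le_trans (by positivity) (hM 0 (Nat.zero_le _) 0)
  refine (hC φ).trans (mul_le_mul_of_nonneg_left ?_ C.2)
  refine Seminorm.finset_sup_apply_le hM0 fun m hm => ?_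
  have hmA : max m.1 m.2 ≤ A := Finset.le_sup (f := fun m : ℕ × ℕ => max m.1 m.2) hm
  refine seminorm_le_bound' ℂ m.1 m.2 φ hM0 fun x => ?_
  refine le_trans ?_ (hM m.2 ((le_max_right _ _).trans hmA) x)
  gcongr
  calc |x| ^ m.1 ≤ (1 + |x|) ^ m.1 := by gcongr; linarith
    _ ≤ (1 + |x|) ^ A :=
      pow_le_pow_right₀ (by linarith [abs_nonneg x]) ((le_max_left _ _).trans hmA)

lemma HasOrderBound.nonneg {f : TemperedDistR} {C : ℝ} {A : ℕ} (h : HasOrderBound f C A) :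
    0 ≤ C := by
  simpa using h 0 1 fun l _ x => by simp [show ⇑(0 : 𝓢(ℝ, ℂ)) = fun _ => 0 from rfl]

lemma apply_eq_zero_of_disjoint_tdSupportR (f : TemperedDistR) {φ : 𝓢(ℝ, ℂ)}
    (hφ : HasCompactSupport φ) (hdisj : Disjoint (tsupport φ) (tdSupportR f)) : f φ = 0 := by
  have hlocal : ∀ x : tsupport φ, ∃ U : Set ℝ, IsOpen U ∧ (x : ℝ) ∈ U ∧
      ∀ ψ : 𝓢(ℝ, ℂ), HasCompactSupport ψ → tsupport ψ ⊆ U → f ψ = 0 := by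
    intro x
    simpa [tdSupportR] using Set.disjoint_left.1 hdisj x.2
  choose U hU hxU hzero using hlocal
  obtain ⟨s, ψ, hsum, hψ⟩ := exists_sum_tsupport_subset hφ hU
    fun x hx => Set.mem_iUnion.2 ⟨⟨x, hx⟩, hxU ⟨x, hx⟩⟩
  rw [hsum, map_sum]
  exact Finset.sum_eq_zero fun i _ => hzero i (ψ i) (hψ i).1 (hψ i).2

lemma exists_norm_iteratedDeriv_le_of_jet_eq_zero {φ : 𝓢(ℝ, ℂ)} {A : ℕ} {s : ℝ}
    (hjet : ∀ l ≤ A, iteratedDeriv l φ s = 0) :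
    ∃ C > (0 : ℝ), ∀ k j, j + k = A + 1 → ∀ x, ‖iteratedDeriv j φ x‖ ≤ C * |x - s| ^ k := by
  obtain ⟨C, hC, hbound⟩ := exists_iteratedDeriv_decay φ (A + 1) 0
  refine ⟨C, hC, fun k => ?_⟩
  induction k with
  | zero => exact fun j hj x => by simpa using hbound j (by omega) x
  | succ k ih =>
    intro j hj x
    have hderiv : ∀ y ∈ uIcc s x, ‖iteratedDeriv (j + 1) φ y‖ ≤ C * |x - s| ^ k := fun y hy =>
      (ih (j + 1) (by omega) y).trans (by gcongr C * ?_ ^ k; exact abs_sub_left_of_mem_uIcc hy)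
    have hmean := (convex_uIcc s x).norm_image_sub_le_of_norm_hasDerivWithin_le
      (fun y _ => (hasDerivAt_iteratedDeriv_schwartz φ j y).hasDerivWithinAt) hderiv
      left_mem_uIcc right_mem_uIcc
    rwa [hjet j (by omega), sub_zero, Real.norm_eq_abs, mul_assoc, ← pow_succ] at hmean

/-- In each Leibniz term the `ε ^ (-i)` lost by differentiating the cutoff is compensated by
the factor `ε ^ (i + 1)` gained from the vanishing jet of `φ`. -/
lemma exists_norm_iteratedDeriv_localize_le {φ : 𝓢(ℝ, ℂ)} {A : ℕ} {s : ℝ}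
    (hjet : ∀ l ≤ A, iteratedDeriv l φ s = 0) :
    ∃ M ≥ (0 : ℝ), ∀ ε : ℝˣ, 0 < (ε : ℝ) → (ε : ℝ) ≤ 1 → ∀ l ≤ A, ∀ x, |x - s| ≤ 2 * ε →
      ‖iteratedDeriv l (localize ε s φ) x‖ ≤ M * ε := by
  obtain ⟨D, hD, hφ⟩ := exists_norm_iteratedDeriv_le_of_jet_eq_zero hjet
  obtain ⟨X, hX, hleibniz⟩ := exists_norm_iteratedDeriv_localize_le_sum A
  refine ⟨X * ∑ _i ∈ Finset.range (A + 1), D * 2 ^ (A + 1), by positivity,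
    fun ε hε0 hε1 l hl x hx => ?_⟩
  refine (hleibniz φ s ε hε0 l hl x).trans ?_
  rw [mul_assoc, Finset.sum_mul]
  gcongr X * ?_
  refine (Finset.sum_le_sum fun i hi => ?_).trans (Finset.sum_le_sum_of_subset_of_nonneg
    (Finset.range_subset_range.2 (by omega)) fun _ _ _ => by positivity)
  have hil : i ≤ l := Nat.lt_succ_iff.1 (Finset.mem_range.1 hi)
  have htaylor : ‖iteratedDeriv (l - i) φ x‖ ≤ D * (2 ^ (A + 1) * (ε : ℝ) ^ (i + 1)) := by
    refine (hφ (A + 1 - (l - i)) (l - i) (by omega) x).trans ?_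
    gcongr
    calc |x - s| ^ (A + 1 - (l - i)) ≤ (2 * (ε : ℝ)) ^ (A + 1 - (l - i)) := by gcongr
      _ = 2 ^ (A + 1 - (l - i)) * (ε : ℝ) ^ (A + 1 - (l - i)) := mul_pow _ _ _
      _ ≤ 2 ^ (A + 1) * (ε : ℝ) ^ (i + 1) := by
        gcongr ?_ * ?_
        · exact pow_le_pow_right₀ one_le_two (by omega)
        · exact pow_le_pow_of_le_one hε0.le hε1 (by omega)
  have hcancel : (ε : ℝ)⁻¹ ^ i * (ε : ℝ) ^ i = 1 := by
    rw [← mul_pow, inv_mul_cancel₀ hε0.ne', one_pow]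
  calc _ ≤ (ε : ℝ)⁻¹ ^ i * (D * (2 ^ (A + 1) * (ε : ℝ) ^ (i + 1))) := by gcongr
    _ = D * 2 ^ (A + 1) * ε := by linear_combination (D * 2 ^ (A + 1) * ε) * hcancel

lemma exists_norm_apply_localize_le {f : TemperedDistR} {C : ℝ} {A : ℕ}
    (hf : HasOrderBound f C A) {φ : 𝓢(ℝ, ℂ)} {s : ℝ}
    (hjet : ∀ l ≤ A, iteratedDeriv l φ s = 0) :
    ∃ M : ℝ, ∀ ε : ℝˣ, 0 < (ε : ℝ) → (ε : ℝ) ≤ 1 → ‖f (localize ε s φ)‖ ≤ M * ε := by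
  obtain ⟨M, hM, hderiv⟩ := exists_norm_iteratedDeriv_localize_le hjet
  refine ⟨C * ((1 + (|s| + 2)) ^ A * M), fun ε hε0 hε1 => ?_⟩
  rw [mul_assoc]
  refine hf _ _ fun l hl x => ?_
  rcases le_or_gt |x - s| (2 * ε) with hx | hx
  · have hxs : |x| ≤ |s| + 2 := by
      linarith [abs_sub_abs_le_abs_sub x s]
    rw [mul_assoc]
    gcongr
    exact hderiv ε hε0 hε1 l hl x hx
  · have hfar : ∀ᶠ y in 𝓝 x, 2 * (ε : ℝ) < |y - s| :=
      (show Continuous fun y : ℝ => |y - s| by fun_prop).continuousAt.eventually (lt_mem_nhds hx)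
    have hzero : iteratedDeriv l (localize ε s φ) x = 0 := by
      refine iteratedDeriv_eq_zero_of_eventuallyEq ?_ l
      filter_upwards [hfar] with y hy
      rw [localize_apply, cutoff_inv_mul_eq_zero hε0 hy.le, zero_mul, Pi.zero_apply]
    rw [hzero, norm_zero, mul_zero]
    positivity

lemma apply_eq_sum_localize {f : TemperedDistR} {η : ℝ} (hs : SeparatedBy η (tdSupportR f))
    {φ : 𝓢(ℝ, ℂ)} (hφ : HasCompactSupport φ) {T : Finset ℝ}
    (hT : ∀ s, s ∈ T ↔ s ∈ tdSupportR f ∧ s ∈ tsupport φ) {ε : ℝˣ} (hε : 0 < (ε : ℝ))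
    (hεη : (ε : ℝ) < η / 4) : f φ = ∑ s ∈ T, f (localize ε s φ) := by
  set R : 𝓢(ℝ, ℂ) := φ - ∑ s ∈ T, localize ε s φ with hR
  have hval : ∀ y, R y = φ y * (1 - ∑ s ∈ T, cutoff ((ε : ℝ)⁻¹ * (y - s))) := fun y => by
    simp only [hR, sub_apply, sum_apply, localize_apply, ← Finset.sum_mul]
    ring
  have hsub : tsupport R ⊆ tsupport φ := closure_mono fun y hy hy0 => hy (by simp [hval, hy0])
  have hdisj : Disjoint (tsupport R) (tdSupportR f) := by
    refine Set.disjoint_left.2 fun s₀ hs₀ hs₀f => ?_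
    have hs₀T : s₀ ∈ T := (hT s₀).2 ⟨hs₀f, hsub hs₀⟩
    refine notMem_tsupport_iff_eventuallyEq.2 ?_ hs₀
    filter_upwards [Metric.ball_mem_nhds s₀ hε] with y hy
    rw [Metric.mem_ball, Real.dist_eq] at hy
    have hone : ∑ s ∈ T, cutoff ((ε : ℝ)⁻¹ * (y - s)) = 1 := by
      rw [Finset.sum_eq_single_of_mem s₀ hs₀T, cutoff_inv_mul_eq_one hε hy.le]
      intro s hsT hne
      have hsep := hs.le_abs_sub s ((hT s).1 hsT).1 s₀ hs₀f hne
      have htri := abs_sub_le s y s₀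
      rw [abs_sub_comm s y] at htri
      exact cutoff_inv_mul_eq_zero hε (by linarith)
    rw [hval, hone, sub_self, mul_zero, Pi.zero_apply]
  have hzero : f R = 0 := apply_eq_zero_of_disjoint_tdSupportR f
    (hφ.of_isClosed_subset (isClosed_tsupport _) hsub) hdisj
  rwa [hR, map_sub, map_sum, sub_eq_zero] at hzero

lemma apply_eq_zero_of_jets_eq_zero {f : TemperedDistR} {C : ℝ} {A : ℕ}
    (hf : HasOrderBound f C A) {η : ℝ} (hs : SeparatedBy η (tdSupportR f)) {φ : 𝓢(ℝ, ℂ)}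
    (hφ : HasCompactSupport φ) (hjet : ∀ s ∈ tdSupportR f, ∀ l ≤ A, iteratedDeriv l φ s = 0) :
    f φ = 0 := by
  have hη := hs.pos
  have hfin : (tdSupportR f ∩ tsupport φ).Finite := by
    obtain ⟨r, hr⟩ := hφ.isBounded.subset_closedBall 0
    rw [Real.closedBall_eq_Icc] at hr
    exact (hs.finite_inter_Icc _ _).subset (Set.inter_subset_inter_right _ hr)
  have hT : ∀ s, s ∈ hfin.toFinset ↔ s ∈ tdSupportR f ∧ s ∈ tsupport φ := fun s =>
    hfin.mem_toFinset
  choose! M hM using fun s (hsT : s ∈ hfin.toFinset) =>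
    exists_norm_apply_localize_le hf (hjet s ((hT s).1 hsT).1)
  have hlim : Tendsto (fun ε : ℝ => (∑ s ∈ hfin.toFinset, M s) * ε) (𝓝[>] 0) (𝓝 0) := by
    refine Tendsto.mono_left ?_ nhdsWithin_le_nhds
    simpa using (continuous_const_mul (∑ s ∈ hfin.toFinset, M s)).tendsto (0 : ℝ)
  refine norm_le_zero_iff.1 (ge_of_tendsto hlim ?_)
  filter_upwards [Ioo_mem_nhdsGT (show 0 < min 1 (η / 4) by positivity)] with ε hε
  obtain ⟨hε1, hεη⟩ := lt_min_iff.1 hε.2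
  rw [apply_eq_sum_localize hs hφ hT (ε := Units.mk0 ε hε.1.ne') hε.1 hεη, Finset.sum_mul]
  exact (norm_sum_le _ _).trans (Finset.sum_le_sum fun s hsT => hM s hsT _ hε.1 hε1.le)

/-! ### The structure theorem for separated support -/

lemma summable_inv_one_add_abs_int_sq : Summable fun m : ℤ => (((1 : ℝ) + |(m : ℝ)|) ^ 2)⁻¹ := by
  refine Summable.of_norm_bounded_eventually (Real.summable_one_div_int_pow.2 one_lt_two) ?_
  rw [Filter.eventually_cofinite]
  refine (Set.finite_singleton (0 : ℤ)).subset fun m hm => ?_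
  by_contra hm0
  have hpos : 0 < |(m : ℝ)| := abs_pos.2 (by exact_mod_cast hm0)
  refine hm ?_
  rw [Real.norm_of_nonneg (by positivity), one_div, ← sq_abs (m : ℝ)]
  gcongr
  linarith

lemma one_add_abs_floor_div_le {η : ℝ} (hη : 0 < η) (x : ℝ) :
    1 + |((⌊x / η⌋ : ℤ) : ℝ)| ≤ 2 * (1 + η⁻¹) * (1 + |x|) := by
  have hfloor : |((⌊x / η⌋ : ℤ) : ℝ)| ≤ |x| * η⁻¹ + 1 := by
    rw [← div_eq_mul_inv, show |x| / η = |x / η| by rw [abs_div, abs_of_pos hη], abs_le]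
    constructor <;> linarith [Int.floor_le (x / η), Int.lt_floor_add_one (x / η),
      neg_abs_le (x / η), le_abs_self (x / η)]
  nlinarith [mul_nonneg (abs_nonneg x) (inv_pos.2 hη).le, abs_nonneg x, inv_pos.2 hη]

lemma SeparatedBy.summable_indicator {η : ℝ} {Λ : Set ℝ} (h : SeparatedBy η Λ) :
    Summable (Λ.indicator fun x : ℝ => ((1 + |x|) ^ 2)⁻¹) := by
  have hη := h.pos
  have hinj : Function.Injective fun x : Λ => ⌊(x : ℝ) / η⌋ := fun x y hxy =>
    Subtype.ext (h.injOn_floor_div 0 x.2 y.2 (by simpa using hxy))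
  rw [← summable_subtype_iff_indicator]
  refine Summable.of_nonneg_of_le (fun x => by simp only [Function.comp]; positivity) (fun x => ?_)
    ((summable_inv_one_add_abs_int_sq.comp_injective hinj).mul_left ((2 * (1 + η⁻¹)) ^ 2))
  simp only [Function.comp]
  rw [← div_eq_mul_inv, le_div_iff₀ (by positivity), ← div_eq_inv_mul,
    div_le_iff₀ (by positivity), ← mul_pow]
  gcongr
  exact one_add_abs_floor_div_le hη x

/-- The pairing at `x` of the coefficients `p n x`, `n ≤ K`, with the jet of `φ`. -/
def jetPairing (K : ℕ) (p : ℕ → ℝ → ℂ) (φ : ℝ → ℂ) (x : ℝ) : ℂ :=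
  ∑ n ∈ Finset.range (K + 1), p n x * iteratedDeriv n φ x

/-- The coefficients `p n` are supported on `Λ` and have polynomial growth, uniformly in `n`. -/
structure SlowlyGrowingOn (p : ℕ → ℝ → ℂ) (Λ : Set ℝ) : Prop where
  supp : ∀ n x, p n x ≠ 0 → x ∈ Λ
  growth : ∃ C ≥ (0 : ℝ), ∃ A : ℕ, ∀ n x, ‖p n x‖ ≤ C * (1 + |x|) ^ A

lemma SlowlyGrowingOn.eq_zero {p : ℕ → ℝ → ℂ} {Λ : Set ℝ} (hp : SlowlyGrowingOn p Λ) (n : ℕ)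
    {x : ℝ} (hx : x ∉ Λ) : p n x = 0 :=
  not_not.1 fun h => hx (hp.supp n x h)

/-- `f` is the series of the functionals `φ ↦ p n x * φ⁽ⁿ⁾(x)` with `x ∈ Λ` and `n ≤ K`; the signs
of the distributions `δ_x⁽ⁿ⁾` are absorbed in the coefficients. -/
structure IsDeltaSeries (f : TemperedDistR) (K : ℕ) (p : ℕ → ℝ → ℂ) (Λ : Set ℝ) : Prop
    extends SlowlyGrowingOn p Λ where
  top : ∀ n x, K < n → p n x = 0
  hasSum : ∀ φ : 𝓢(ℝ, ℂ), HasSum (jetPairing K p φ) (f φ)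

lemma jetPairing_eq_zero {p : ℕ → ℝ → ℂ} {x : ℝ} (hp : ∀ n, p n x = 0) (K : ℕ) (φ : ℝ → ℂ) :
    jetPairing K p φ x = 0 :=
  Finset.sum_eq_zero fun n _ => by rw [hp, zero_mul]

lemma norm_jetPairing_le {p : ℕ → ℝ → ℂ} {C : ℝ} {A : ℕ} {x : ℝ}
    (hp : ∀ n, ‖p n x‖ ≤ C * (1 + |x|) ^ A) {K : ℕ} {φ : ℝ → ℂ} {M : ℝ}
    (hφ : ∀ n ≤ K, (1 + |x|) ^ (A + 2) * ‖iteratedDeriv n φ x‖ ≤ M) :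
    ‖jetPairing K p φ x‖ ≤ (K + 1) * (C * M) * ((1 + |x|) ^ 2)⁻¹ := by
  have hC : 0 ≤ C := nonneg_of_mul_nonneg_left ((norm_nonneg _).trans (hp 0)) (by positivity)
  have hterm : ∀ n ∈ Finset.range (K + 1),
      ‖p n x * iteratedDeriv n φ x‖ ≤ C * M * ((1 + |x|) ^ 2)⁻¹ := by
    intro n hn
    rw [norm_mul, ← div_eq_mul_inv, le_div_iff₀ (by positivity)]
    calc _ ≤ C * (1 + |x|) ^ A * ‖iteratedDeriv n φ x‖ * (1 + |x|) ^ 2 := by gcongr; exact hp n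
      _ = C * ((1 + |x|) ^ (A + 2) * ‖iteratedDeriv n φ x‖) := by ring
      _ ≤ C * M := by gcongr; exact hφ n (Nat.lt_succ_iff.1 (Finset.mem_range.1 hn))
  refine (norm_sum_le _ _).trans ((Finset.sum_le_sum hterm).trans_eq ?_)
  rw [Finset.sum_const, Finset.card_range, nsmul_eq_mul]
  push_cast
  ring

lemma norm_jetPairing_le_indicator {p : ℕ → ℝ → ℂ} {Λ : Set ℝ} (hp : SlowlyGrowingOn p Λ) {C : ℝ}
    {A : ℕ} (hgrowth : ∀ n x, ‖p n x‖ ≤ C * (1 + |x|) ^ A) {K : ℕ} {φ : ℝ → ℂ} {M x : ℝ}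
    (hφ : x ∈ Λ → ∀ n ≤ K, (1 + |x|) ^ (A + 2) * ‖iteratedDeriv n φ x‖ ≤ M) :
    ‖jetPairing K p φ x‖ ≤
      (K + 1) * (C * M) * Λ.indicator (fun x : ℝ => ((1 + |x|) ^ 2)⁻¹) x := by
  by_cases hx : x ∈ Λ
  · rw [Set.indicator_of_mem hx]
    exact norm_jetPairing_le (hgrowth · x) (hφ hx)
  · rw [Set.indicator_of_notMem hx, mul_zero, jetPairing_eq_zero (hp.eq_zero · hx), norm_zero]

/-- `φ` cut off at scale `L + 1` around the origin. -/
def truncate (L : ℕ) (φ : 𝓢(ℝ, ℂ)) : 𝓢(ℝ, ℂ) :=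
  localize (Units.mk0 ((L : ℝ) + 1) (by positivity)) 0 φ

lemma hasCompactSupport_truncate (L : ℕ) (φ : 𝓢(ℝ, ℂ)) : HasCompactSupport (truncate L φ) := by
  refine HasCompactSupport.intro (isCompact_closedBall (0 : ℝ) (2 * ((L : ℝ) + 1))) fun x hx => ?_
  rw [Metric.mem_closedBall, Real.dist_eq, not_le] at hx
  rw [truncate, localize_apply, Units.val_mk0, cutoff_inv_mul_eq_zero (by positivity) hx.le,
    zero_mul]

lemma iteratedDeriv_truncate_of_abs_lt {L : ℕ} {x : ℝ} (hx : |x| < L) (φ : 𝓢(ℝ, ℂ)) (l : ℕ) :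
    iteratedDeriv l (truncate L φ) x = iteratedDeriv l φ x := by
  refine Filter.EventuallyEq.iteratedDeriv_eq l ?_
  filter_upwards [continuous_abs.continuousAt.eventually (gt_mem_nhds hx)] with y hy
  rw [truncate, localize_apply, Units.val_mk0, sub_zero,
    cutoff_inv_mul_eq_one (by positivity) (by linarith), one_mul]

lemma exists_iteratedDeriv_truncate_decay (φ : 𝓢(ℝ, ℂ)) (A B : ℕ) :
    ∃ M > (0 : ℝ), ∀ L : ℕ, ∀ l ≤ A, ∀ x : ℝ,
      (1 + |x|) ^ B * ‖iteratedDeriv l (truncate L φ) x‖ ≤ M := by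
  obtain ⟨M, hM, hφ⟩ := exists_iteratedDeriv_decay φ A B
  obtain ⟨X, hX, hleibniz⟩ := exists_norm_iteratedDeriv_localize_le_sum A
  refine ⟨X * ((A + 1) * M), by positivity, fun L l hl x => ?_⟩
  have hscale : ((L : ℝ) + 1)⁻¹ ≤ 1 := inv_le_one_of_one_le₀ (by simp)
  calc (1 + |x|) ^ B * ‖iteratedDeriv l (truncate L φ) x‖
      ≤ (1 + |x|) ^ B * (X * ∑ i ∈ Finset.range (l + 1),
          ((L : ℝ) + 1)⁻¹ ^ i * ‖iteratedDeriv (l - i) φ x‖) := by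
        gcongr
        exact hleibniz φ 0 (Units.mk0 ((L : ℝ) + 1) _)
          (show (0 : ℝ) < L + 1 by positivity) l hl x
    _ = X * ∑ i ∈ Finset.range (l + 1),
          ((L : ℝ) + 1)⁻¹ ^ i * ((1 + |x|) ^ B * ‖iteratedDeriv (l - i) φ x‖) := by
        simp only [Finset.mul_sum]
        exact Finset.sum_congr rfl fun i _ => by ring
    _ ≤ X * ∑ _i ∈ Finset.range (l + 1), 1 * M := by
        gcongr with i
        · exact pow_le_one₀ (by positivity) hscale
        · exact hφ (l - i) (by omega) x
    _ ≤ X * ((A + 1) * M) := by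
        rw [one_mul, Finset.sum_const, Finset.card_range, nsmul_eq_mul]
        push_cast
        gcongr

lemma tendsto_apply_truncate (f : TemperedDistR) (φ : 𝓢(ℝ, ℂ)) :
    Tendsto (fun L => f (truncate L φ)) atTop (𝓝 (f φ)) := by
  obtain ⟨C, A, hf⟩ := exists_hasOrderBound f
  obtain ⟨M, hM, htrunc⟩ := exists_iteratedDeriv_truncate_decay φ A (A + 2)
  obtain ⟨M₀, hM₀, hφ⟩ := exists_iteratedDeriv_decay φ A (A + 2)
  have hrate : Tendsto (fun L : ℕ => C * ((M + M₀) / ((L : ℝ) + 1))) atTop (𝓝 0) := by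
    have h := (tendsto_one_div_add_atTop_nhds_zero_nat (𝕜 := ℝ)).const_mul (C * (M + M₀))
    rw [mul_zero] at h
    exact h.congr fun L => by ring
  rw [tendsto_iff_norm_sub_tendsto_zero]
  refine squeeze_zero (fun _ => norm_nonneg _) (fun L => ?_) hrate
  rw [← map_sub]
  refine hf _ _ fun l hl x => ?_
  rw [← coe_schwartzIteratedDeriv, map_sub, sub_apply, coe_schwartzIteratedDeriv,
    coe_schwartzIteratedDeriv]
  rcases lt_or_ge |x| (L : ℝ) with hx | hx
  · rw [iteratedDeriv_truncate_of_abs_lt hx, sub_self, norm_zero, mul_zero]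
    positivity
  · rw [le_div_iff₀ (by positivity)]
    calc (1 + |x|) ^ A * ‖iteratedDeriv l (truncate L φ) x - iteratedDeriv l φ x‖ * (L + 1)
        ≤ (1 + |x|) ^ A * (‖iteratedDeriv l (truncate L φ) x‖ + ‖iteratedDeriv l φ x‖) *
            (1 + |x|) ^ 2 := by
          gcongr
          · exact norm_sub_le _ _
          · nlinarith [abs_nonneg x]
      _ = (1 + |x|) ^ (A + 2) * ‖iteratedDeriv l (truncate L φ) x‖ +
            (1 + |x|) ^ (A + 2) * ‖iteratedDeriv l φ x‖ := by ring
      _ ≤ M + M₀ := add_le_add (htrunc L l hl x) (hφ l hl x)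

lemma iteratedDeriv_affineComp_one (s : ℝ) (φ : 𝓢(ℝ, ℂ)) (n : ℕ) (x : ℝ) :
    iteratedDeriv n (affineComp 1 s φ) x = iteratedDeriv n φ (x - s) := by
  simp [iteratedDeriv_affineComp]

/-- The jets of `e 0, e 1, …` at the origin form the standard basis, and all these functions
vanish off `(-r, r)`. -/
structure IsJetBasis (r : ℝ) (e : ℕ → 𝓢(ℝ, ℂ)) : Prop where
  eq_zero : ∀ n x, r ≤ |x| → e n x = 0
  jet : ∀ n l, iteratedDeriv l (e n) 0 = if l = n then 1 else 0

lemma exists_isJetBasis {r : ℝ} (hr : 0 < r) : ∃ e, IsJetBasis r e := by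
  choose e hzero hjet using exists_schwartz_with_jet hr
  exact ⟨e, hzero, hjet⟩

/-- Hermite interpolation: the combination of translates of `e` with the jets of `φ` of order `A`
at the points of `T`. -/
def hermiteInterp (e : ℕ → 𝓢(ℝ, ℂ)) (A : ℕ) (T : Finset ℝ) (φ : 𝓢(ℝ, ℂ)) : 𝓢(ℝ, ℂ) :=
  ∑ s ∈ T, ∑ n ∈ Finset.range (A + 1), iteratedDeriv n φ s • affineComp 1 s (e n)

section Interpolation

variable {η : ℝ} {e : ℕ → 𝓢(ℝ, ℂ)} (he : IsJetBasis (η / 2) e)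

include he

lemma hasCompactSupport_hermiteInterp (A : ℕ) (T : Finset ℝ) (φ : 𝓢(ℝ, ℂ)) :
    HasCompactSupport (hermiteInterp e A T φ) := by
  have hadd : ∀ ψ₁ ψ₂ : 𝓢(ℝ, ℂ), HasCompactSupport ψ₁ → HasCompactSupport ψ₂ →
      HasCompactSupport (ψ₁ + ψ₂ : 𝓢(ℝ, ℂ)) := fun _ _ h₁ h₂ => HasCompactSupport.add h₁ h₂
  have htranslate : ∀ n s, HasCompactSupport (affineComp 1 s (e n)) := fun n s => by
    refine HasCompactSupport.intro (isCompact_closedBall s (η / 2)) fun x hx => ?_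
    rw [Metric.mem_closedBall, Real.dist_eq, not_le] at hx
    rw [affineComp_apply, he.eq_zero n _ (by simpa using hx.le)]
  refine Finset.sum_induction _ (fun ψ : 𝓢(ℝ, ℂ) => HasCompactSupport ψ) hadd .zero fun s _ => ?_
  refine Finset.sum_induction _ (fun ψ : 𝓢(ℝ, ℂ) => HasCompactSupport ψ) hadd .zero fun n _ => ?_
  exact (htranslate n s).smul_left (f := fun _ => iteratedDeriv n φ s)

lemma iteratedDeriv_translate_jetBasis (l n : ℕ) {s t : ℝ} (hst : s = t ∨ η ≤ |s - t|) :
    iteratedDeriv l (affineComp 1 s (e n)) t = if t = s ∧ l = n then 1 else 0 := by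
  rcases eq_or_ne t s with rfl | hne
  · simp [iteratedDeriv_affineComp_one, he.jet]
  have hdist : η ≤ |s - t| := hst.resolve_left hne.symm
  rw [if_neg (hne ·.1)]
  refine iteratedDeriv_eq_zero_of_eventuallyEq ?_ l
  rcases le_or_gt η 0 with hη | hη
  · refine Eventually.of_forall fun y => ?_
    exact (affineComp_apply 1 s (e n) y).trans
      (he.eq_zero n _ (le_trans (by linarith) (abs_nonneg _)))
  filter_upwards [Metric.ball_mem_nhds t (half_pos hη)] with y hy
  rw [Metric.mem_ball, Real.dist_eq] at hy
  have htri := abs_sub_le s y t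
  rw [abs_sub_comm s y] at htri
  rw [affineComp_apply, Units.val_one, one_mul, he.eq_zero n _ (by linarith), Pi.zero_apply]

lemma iteratedDeriv_hermiteInterp {A l : ℕ} (hl : l ≤ A) {T : Finset ℝ} {t : ℝ}
    (hT : ∀ s ∈ T, s = t ∨ η ≤ |s - t|) (φ : 𝓢(ℝ, ℂ)) :
    iteratedDeriv l (hermiteInterp e A T φ) t = if t ∈ T then iteratedDeriv l φ t else 0 := by
  have hterm : ∀ s ∈ T, ∀ n, iteratedDeriv n φ s * iteratedDeriv l (affineComp 1 s (e n)) t =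
      if t = s then if l = n then iteratedDeriv l φ t else 0 else 0 := fun s hs n => by
    rw [iteratedDeriv_translate_jetBasis he l n (hT s hs)]
    by_cases hts : t = s <;> by_cases hln : l = n <;> simp [hts, hln]
  rw [← coe_schwartzIteratedDeriv, hermiteInterp]
  simp only [map_sum, map_smul, sum_apply, smul_apply, coe_schwartzIteratedDeriv, smul_eq_mul]
  rw [Finset.sum_congr rfl fun s hs => Finset.sum_congr rfl fun n _ => hterm s hs n]
  simp [Nat.lt_succ_of_le hl]

lemma apply_eq_apply_hermiteInterp {f : TemperedDistR} {C : ℝ} {A : ℕ} (hf : HasOrderBound f C A)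
    (hs : SeparatedBy η (tdSupportR f)) {φ : 𝓢(ℝ, ℂ)} (hφ : HasCompactSupport φ) {T : Finset ℝ}
    (hT : ∀ s, s ∈ T ↔ s ∈ tdSupportR f ∧ s ∈ tsupport φ) : f φ = f (hermiteInterp e A T φ) := by
  rw [← sub_eq_zero, ← map_sub]
  refine apply_eq_zero_of_jets_eq_zero hf hs
    (HasCompactSupport.sub hφ (hasCompactSupport_hermiteInterp he A T φ)) fun t ht l hl => ?_
  have hsep : ∀ s ∈ T, s = t ∨ η ≤ |s - t| := fun s hsT =>
    or_iff_not_imp_left.2 (hs.le_abs_sub s ((hT s).1 hsT).1 t ht)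
  rw [← coe_schwartzIteratedDeriv, map_sub, sub_apply, coe_schwartzIteratedDeriv,
    coe_schwartzIteratedDeriv, iteratedDeriv_hermiteInterp he hl hsep]
  split_ifs with htT
  · exact sub_self _
  · have hnt : t ∉ tsupport φ := fun h => htT ((hT t).2 ⟨ht, h⟩)
    rw [sub_zero, iteratedDeriv_eq_zero_of_eventuallyEq
      (notMem_tsupport_iff_eventuallyEq.1 hnt)]

end Interpolation

open Classical in
/-- The coefficient at the point `x` of the derivative of order `n ≤ A` in the expansion of `f`,
read off from the jet basis `e`. -/
def deltaCoeff (f : TemperedDistR) (e : ℕ → 𝓢(ℝ, ℂ)) (A n : ℕ) (x : ℝ) : ℂ :=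
  if n ≤ A ∧ x ∈ tdSupportR f then f (affineComp 1 x (e n)) else 0

lemma deltaCoeff_ne_zero {f : TemperedDistR} {e : ℕ → 𝓢(ℝ, ℂ)} {A n : ℕ} {x : ℝ}
    (h : deltaCoeff f e A n x ≠ 0) : n ≤ A ∧ x ∈ tdSupportR f := by
  by_contra hnot
  exact h (if_neg hnot)

lemma one_add_abs_le_mul (x y : ℝ) : 1 + |x| ≤ (1 + |x - y|) * (1 + |y|) := by
  nlinarith [abs_nonneg (x - y), abs_nonneg y, abs_sub_abs_le_abs_sub x y]

lemma exists_norm_apply_translate_le {f : TemperedDistR} {C : ℝ} {A : ℕ} (hf : HasOrderBound f C A)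
    (φ : 𝓢(ℝ, ℂ)) : ∃ M ≥ (0 : ℝ), ∀ x, ‖f (affineComp 1 x φ)‖ ≤ M * (1 + |x|) ^ A := by
  have hC := hf.nonneg
  obtain ⟨M, hM, hφ⟩ := exists_iteratedDeriv_decay φ A A
  refine ⟨C * M, by positivity, fun x => ?_⟩
  rw [mul_assoc]
  refine hf _ _ fun l hl y => ?_
  calc (1 + |y|) ^ A * ‖iteratedDeriv l (affineComp 1 x φ) y‖
      ≤ ((1 + |y - x|) * (1 + |x|)) ^ A * ‖iteratedDeriv l φ (y - x)‖ := by
        rw [iteratedDeriv_affineComp_one]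
        gcongr
        exact one_add_abs_le_mul y x
    _ = ((1 + |y - x|) ^ A * ‖iteratedDeriv l φ (y - x)‖) * (1 + |x|) ^ A := by
        rw [mul_pow]
        ring
    _ ≤ M * (1 + |x|) ^ A := by gcongr; exact hφ l hl (y - x)

lemma slowlyGrowingOn_deltaCoeff {f : TemperedDistR} {C : ℝ} {A : ℕ} (hf : HasOrderBound f C A)
    (e : ℕ → 𝓢(ℝ, ℂ)) : SlowlyGrowingOn (deltaCoeff f e A) (tdSupportR f) := by
  refine ⟨fun n x h => (deltaCoeff_ne_zero h).2, ?_⟩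
  choose M hM hbound using fun n => exists_norm_apply_translate_le hf (e n)
  have hsum : 0 ≤ ∑ n ∈ Finset.range (A + 1), M n := Finset.sum_nonneg fun n _ => hM n
  refine ⟨∑ n ∈ Finset.range (A + 1), M n, hsum, A, fun n x => ?_⟩
  by_cases h : n ≤ A ∧ x ∈ tdSupportR f
  · rw [deltaCoeff, if_pos h]
    refine (hbound n x).trans ?_
    gcongr
    exact Finset.single_le_sum (fun n _ => hM n) (Finset.mem_range.2 (Nat.lt_succ_of_le h.1))
  · rw [deltaCoeff, if_neg h, norm_zero]
    positivity

lemma hasSum_deltaCoeff_of_hasCompactSupport {f : TemperedDistR} {C : ℝ} {A : ℕ}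
    (hf : HasOrderBound f C A) {η : ℝ} (hs : SeparatedBy η (tdSupportR f)) {e : ℕ → 𝓢(ℝ, ℂ)}
    (he : IsJetBasis (η / 2) e) {φ : 𝓢(ℝ, ℂ)} (hφ : HasCompactSupport φ) :
    HasSum (jetPairing A (deltaCoeff f e A) φ) (f φ) := by
  have hfin : (tdSupportR f ∩ tsupport φ).Finite := by
    obtain ⟨r, hr⟩ := hφ.isBounded.subset_closedBall 0
    rw [Real.closedBall_eq_Icc] at hr
    exact (hs.finite_inter_Icc _ _).subset (Set.inter_subset_inter_right _ hr)
  have hT : ∀ s, s ∈ hfin.toFinset ↔ s ∈ tdSupportR f ∧ s ∈ tsupport φ := fun s =>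
    hfin.mem_toFinset
  have hvalue : f φ = ∑ x ∈ hfin.toFinset, jetPairing A (deltaCoeff f e A) φ x := by
    rw [apply_eq_apply_hermiteInterp he hf hs hφ hT, hermiteInterp]
    simp only [map_sum, map_smul, smul_eq_mul, jetPairing]
    refine Finset.sum_congr rfl fun s hsT => Finset.sum_congr rfl fun n hn => ?_
    rw [deltaCoeff, if_pos ⟨Nat.lt_succ_iff.1 (Finset.mem_range.1 hn), ((hT s).1 hsT).1⟩, mul_comm]
  rw [hvalue]
  refine hasSum_sum_of_ne_finset_zero fun x hx => Finset.sum_eq_zero fun n _ => ?_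
  rcases eq_or_ne (deltaCoeff f e A n x) 0 with hzero | hne
  · rw [hzero, zero_mul]
  · have hnt : x ∉ tsupport φ := fun h => hx ((hT x).2 ⟨(deltaCoeff_ne_zero hne).2, h⟩)
    rw [iteratedDeriv_eq_zero_of_eventuallyEq (notMem_tsupport_iff_eventuallyEq.1 hnt), mul_zero]

theorem exists_isDeltaSeries (f : TemperedDistR) {η : ℝ} (hs : SeparatedBy η (tdSupportR f)) :
    ∃ K p, IsDeltaSeries f K p (tdSupportR f) := by
  obtain ⟨C, A, hf⟩ := exists_hasOrderBound f
  obtain ⟨e, he⟩ := exists_isJetBasis (half_pos hs.pos)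
  have hp := slowlyGrowingOn_deltaCoeff hf e
  obtain ⟨C', -, B, hgrowth⟩ := hp.growth
  refine ⟨A, deltaCoeff f e A, hp,
    fun n x hn => if_neg fun h => hn.not_ge h.1, fun φ => ?_⟩
  obtain ⟨M, -, htrunc⟩ := exists_iteratedDeriv_truncate_decay φ A (B + 2)
  obtain ⟨M₀, -, hφ⟩ := exists_iteratedDeriv_decay φ A (B + 2)
  have hsummable : Summable (jetPairing A (deltaCoeff f e A) φ) := .of_norm_bounded
    (hs.summable_indicator.mul_left _) fun x =>
      norm_jetPairing_le_indicator hp hgrowth fun _ n hn => hφ n hn x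
  have hlim : Tendsto (fun L => f (truncate L φ)) atTop
      (𝓝 (∑' x, jetPairing A (deltaCoeff f e A) φ x)) := by
    simp only [fun L => (hasSum_deltaCoeff_of_hasCompactSupport hf hs he
      (hasCompactSupport_truncate L φ)).tsum_eq.symm]
    refine tendsto_tsum_of_dominated_convergence (hs.summable_indicator.mul_left _) (fun x => ?_)
      (Eventually.of_forall fun L x =>
        norm_jetPairing_le_indicator hp hgrowth fun _ n hn => htrunc L n hn x)
    refine tendsto_const_nhds.congr' ?_
    filter_upwards [eventually_gt_atTop ⌈|x|⌉₊] with L hL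
    have hx : |x| < L := (Nat.le_ceil _).trans_lt (by exact_mod_cast hL)
    simp only [jetPairing, iteratedDeriv_truncate_of_abs_lt hx]
  rw [tendsto_nhds_unique (tendsto_apply_truncate f φ) hlim]
  exact hsummable.hasSum

/-! ### Band-limited functions -/

lemma e2piR_add_left (x y w : ℝ) : e2piR (x + y) w = e2piR x w * e2piR y w := by
  simp only [e2piR]
  rw [← Complex.exp_add]
  congr 1
  push_cast
  ring

lemma e2piR_comm (x w : ℝ) : e2piR x w = e2piR w x := by
  simp only [e2piR, mul_comm x w]

lemma e2piR_add_right (x v w : ℝ) : e2piR x (v + w) = e2piR x v * e2piR x w := by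
  rw [e2piR_comm, e2piR_add_left, e2piR_comm v, e2piR_comm w]

lemma e2piR_zero_left (w : ℝ) : e2piR 0 w = 1 := by
  simp [e2piR]

lemma norm_e2piR (x w : ℝ) : ‖e2piR x w‖ = 1 :=
  Complex.norm_exp_ofReal_mul_I _

lemma e2piR_ne_zero (x w : ℝ) : e2piR x w ≠ 0 :=
  Complex.exp_ne_zero _

lemma hasDerivAt_e2piR (w x : ℝ) :
    HasDerivAt (fun x => e2piR x w) (2 * Real.pi * w * Complex.I * e2piR x w) x := by
  have hlin : HasDerivAt (fun x : ℝ => ((2 * Real.pi * (x * w) : ℝ) : ℂ) * Complex.I)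
      (2 * Real.pi * w * Complex.I) x := by
    refine ((Complex.ofRealCLM.hasDerivAt (x := x)).mul_const
      (2 * Real.pi * w * Complex.I : ℂ)).congr_deriv (by simp) |>.congr_of_eventuallyEq
      (Eventually.of_forall fun y => ?_)
    push_cast [Complex.ofRealCLM_apply]
    ring
  exact hlin.cexp.congr_deriv (mul_comm _ _)

lemma iteratedDeriv_e2piR (w : ℝ) (n : ℕ) :
    iteratedDeriv n (fun x => e2piR x w) =
      fun x => (2 * Real.pi * w * Complex.I) ^ n * e2piR x w := by
  induction n with
  | zero => simp
  | succ k ih =>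
    ext x
    rw [iteratedDeriv_succ, ih, ((hasDerivAt_e2piR w x).const_mul _).deriv]
    ring

lemma contDiff_e2piR (w : ℝ) (n : WithTop ℕ∞) : ContDiff ℝ n fun x => e2piR x w := by
  simp only [e2piR]
  exact ((Complex.ofRealCLM.contDiff.comp
    (contDiff_const.mul (contDiff_id.mul contDiff_const))).mul contDiff_const).cexp

lemma hasTemperateGrowth_e2piR (w : ℝ) : (fun x => e2piR x w).HasTemperateGrowth := by
  refine ⟨contDiff_e2piR w _, fun n => ⟨0, ‖(2 * Real.pi * w * Complex.I : ℂ)‖ ^ n, fun x => ?_⟩⟩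
  rw [norm_iteratedFDeriv_eq_norm_iteratedDeriv, iteratedDeriv_e2piR, norm_mul, norm_e2piR,
    norm_pow, pow_zero]

/-- Multiplication of a Schwartz function by the character `x ↦ e^{2πixw}`. -/
def modulate (w : ℝ) (φ : 𝓢(ℝ, ℂ)) : 𝓢(ℝ, ℂ) :=
  smulLeftCLM ℂ (fun x => e2piR x w) φ

lemma modulate_apply (w : ℝ) (φ : 𝓢(ℝ, ℂ)) (x : ℝ) : modulate w φ x = e2piR x w * φ x :=
  smulLeftCLM_apply_apply (hasTemperateGrowth_e2piR w) φ x

/-- Multiplication of a Schwartz function by the variable. -/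
def mulX (φ : 𝓢(ℝ, ℂ)) : 𝓢(ℝ, ℂ) :=
  smulLeftCLM ℂ (fun x : ℝ => (x : ℂ)) φ

lemma mulX_apply (φ : 𝓢(ℝ, ℂ)) (x : ℝ) : mulX φ x = x * φ x :=
  smulLeftCLM_apply_apply Function.Complex.hasTemperateGrowth_ofReal φ x

lemma fourierInv_eq_integral_e2piR (φ : 𝓢(ℝ, ℂ)) (t : ℝ) : 𝓕⁻ φ t = ∫ x, e2piR x t * φ x := by
  rw [fourierInv_coe, Real.fourierInv_eq']
  refine integral_congr_ae (Eventually.of_forall fun x => ?_)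
  simp only [e2piR, smul_eq_mul, RCLike.inner_apply, conj_trivial]
  rw [mul_comm t x]

lemma deriv_fourierInv (φ : 𝓢(ℝ, ℂ)) (t : ℝ) :
    deriv (𝓕⁻ φ : 𝓢(ℝ, ℂ)) t = (2 * Real.pi * Complex.I) * 𝓕⁻ (mulX φ) t := by
  have hmulX : smulLeftCLM ℂ (fun x : ℝ => inner ℝ x (1 : ℝ)) φ = mulX φ := by
    ext x
    rw [mulX_apply, smulLeftCLM_apply_apply (by fun_prop)]
    simp
  have h := DFunLike.congr_fun (lineDerivOp_fourierInv_eq φ (1 : ℝ)) t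
  rw [FourierTransform.fourierInv_smul, smul_apply, smul_eq_mul, hmulX] at h
  rw [← h, lineDerivOp_apply_eq_fderiv, fderiv_eq_smul_deriv, one_smul]

lemma fourierInv_modulate (w : ℝ) (φ : 𝓢(ℝ, ℂ)) (t : ℝ) :
    𝓕⁻ (modulate w φ) t = 𝓕⁻ φ (t + w) := by
  simp only [fourierInv_eq_integral_e2piR, modulate_apply, e2piR_add_right, mul_assoc]

lemma fourierInv_affineComp (a : ℝˣ) (s : ℝ) (φ : 𝓢(ℝ, ℂ)) (t : ℝ) :
    𝓕⁻ (affineComp a s φ) t = (|(a : ℝ)⁻¹| : ℝ) • (e2piR s t * 𝓕⁻ φ (t / a)) := by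
  have hscale : ∀ x : ℝ, e2piR x t = e2piR s t * e2piR (a * (x - s)) (t / a) := fun x => by
    have ha : (a : ℝ) ≠ 0 := a.ne_zero
    simp only [e2piR]
    rw [← Complex.exp_add, ← add_mul, ← Complex.ofReal_add]
    congr 3
    field_simp
    ring
  calc 𝓕⁻ (affineComp a s φ) t
      = ∫ x, e2piR s t * (e2piR (a * (x - s)) (t / a) * φ (a * (x - s))) := by
        simp only [fourierInv_eq_integral_e2piR, affineComp_apply, ← mul_assoc, ← hscale]
    _ = ∫ x, e2piR s t * (e2piR (a * x) (t / a) * φ (a * x)) :=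
        integral_sub_right_eq_self
          (fun x => e2piR s t * (e2piR (a * x) (t / a) * φ (a * x))) s
    _ = _ := by
        rw [Measure.integral_comp_mul_left (fun u => e2piR s t * (e2piR u (t / a) * φ u)) (a : ℝ),
          integral_const_mul, fourierInv_eq_integral_e2piR]

/-- The inverse Fourier transform of `φ` vanishes off the band `[c - r, c + r]`. Since
`f φ = f̂ (𝓕⁻ φ)`, such a `φ` only sees the part of the spectrum of `f` in that band. -/
def BandLimited (c r : ℝ) (φ : 𝓢(ℝ, ℂ)) : Prop :=
  ∀ t, r < |t - c| → 𝓕⁻ φ t = 0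

namespace BandLimited

variable {c c' r r' : ℝ} {φ ψ : 𝓢(ℝ, ℂ)}

lemma mono (h : BandLimited c r φ) (hr : r ≤ r') : BandLimited c r' φ :=
  fun t ht => h t (hr.trans_lt ht)

lemma add (hφ : BandLimited c r φ) (hψ : BandLimited c r ψ) : BandLimited c r (φ + ψ) :=
  fun t ht => by
    rw [FourierTransform.fourierInv_add, add_apply, hφ t ht, hψ t ht, add_zero]

lemma smul (h : BandLimited c r φ) (a : ℂ) : BandLimited c r (a • φ) :=
  fun t ht => by rw [FourierTransform.fourierInv_smul, smul_apply, h t ht, smul_zero]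

lemma modulate (h : BandLimited c r φ) (w : ℝ) : BandLimited (c - w) r (modulate w φ) :=
  fun t ht => by
    rw [fourierInv_modulate]
    exact h _ (by rwa [show t + w - c = t - (c - w) by ring])

lemma mulX (h : BandLimited c r φ) : BandLimited c r (mulX φ) := fun t ht => by
  have hzero : (𝓕⁻ φ : 𝓢(ℝ, ℂ)) =ᶠ[𝓝 t] fun _ => (0 : ℂ) :=
    ((by fun_prop : Continuous fun y : ℝ => |y - c|).continuousAt.eventually
      (lt_mem_nhds ht)).mono h
  have hderiv := deriv_fourierInv φ t
  rw [hzero.deriv_eq, deriv_const] at hderiv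
  exact (mul_eq_zero.1 hderiv.symm).resolve_left (by simp [Real.pi_ne_zero])

lemma exists_eval_mul (h : BandLimited c r φ) (P : Polynomial ℂ) :
    ∃ ψ, BandLimited c r ψ ∧ ∀ x : ℝ, ψ x = P.eval (x : ℂ) * φ x := by
  induction P using Polynomial.induction_on with
  | C a => exact ⟨a • φ, h.smul a, by simp⟩
  | add P Q hP hQ =>
    obtain ⟨ψ, hψ, hψP⟩ := hP
    obtain ⟨χ, hχ, hχQ⟩ := hQ
    exact ⟨ψ + χ, hψ.add hχ, fun x => by rw [add_apply, hψP, hχQ, Polynomial.eval_add, add_mul]⟩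
  | monomial n a hn =>
    obtain ⟨ψ, hψ, hψP⟩ := hn
    refine ⟨_, hψ.mulX, fun x => ?_⟩
    rw [mulX_apply, hψP, pow_succ, ← mul_assoc (Polynomial.C a), Polynomial.eval_mul_X]
    ring

lemma affineComp (h : BandLimited 0 r φ) {a : ℝˣ} (ha : 0 < (a : ℝ)) (s : ℝ) :
    BandLimited 0 (a * r) (affineComp a s φ) := fun t ht => by
  rw [sub_zero] at ht
  rw [fourierInv_affineComp, h, mul_zero, smul_zero]
  rwa [sub_zero, abs_div, abs_of_pos ha, lt_div_iff₀ ha, mul_comm]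

lemma schwartzMul (hφ : BandLimited c r φ) (hψ : BandLimited c' r' ψ) :
    BandLimited (c + c') (r + r') (schwartzMul φ ψ) := fun t ht => by
  have hpairing : _root_.schwartzMul φ ψ =
      pairing (ContinuousLinearMap.mul ℂ ℂ) (𝓕 (𝓕⁻ φ)) (𝓕 (𝓕⁻ ψ)) := by
    ext x
    simp [schwartzMul_apply]
  rw [hpairing, ← fourier_convolution (ContinuousLinearMap.mul ℂ ℂ) (𝓕⁻ φ) (𝓕⁻ ψ),
    FourierTransform.fourierInv_fourier_eq, convolution_apply, MeasureTheory.convolution]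
  refine integral_eq_zero_of_ae (Eventually.of_forall fun y => ?_)
  simp only [ContinuousLinearMap.mul_apply', Pi.zero_apply]
  rcases lt_or_ge r |y - c| with hy | hy
  · rw [hφ y hy, zero_mul]
  · rw [hψ (t - y), mul_zero]
    have htri := abs_add_le (y - c) (t - y - c')
    rw [show y - c + (t - y - c') = t - (c + c') by ring] at htri
    linarith

lemma exists_pow (h : BandLimited 0 r φ) {J : ℕ} (hJ : 0 < J) :
    ∃ ψ, BandLimited 0 (J * r) ψ ∧ ∀ x, ψ x = φ x ^ J := by
  induction J, hJ using Nat.le_induction with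
  | base => exact ⟨φ, by simpa using h, by simp⟩
  | succ k _ ih =>
    obtain ⟨ψ, hψ, hψφ⟩ := ih
    refine ⟨_root_.schwartzMul ψ φ, ?_, fun x => by rw [schwartzMul_apply, hψφ, pow_succ]⟩
    convert hψ.schwartzMul h using 1
    · simp
    · push_cast
      ring

end BandLimited

lemma integral_cutoff_ne_zero : ∫ x, cutoff x ≠ 0 := by
  let b : ContDiffBump (0 : ℝ) := ⟨1, 2, by norm_num, by norm_num⟩
  have hb : ∫ x, cutoff x = ((∫ x, b x : ℝ) : ℂ) := integral_ofReal
  rw [hb]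
  exact_mod_cast b.integral_pos.ne'

lemma exists_bandLimited_apply_zero_eq_one : ∃ g : 𝓢(ℝ, ℂ), BandLimited 0 1 g ∧ g 0 = 1 := by
  have hfourier : BandLimited 0 2 (𝓕 cutoff) := fun t ht => by
    rw [FourierTransform.fourierInv_fourier_eq]
    exact cutoff_eq_zero (by simpa using ht.le)
  have hzero : 𝓕 cutoff 0 ≠ 0 := by
    rw [fourier_coe, Real.fourier_eq']
    simpa using integral_cutoff_ne_zero
  let a : ℝˣ := Units.mk0 2⁻¹ (by norm_num)
  refine ⟨(𝓕 cutoff 0)⁻¹ • affineComp a 0 (𝓕 cutoff), ?_, ?_⟩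
  · simpa [a] using (hfourier.affineComp (a := a) (by norm_num [a]) 0).smul _
  · simp [affineComp_apply, hzero]

/-! ### Geometric bounds on jets -/

/-- The derivatives of `u` at `x` up to order `K` grow at most geometrically, `|u⁽ʲ⁾(x)| ≤ A aʲ`.
By Leibniz' rule such bounds are stable under products: the constants multiply, the rates add. -/
structure HasJetBound (K : ℕ) (x : ℝ) (u : ℝ → ℂ) (A a : ℝ) : Prop where
  const_nonneg : 0 ≤ A
  rate_nonneg : 0 ≤ a
  contDiff : ContDiff ℝ K u
  norm_le : ∀ j ≤ K, ‖iteratedDeriv j u x‖ ≤ A * a ^ j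

namespace HasJetBound

variable {K : ℕ} {x A a B b : ℝ} {u v : ℝ → ℂ}

lemma one (K : ℕ) (x : ℝ) : HasJetBound K x (fun _ => 1) 1 0 where
  const_nonneg := zero_le_one
  rate_nonneg := le_rfl
  contDiff := contDiff_const
  norm_le j _ := by
    cases j with
    | zero => simp
    | succ j => simp [iteratedDeriv_const]

lemma mul (hu : HasJetBound K x u A a) (hv : HasJetBound K x v B b) :
    HasJetBound K x (fun y => u y * v y) (A * B) (a + b) where
  const_nonneg := mul_nonneg hu.const_nonneg hv.const_nonneg
  rate_nonneg := add_nonneg hu.rate_nonneg hv.rate_nonneg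
  contDiff := hu.contDiff.mul hv.contDiff
  norm_le j hj := by
    have hjK : (j : WithTop ℕ∞) ≤ K := by exact_mod_cast hj
    rw [iteratedDeriv_fun_mul (hu.contDiff.of_le hjK).contDiffAt
      (hv.contDiff.of_le hjK).contDiffAt, add_pow, Finset.mul_sum]
    refine (norm_sum_le _ _).trans (Finset.sum_le_sum fun i hi => ?_)
    have hij : i ≤ j := Nat.lt_succ_iff.1 (Finset.mem_range.1 hi)
    have hui := hu.norm_le i (hij.trans hj)
    have hvi := hv.norm_le (j - i) ((Nat.sub_le j i).trans hj)
    rw [norm_mul, norm_mul, Complex.norm_natCast]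
    calc _ ≤ (j.choose i : ℝ) * (A * a ^ i) * (B * b ^ (j - i)) := by
          gcongr
          exact mul_nonneg (Nat.cast_nonneg _)
            (mul_nonneg hu.const_nonneg (pow_nonneg hu.rate_nonneg i))
      _ = _ := by ring

lemma prod {ι : Type*} {S : Finset ι} {w : ι → ℝ → ℂ} (hw : ∀ i ∈ S, HasJetBound K x (w i) A a) :
    HasJetBound K x (fun y => ∏ i ∈ S, w i y) (A ^ S.card) (S.card * a) := by
  classical
  induction S using Finset.induction_on with
  | empty => simpa using one K x
  | insert i S hi ih =>
    have hmul := (hw i (by simp)).mul (ih fun j hj => hw j (by simp [hj]))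
    simp only [Finset.prod_insert hi, Finset.card_insert_of_notMem hi]
    convert hmul using 1
    · rw [pow_succ']
    · push_cast
      ring

lemma pow (hu : HasJetBound K x u A a) (k : ℕ) :
    HasJetBound K x (fun y => u y ^ k) (A ^ k) (k * a) := by
  simpa using prod (S := Finset.range k) (w := fun _ => u) fun _ _ => hu

end HasJetBound

lemma hasJetBound_ofReal_sub (K : ℕ) {x s : ℝ} (hx : 1 ≤ |x|) (hs : |s| ≤ |x|) :
    HasJetBound K x (fun y : ℝ => (y : ℂ) - s) (2 * |x|) 1 where
  const_nonneg := by positivity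
  rate_nonneg := zero_le_one
  contDiff := by simpa using contDiff_ofReal_sub_pow s 1 K
  norm_le j _ := by
    have hderiv := congrFun (iteratedDeriv_ofReal_sub_pow s 1 j) x
    simp only [pow_one] at hderiv
    rw [hderiv, one_pow, mul_one]
    match j with
    | 0 =>
      simp only [Nat.descFactorial_zero, Nat.cast_one, one_mul, Nat.sub_zero, pow_one]
      rw [← Complex.ofReal_sub, Complex.norm_real, Real.norm_eq_abs]
      linarith [abs_sub x s]
    | 1 =>
      simp only [Nat.descFactorial_self, Nat.factorial_one, Nat.cast_one, Nat.sub_self, pow_zero,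
        mul_one, norm_one]
      linarith
    | j + 2 => simp

lemma hasJetBound_e2piR (K : ℕ) (x w : ℝ) :
    HasJetBound K x (fun y => e2piR y w) 1 (2 * Real.pi * |w|) where
  const_nonneg := zero_le_one
  rate_nonneg := by positivity
  contDiff := contDiff_e2piR w _
  norm_le j _ := by
    rw [iteratedDeriv_e2piR, norm_mul, norm_e2piR, norm_pow]
    simp [abs_of_pos Real.pi_pos]

lemma hasJetBound_affineComp {K : ℕ} {g : 𝓢(ℝ, ℂ)} {C : ℝ} (hC : 0 ≤ C)
    (hg : ∀ j ≤ K, ∀ y : ℝ, |y| * ‖iteratedDeriv j g y‖ ≤ C) {a : ℝˣ} (ha : 0 < (a : ℝ)) {s x : ℝ}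
    (hx : x ≠ s) : HasJetBound K x (affineComp a s g) (C / (a * |x - s|)) a := by
  have := abs_pos.2 (sub_ne_zero.2 hx)
  refine ⟨by positivity, ha.le, (affineComp a s g).smooth _, fun j hj => ?_⟩
  rw [iteratedDeriv_affineComp, norm_mul, norm_pow, Complex.norm_real, Real.norm_of_nonneg ha.le,
    mul_comm]
  gcongr
  rw [le_div_iff₀ (by positivity), mul_comm]
  simpa [abs_mul, abs_of_pos ha] using hg j hj (a * (x - s))

lemma iteratedDeriv_ofReal_sub_pow_mul {h : ℝ → ℂ} (s : ℝ) {k n : ℕ} (hh : ContDiff ℝ n h)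
    (hn : n ≤ k) :
    iteratedDeriv n (fun x : ℝ => ((x : ℂ) - s) ^ k * h x) s =
      if n = k then (k.factorial : ℂ) * h s else 0 := by
  rw [iteratedDeriv_fun_mul (contDiff_ofReal_sub_pow s k n).contDiffAt hh.contDiffAt]
  simp only [iteratedDeriv_ofReal_sub_pow, sub_self]
  have hvanish : ∀ i < k, (0 : ℂ) ^ (k - i) = 0 := fun i hi => zero_pow (Nat.sub_ne_zero_of_lt hi)
  split_ifs with hk
  · subst hk
    rw [Finset.sum_eq_single_of_mem n (by simp) fun i hi hne => ?_]
    · simp [Nat.descFactorial_self]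
    · rw [hvanish i (by grind), mul_zero, mul_zero, zero_mul]
  · exact Finset.sum_eq_zero fun i hi => by
      rw [hvanish i (by grind), mul_zero, mul_zero, zero_mul]

/-! ### Density of the support of a series annihilating a band -/

/-- A normalized function with spectrum in `[-1, 1]` whose derivatives up to order `K` decay like
`C / |y|`. -/
structure IsBandKernel (K : ℕ) (C : ℝ) (g : 𝓢(ℝ, ℂ)) : Prop where
  const_pos : 0 < C
  bandLimited : BandLimited 0 1 g
  apply_zero : g 0 = 1
  decay : ∀ j ≤ K, ∀ y : ℝ, |y| * ‖iteratedDeriv j g y‖ ≤ C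

lemma exists_isBandKernel (K : ℕ) : ∃ C g, IsBandKernel K C g := by
  obtain ⟨g, hg, hg0⟩ := exists_bandLimited_apply_zero_eq_one
  obtain ⟨C, hC, hdecay⟩ := exists_iteratedDeriv_decay g K 1
  refine ⟨C, g, hC, hg, hg0, fun j hj y => le_trans ?_ (hdecay j hj y)⟩
  rw [pow_one]
  gcongr
  linarith

/-- The test function `(y - s₀)ⁿ ∏_{s ∈ S} (y - s)^{K+1} e^{-2πicy} g(ρ(y - s₀))^J`. For a band
kernel `g` it is band-limited around `c`, its `K`-jets vanish on `S`, its jet at `s₀` starts in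
degree `n`, and the power of `g` makes it small far away from `S`. -/
def testFun (g : 𝓢(ℝ, ℂ)) (K : ℕ) (c : ℝ) (ρ : ℝˣ) (S : Finset ℝ) (s₀ : ℝ) (n J : ℕ) (y : ℝ) : ℂ :=
  ((y : ℂ) - s₀) ^ n *
    ((∏ s ∈ S, ((y : ℂ) - s) ^ (K + 1)) * (e2piR y (-c) * affineComp ρ s₀ g y ^ J))

section TestFun

variable {g : 𝓢(ℝ, ℂ)} {K : ℕ} {C c : ℝ} {ρ : ℝˣ} {S : Finset ℝ} {s₀ : ℝ} {n J : ℕ}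

lemma contDiff_testFun_factor (T : Finset ℝ) (m : ℕ) : ContDiff ℝ m fun y : ℝ =>
    (∏ s ∈ T, ((y : ℂ) - s) ^ (K + 1)) * (e2piR y (-c) * affineComp ρ s₀ g y ^ J) :=
  (contDiff_prod fun s _ => contDiff_ofReal_sub_pow s (K + 1) m).mul
    ((contDiff_e2piR _ _).mul (((affineComp ρ s₀ g).smooth m).pow J))

lemma exists_bandLimited_eq_testFun (hg : BandLimited 0 1 g) (hρ : 0 < (ρ : ℝ)) (hJ : 0 < J) :
    ∃ φ, BandLimited c (J * ρ) φ ∧ ⇑φ = testFun g K c ρ S s₀ n J := by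
  obtain ⟨h, hh, hpow⟩ := (hg.affineComp hρ s₀).exists_pow hJ
  obtain ⟨φ, hφ, heval⟩ := (hh.modulate (-c)).exists_eval_mul
    ((Polynomial.X - Polynomial.C (s₀ : ℂ)) ^ n *
      ∏ s ∈ S, (Polynomial.X - Polynomial.C (s : ℂ)) ^ (K + 1))
  refine ⟨φ, by simpa using hφ, funext fun y => ?_⟩
  simp only [heval, modulate_apply, hpow, testFun, Polynomial.eval_mul, Polynomial.eval_pow,
    Polynomial.eval_sub, Polynomial.eval_X, Polynomial.eval_C, Polynomial.eval_prod, mul_assoc]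

lemma iteratedDeriv_testFun_of_mem {s : ℝ} (hs : s ∈ S) {m : ℕ} (hm : m ≤ K) :
    iteratedDeriv m (testFun g K c ρ S s₀ n J) s = 0 := by
  classical
  have hfactor : testFun g K c ρ S s₀ n J = fun y : ℝ => ((y : ℂ) - s) ^ (K + 1) *
      (((y : ℂ) - s₀) ^ n * ((∏ t ∈ S.erase s, ((y : ℂ) - t) ^ (K + 1)) *
        (e2piR y (-c) * affineComp ρ s₀ g y ^ J))) := by
    ext y
    rw [testFun, ← Finset.mul_prod_erase S _ hs]
    ring
  rw [hfactor, iteratedDeriv_ofReal_sub_pow_mul s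
    ((contDiff_ofReal_sub_pow s₀ n m).mul (contDiff_testFun_factor _ m)) (by omega),
    if_neg (by omega)]

lemma iteratedDeriv_testFun_center (hg : g 0 = 1) {m : ℕ} (hm : m ≤ n) :
    iteratedDeriv m (testFun g K c ρ S s₀ n J) s₀ = if m = n then
      (n.factorial : ℂ) * ((∏ s ∈ S, ((s₀ : ℂ) - s) ^ (K + 1)) * e2piR s₀ (-c)) else 0 := by
  have h := iteratedDeriv_ofReal_sub_pow_mul s₀
    (contDiff_testFun_factor (g := g) (K := K) (c := c) (ρ := ρ) (s₀ := s₀) (J := J) S m) hm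
  rw [affineComp_apply, sub_self, mul_zero, hg, one_pow, mul_one] at h
  exact h

lemma hasJetBound_testFun (hg : IsBandKernel K C g) (hρ : 0 < (ρ : ℝ)) {x : ℝ} (hx : 1 ≤ |x|)
    (hne : x ≠ s₀) (hs₀ : |s₀| ≤ |x|) (hS : ∀ s ∈ S, |s| ≤ |x|) :
    HasJetBound K x (testFun g K c ρ S s₀ n J)
      ((2 * |x|) ^ (n + (K + 1) * S.card) * (C / (ρ * |x - s₀|)) ^ J)
      ((n + (K + 1) * S.card : ℕ) + J * ρ + 2 * Real.pi * |c|) := by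
  have h := ((hasJetBound_ofReal_sub K hx hs₀).pow n).mul
    ((HasJetBound.prod fun s hs => (hasJetBound_ofReal_sub K hx (hS s hs)).pow (K + 1)).mul
      ((hasJetBound_e2piR K x (-c)).mul
        ((hasJetBound_affineComp hg.const_pos.le hg.decay hρ hne).pow J)))
  convert h using 1
  · rfl
  · ring
  · rw [abs_neg]
    push_cast
    ring

end TestFun

/-- Past `T`, an exponentially small factor beats polynomial growth of degree `N` with `B` powers to
spare. -/
lemma pow_mul_div_exp_pow_le {T y : ℝ} (hT : 1 ≤ T) (hy : T < y) {N B J : ℕ} (hJ : N + B ≤ J) :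
    (2 * y) ^ N * (T / (Real.exp 1 * y)) ^ J ≤
      (2 * T) ^ N * Real.exp (-J) * (2 * T / (1 + y)) ^ B := by
  have hT0 : 0 < T := by linarith
  have hy0 : 0 < y := by linarith
  have hexp : T / (Real.exp 1 * y) = Real.exp (-1) * (T / y) := by
    rw [Real.exp_neg]
    field_simp
  have hratio : y / T * (T / y) = 1 := by rw [div_mul_div_cancel₀ hT0.ne', div_self hy0.ne']
  have hexpJ : Real.exp (-1) ^ J = Real.exp (-J) := by
    rw [← Real.exp_nat_mul, mul_neg_one]
  calc (2 * y) ^ N * (T / (Real.exp 1 * y)) ^ J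
      = (2 * T) ^ N * Real.exp (-J) * ((y / T) ^ N * (T / y) ^ J) := by
        rw [hexp, show 2 * y = 2 * T * (y / T) by field_simp, mul_pow (2 * T), mul_pow (Real.exp _),
          hexpJ]
        ring
    _ ≤ (2 * T) ^ N * Real.exp (-J) * ((y / T) ^ N * (T / y) ^ (N + B)) := by
        gcongr ?_ * (_ * ?_)
        exact pow_le_pow_of_le_one (by positivity) ((div_le_one hy0).2 hy.le) hJ
    _ = (2 * T) ^ N * Real.exp (-J) * (T / y) ^ B := by
        rw [pow_add, ← mul_assoc ((y / T) ^ N), ← mul_pow, hratio, one_pow, one_mul]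
    _ ≤ (2 * T) ^ N * Real.exp (-J) * (2 * T / (1 + y)) ^ B := by
        gcongr ?_ * ?_ ^ _
        rw [div_le_div_iff₀ hy0 (by positivity)]
        nlinarith

lemma norm_iteratedDeriv_testFun_le {g : 𝓢(ℝ, ℂ)} {K : ℕ} {C c : ℝ} {ρ : ℝˣ} {S : Finset ℝ}
    {s₀ : ℝ} {n J B : ℕ} (hg : IsBandKernel K C g) (hρ : 0 < (ρ : ℝ)) {T x : ℝ} (hT : 1 ≤ T)
    (hρT : 2 * Real.exp 1 * C ≤ ρ * T) (hs₀ : 2 * |s₀| ≤ T) (hS : ∀ s ∈ S, |s| ≤ T)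
    (hJ : n + (K + 1) * S.card + B ≤ J) (hx : T < |x|) {j : ℕ} (hj : j ≤ K) :
    (1 + |x|) ^ B * ‖iteratedDeriv j (testFun g K c ρ S s₀ n J) x‖ ≤
      (2 * T) ^ (n + (K + 1) * S.card) * Real.exp (-J) * (2 * T) ^ B *
        (1 + (n + (K + 1) * S.card : ℕ) + J * ρ + 2 * Real.pi * |c|) ^ K := by
  have hC := hg.const_pos
  have hs₀x : |s₀| ≤ |x| := by linarith [abs_nonneg s₀]
  have hdist : |x| / 2 ≤ |x - s₀| := by linarith [abs_sub_abs_le_abs_sub x s₀]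
  have hx0 : 0 < |x| := by linarith
  have hdist0 : 0 < |x - s₀| := by linarith
  have hdecay : C / (ρ * |x - s₀|) ≤ T / (Real.exp 1 * |x|) := by
    rw [div_le_div_iff₀ (by positivity) (by positivity)]
    calc C * (Real.exp 1 * |x|) = 2 * Real.exp 1 * C * (|x| / 2) := by ring
      _ ≤ ρ * T * |x - s₀| := by gcongr
      _ = _ := by ring
  set N := n + (K + 1) * S.card
  have hjet := (hasJetBound_testFun (c := c) (n := n) (J := J) hg hρ (hT.trans hx.le)
    (fun h => hdist0.ne' (by rw [h, sub_self, abs_zero])) hs₀x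
    fun s hs => (hS s hs).trans hx.le).norm_le j hj
  have hrate : ((N : ℝ) + J * ρ + 2 * Real.pi * |c|) ^ j ≤
      (1 + N + J * ρ + 2 * Real.pi * |c|) ^ K := by
    have hNJ : 0 ≤ (N : ℝ) + J * ρ + 2 * Real.pi * |c| := by positivity
    calc ((N : ℝ) + J * ρ + 2 * Real.pi * |c|) ^ j
        ≤ (1 + N + J * ρ + 2 * Real.pi * |c|) ^ j := by gcongr; linarith
      _ ≤ _ := pow_le_pow_right₀ (by linarith) hj
  calc _ ≤ (1 + |x|) ^ B * (((2 * |x|) ^ N * (T / (Real.exp 1 * |x|)) ^ J) *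
        (1 + N + J * ρ + 2 * Real.pi * |c|) ^ K) := by
        gcongr
        refine hjet.trans ?_
        gcongr
    _ ≤ (1 + |x|) ^ B * ((2 * T) ^ N * Real.exp (-J) * (2 * T / (1 + |x|)) ^ B *
        (1 + N + J * ρ + 2 * Real.pi * |c|) ^ K) := by
        gcongr ?_ * (?_ * ?_)
        exact pow_mul_div_exp_pow_le hT hx hJ
    _ = _ := by
        rw [div_pow]
        field_simp

/-- The jet series of `a` annihilates every function with spectrum in `[c - r, c + r]`. -/
structure AnnihilatesBand (K : ℕ) (a : ℕ → ℝ → ℂ) (Λ : Set ℝ) (c r : ℝ) : Prop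
    extends SlowlyGrowingOn a Λ where
  hasSum : ∀ φ, BandLimited c r φ → HasSum (jetPairing K a φ) 0

lemma norm_le_of_hasSum_zero {ι E : Type*} [SeminormedAddCommGroup E] [T2Space E] {F : ι → E}
    (hF : HasSum F 0) (i₀ : ι) {b : ι → ℝ} {B : ℝ} (hb : HasSum b B) (hb0 : ∀ i, 0 ≤ b i)
    (h : ∀ i, i ≠ i₀ → ‖F i‖ ≤ b i) : ‖F i₀‖ ≤ B := by
  classical
  have hupdate := hF.update i₀ 0
  have hbound := tsum_of_norm_bounded hb (f := Function.update F i₀ 0) fun i => by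
    rcases eq_or_ne i i₀ with rfl | hi
    · simpa using hb0 i
    · simpa [hi] using h i hi
  rw [hupdate.tsum_eq] at hbound
  simpa using hbound

lemma exists_top_degree {K : ℕ} {a : ℕ → ℂ} (h : ∃ n ≤ K, a n ≠ 0) :
    ∃ n ≤ K, a n ≠ 0 ∧ ∀ m, n < m → m ≤ K → a m = 0 := by
  classical
  obtain ⟨n, hn, hne⟩ := h
  exact ⟨Nat.findGreatest (a · ≠ 0) K, Nat.findGreatest_le K,
    Nat.findGreatest_spec (P := (a · ≠ 0)) hn hne,
    fun m hm hmK => not_not.1 (Nat.findGreatest_is_greatest hm hmK)⟩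

lemma norm_jetPairing_testFun_center_ge {g : 𝓢(ℝ, ℂ)} {K : ℕ} {c : ℝ} {ρ : ℝˣ} {S : Finset ℝ}
    {η s₀ : ℝ} {n J : ℕ} {a : ℕ → ℝ → ℂ} (hg : g 0 = 1) (hn : n ≤ K)
    (htop : ∀ m, n < m → m ≤ K → a m s₀ = 0) (hs₀ : s₀ ∉ S)
    (hS : SeparatedBy η (insert s₀ (S : Set ℝ))) :
    ‖a n s₀‖ * ((η / 2) ^ S.card * S.card.factorial) ^ (K + 1) ≤
      ‖jetPairing K a (testFun g K c ρ S s₀ n J) s₀‖ := by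
  have hη := hS.pos
  have hpairing : jetPairing K a (testFun g K c ρ S s₀ n J) s₀ =
      a n s₀ * ((n.factorial : ℂ) * ((∏ s ∈ S, ((s₀ : ℂ) - s) ^ (K + 1)) * e2piR s₀ (-c))) := by
    rw [jetPairing, Finset.sum_eq_single_of_mem n (by simp; omega) fun m hm hmn => ?_,
      iteratedDeriv_testFun_center hg le_rfl, if_pos rfl]
    rcases lt_or_gt_of_ne hmn with hlt | hgt
    · rw [iteratedDeriv_testFun_center hg hlt.le, if_neg hlt.ne, mul_zero]
    · rw [htop m hgt (Nat.lt_succ_iff.1 (Finset.mem_range.1 hm)), zero_mul]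
  have hprod : ‖∏ s ∈ S, ((s₀ : ℂ) - s) ^ (K + 1)‖ = (∏ s ∈ S, |s₀ - s|) ^ (K + 1) := by
    rw [norm_prod, ← Finset.prod_pow]
    refine Finset.prod_congr rfl fun s _ => ?_
    rw [norm_pow, ← Complex.ofReal_sub, Complex.norm_real, Real.norm_eq_abs]
  rw [hpairing, norm_mul, norm_mul, norm_mul, norm_e2piR, hprod, mul_one, Complex.norm_natCast]
  gcongr
  calc ((η / 2) ^ S.card * S.card.factorial) ^ (K + 1)
      ≤ (∏ s ∈ S, |s₀ - s|) ^ (K + 1) := by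
        gcongr
        exact SeparatedBy.pow_mul_factorial_le_prod_abs_sub hs₀ hS
    _ ≤ n.factorial * (∏ s ∈ S, |s₀ - s|) ^ (K + 1) :=
        le_mul_of_one_le_left (by positivity) (by exact_mod_cast n.factorial_pos)

section Density

variable {K : ℕ} {g : 𝓢(ℝ, ℂ)} {C : ℝ} {a : ℕ → ℝ → ℂ} {Λ : Set ℝ} {c r η s₀ : ℝ} {n : ℕ}

/-- Testing against `testFun`, whose jets vanish on the other points of `Λ` in `[-T, T]`, isolates
the top coefficient at `s₀`. -/
lemma norm_top_coeff_mul_le (hg : IsBandKernel K C g) (hr : 0 < r) (hΛ : SeparatedBy η Λ)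
    (ha : AnnihilatesBand K a Λ c r) {Ca : ℝ} {A : ℕ}
    (hgrowth : ∀ n x, ‖a n x‖ ≤ Ca * (1 + |x|) ^ A) (hs₀ : s₀ ∈ Λ) (hn : n ≤ K)
    (htop : ∀ m, n < m → m ≤ K → a m s₀ = 0) {T : ℝ} (hT : 1 ≤ T) (hs₀T : 2 * |s₀| ≤ T)
    {S : Finset ℝ} (hS : ∀ s, s ∈ S ↔ s ≠ s₀ ∧ s ∈ Λ ∧ |s| ≤ T) {J : ℕ}
    (hN : n + (K + 1) * S.card + (A + 2) ≤ J) (hJT : J ≤ r / (2 * Real.exp 1 * C) * T) :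
    ‖a n s₀‖ * ((η / 2) ^ S.card * S.card.factorial) ^ (K + 1) ≤
      (K + 1) * (Ca * ((2 * T) ^ (n + (K + 1) * S.card) * Real.exp (-J) * (2 * T) ^ (A + 2) *
        (1 + (n + (K + 1) * S.card : ℕ) + r + 2 * Real.pi * |c|) ^ K)) *
        ∑' x, Λ.indicator (fun x : ℝ => ((1 + |x|) ^ 2)⁻¹) x := by
  have hC := hg.const_pos
  have hsep : SeparatedBy η (insert s₀ (S : Set ℝ)) :=
    hΛ.mono (insert_subset hs₀ fun s hs => ((hS s).1 hs).2.1)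
  have hJ : 0 < J := by omega
  have hJ0 : (0 : ℝ) < J := by exact_mod_cast hJ
  let ρ : ℝˣ := Units.mk0 (r / J) (by positivity)
  have hρ : (J : ℝ) * ρ = r := mul_div_cancel₀ r hJ0.ne'
  have hρ0 : 0 < (ρ : ℝ) := div_pos hr hJ0
  have hρT : 2 * Real.exp 1 * C ≤ ρ * T := by
    rw [div_mul_eq_mul_div, le_div_iff₀ (by positivity)] at hJT
    rw [show (ρ : ℝ) * T = r * T / J from div_mul_eq_mul_div _ _ _, le_div_iff₀ hJ0]
    linarith
  obtain ⟨φ, hφ, hφtest⟩ := exists_bandLimited_eq_testFun (K := K) (c := c) (S := S) (s₀ := s₀)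
    (n := n) hg.bandLimited hρ0 hJ
  set M := (2 * T) ^ (n + (K + 1) * S.card) * Real.exp (-J) * (2 * T) ^ (A + 2) *
    (1 + ((n + (K + 1) * S.card : ℕ) : ℝ) + r + 2 * Real.pi * |c|) ^ K with hM
  have hCa : 0 ≤ Ca := (norm_nonneg (a 0 0)).trans (by simpa using hgrowth 0 0)
  have hsmall : ∀ x, x ≠ s₀ → ‖jetPairing K a φ x‖ ≤
      (K + 1) * (Ca * M) * Λ.indicator (fun x : ℝ => ((1 + |x|) ^ 2)⁻¹) x := fun x hx =>
    norm_jetPairing_le_indicator ha.toSlowlyGrowingOn hgrowth fun hxΛ j hj => by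
      rw [hφtest]
      rcases le_or_gt |x| T with hxT | hxT
      · rw [iteratedDeriv_testFun_of_mem ((hS x).2 ⟨hx, hxΛ, hxT⟩) hj, norm_zero, mul_zero]
        positivity
      · simpa only [hρ, hM] using norm_iteratedDeriv_testFun_le (c := c) (n := n) hg
          hρ0 hT hρT hs₀T (fun s hs => ((hS s).1 hs).2.2) hN hxT hj
  refine (norm_jetPairing_testFun_center_ge hg.apply_zero hn htop (fun h => ((hS s₀).1 h).1 rfl)
    hsep).trans (hφtest ▸ norm_le_of_hasSum_zero (ha.hasSum φ (hρ ▸ hφ)) s₀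
      (hΛ.summable_indicator.hasSum.mul_left _) (fun x => ?_) hsmall)
  exact mul_nonneg (by positivity) (Set.indicator_nonneg (fun _ _ => by positivity) x)

lemma exists_norm_top_coeff_le (hg : IsBandKernel K C g) (hr : 0 < r) (hΛ : SeparatedBy η Λ)
    (ha : AnnihilatesBand K a Λ c r) (hs₀ : s₀ ∈ Λ) (hn : n ≤ K)
    (htop : ∀ m, n < m → m ≤ K → a m s₀ = 0) :
    ∃ D ≥ (0 : ℝ), ∃ B : ℕ, ∀ (T : ℝ) (m J : ℕ), 1 ≤ T → 2 * |s₀| ≤ T →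
      m + 1 = (Λ ∩ Icc (-T) T).ncard → n + (K + 1) * m + B ≤ J →
      J ≤ r / (2 * Real.exp 1 * C) * T →
      ‖a n s₀‖ ≤ D * (1 + (n + (K + 1) * m : ℕ) + r + 2 * Real.pi * |c|) ^ K *
        (2 * T) ^ (n + B) * Real.exp (-J) * ((4 * T / η) ^ m / m.factorial) ^ (K + 1) := by
  classical
  obtain ⟨Ca, hCa, A, hgrowth⟩ := ha.growth
  have hη := hΛ.pos
  refine ⟨(K + 1) * Ca * ∑' x, Λ.indicator (fun x : ℝ => ((1 + |x|) ^ 2)⁻¹) x,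
    mul_nonneg (by positivity) (tsum_nonneg (Set.indicator_nonneg fun _ _ => by positivity)), A + 2,
    fun T m J hT hs₀T hm hN hJT => ?_⟩
  have hs₀T' : |s₀| ≤ T := by linarith [abs_nonneg s₀]
  have hfin := hΛ.finite_inter_Icc (-T) T
  have hcard : (hfin.toFinset.erase s₀).card = m := by
    rw [Finset.card_erase_of_mem (hfin.mem_toFinset.2 ⟨hs₀, abs_le.1 hs₀T'⟩),
      ← Set.ncard_eq_toFinset_card _ hfin, ← hm, Nat.add_sub_cancel]
  have hbound := norm_top_coeff_mul_le hg hr hΛ ha hgrowth hs₀ hn htop hT hs₀T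
    (S := hfin.toFinset.erase s₀) (fun s => by
      rw [Finset.mem_erase, hfin.mem_toFinset, Set.mem_inter_iff, Set.mem_Icc, abs_le])
    (by rwa [hcard]) hJT
  rw [hcard, ← le_div_iff₀ (by positivity)] at hbound
  refine hbound.trans_eq ?_
  rw [show 4 * T / η = 2 * T / (η / 2) by field_simp; ring, div_pow (2 * T), div_div, div_pow,
    pow_add (2 * T) n, pow_add (2 * T) n, mul_comm (K + 1), pow_mul]
  ring

/-- Splitting `4T/η = δ⁻¹ · (4δT/η)` balances the two factors: the first is harmless because `m` is
at most `κT`, the second because `xᵐ/m! ≤ eˣ`. -/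
lemma pow_div_factorial_pow_le_exp {δ κ θ T : ℝ} {m : ℕ} (hη : 0 < η) (hδ : 0 < δ) (hδ1 : δ ≤ 1)
    (hT : 0 ≤ T) (hm : m ≤ κ * T) (h : (K + 1) * (4 * δ / η + κ * Real.log (1 / δ)) ≤ θ) :
    ((4 * T / η) ^ m / m.factorial) ^ (K + 1) ≤ Real.exp (θ * T) := by
  have hlog : 0 ≤ Real.log (1 / δ) := Real.log_nonneg (by rwa [one_le_div hδ])
  have hexp : Real.exp (m * Real.log (1 / δ)) = (1 / δ) ^ m := by
    rw [Real.exp_nat_mul, Real.exp_log (by positivity)]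
  calc ((4 * T / η) ^ m / m.factorial) ^ (K + 1)
      = ((1 / δ) ^ m * ((4 * δ * T / η) ^ m / m.factorial)) ^ (K + 1) := by
        rw [← mul_div_assoc, ← mul_pow]
        congr 3
        field_simp
    _ ≤ (Real.exp (m * Real.log (1 / δ)) * Real.exp (4 * δ * T / η)) ^ (K + 1) := by
        rw [hexp]
        gcongr
        exact Real.pow_div_factorial_le_exp _ (by positivity) m
    _ = Real.exp ((K + 1) * (m * Real.log (1 / δ) + 4 * δ * T / η)) := by
        rw [← Real.exp_add, ← Real.exp_nat_mul]
        push_cast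
        rfl
    _ ≤ Real.exp (((K + 1) * (4 * δ / η + κ * Real.log (1 / δ))) * T) := by
        refine Real.exp_le_exp.2 ?_
        calc ((K : ℝ) + 1) * (m * Real.log (1 / δ) + 4 * δ * T / η)
            ≤ (K + 1) * (κ * T * Real.log (1 / δ) + 4 * δ * T / η) := by gcongr
          _ = _ := by ring
    _ ≤ Real.exp (θ * T) := by gcongr

lemma tendsto_const_mul_pow_mul_exp_neg (b : ℝ) (hb : 0 < b) (G : ℝ) (n : ℕ) :
    Tendsto (fun T : ℝ => G * (T ^ n * Real.exp (-(b * T)))) atTop (𝓝 0) := by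
  simpa [Function.comp_def, Real.rpow_natCast] using
    (tendsto_rpow_mul_exp_neg_mul_atTop_nhds_zero n b hb).const_mul G

lemma add_one_mul_le_of_mul_log_le {δ η κ θ : ℝ} (hη : 0 < η) (hδ : 0 < δ)
    (hδ1 : δ ≤ Real.exp (-1)) (hκ : 0 ≤ κ)
    (h : (K + 1) * (4 * δ / η + κ * Real.log (1 / δ)) ≤ θ) : (K + 1) * κ ≤ θ := by
  have hlog : 1 ≤ Real.log (1 / δ) := by
    rw [Real.le_log_iff_exp_le (by positivity), le_div_iff₀ hδ]
    simpa [← Real.exp_add] using mul_le_mul_of_nonneg_left hδ1 (Real.exp_pos 1).le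
  refine le_trans ?_ h
  gcongr
  have := le_mul_of_one_le_right hκ hlog
  have : 0 ≤ 4 * δ / η := by positivity
  linarith

/-- With few points, `m ≤ κ T`, the factor `e^{-θT}` prevails in the bound for the top
coefficient. -/
lemma top_coeff_bound_le_exp {δ κ θ b D T : ℝ} {m B : ℕ} (hη : 0 < η) (hδ : 0 < δ)
    (hδ1 : δ ≤ Real.exp (-1)) (hD : 0 ≤ D) (hb : 0 ≤ b) (hT : 1 ≤ T) (hm : m ≤ κ * T)
    (h : (K + 1) * (4 * δ / η + κ * Real.log (1 / δ)) ≤ θ / 2) :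
    D * (1 + (n + (K + 1) * m : ℕ) + b) ^ K * (2 * T) ^ (n + B) * Real.exp (-⌊θ * T⌋₊) *
        ((4 * T / η) ^ m / m.factorial) ^ (K + 1) ≤
      D * (1 + n + (K + 1) * κ + b) ^ K * 2 ^ (n + B) * Real.exp 1 *
        (T ^ (K + (n + B)) * Real.exp (-(θ / 2 * T))) := by
  set G : ℝ := 1 + n + (K + 1) * κ + b
  have hexp : Real.exp (-⌊θ * T⌋₊) ≤ Real.exp 1 * Real.exp (-(θ * T)) := by
    rw [← Real.exp_add]
    gcongr
    linarith [Nat.lt_floor_add_one (θ * T)]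
  have hpoly : 1 + ((n + (K + 1) * m : ℕ) : ℝ) + b ≤ G * T := by
    have hKm : ((K : ℝ) + 1) * m ≤ (K + 1) * κ * T := by
      rw [mul_assoc]
      gcongr
    have : 0 ≤ (1 + n + b) * (T - 1) := mul_nonneg (by positivity) (by linarith)
    push_cast
    linarith
  have hG : 0 ≤ G := nonneg_of_mul_nonneg_left (le_trans (by positivity) hpoly) (by linarith)
  calc D * (1 + (n + (K + 1) * m : ℕ) + b) ^ K * (2 * T) ^ (n + B) * Real.exp (-⌊θ * T⌋₊) *
        ((4 * T / η) ^ m / m.factorial) ^ (K + 1)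
      ≤ D * (G * T) ^ K * (2 * T) ^ (n + B) * (Real.exp 1 * Real.exp (-(θ * T))) *
        Real.exp (θ / 2 * T) := by
        gcongr
        exact pow_div_factorial_pow_le_exp hη hδ
          (hδ1.trans (Real.exp_le_one_iff.2 (by norm_num))) (by linarith) hm h
    _ = D * G ^ K * 2 ^ (n + B) * Real.exp 1 *
        (T ^ (K + (n + B)) * (Real.exp (-(θ * T)) * Real.exp (θ / 2 * T))) := by ring_nf
    _ = _ := by
        rw [← Real.exp_add]
        ring_nf

/-- If `Λ` had few points in `[-T, T]`, the top coefficient at `s₀` would be exponentially small. -/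
lemma exists_norm_top_coeff_le_exp (hg : IsBandKernel K C g) (hr : 0 < r) (hΛ : SeparatedBy η Λ)
    (ha : AnnihilatesBand K a Λ c r) (hs₀ : s₀ ∈ Λ) (hn : n ≤ K)
    (htop : ∀ m, n < m → m ≤ K → a m s₀ = 0) {δ κ θ : ℝ} (hδ : 0 < δ) (hδ1 : δ ≤ Real.exp (-1))
    (hκ : 0 ≤ κ) (hθ : θ = r / (2 * Real.exp 1 * C))
    (hcond : (K + 1) * (4 * δ / η + κ * Real.log (1 / δ)) ≤ θ / 2) :
    ∃ (D : ℝ) (M : ℕ), ∀ᶠ T : ℝ in atTop, ((Λ ∩ Icc (-T) T).ncard : ℝ) ≤ κ * T →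
      ‖a n s₀‖ ≤ D * (T ^ M * Real.exp (-(θ / 2 * T))) := by
  have hC := hg.const_pos
  have hθ0 : 0 < θ := hθ ▸ by positivity
  obtain ⟨D, hD, B, hbound⟩ := exists_norm_top_coeff_le hg hr hΛ ha hs₀ hn htop
  refine ⟨D * (1 + n + (K + 1) * κ + (r + 2 * Real.pi * |c|)) ^ K * 2 ^ (n + B) * Real.exp 1,
    K + (n + B), ?_⟩
  filter_upwards [eventually_ge_atTop 1, eventually_ge_atTop (2 * |s₀|),
    (tendsto_id.const_mul_atTop (half_pos hθ0)).eventually_ge_atTop ((n : ℝ) + B + 1)]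
    with T hT hs₀T hJT hcount
  simp only [id] at hJT
  have hpos : 0 < (Λ ∩ Icc (-T) T).ncard := (Set.ncard_pos (hΛ.finite_inter_Icc (-T) T)).2
    ⟨s₀, hs₀, abs_le.1 (by linarith [abs_nonneg s₀])⟩
  obtain ⟨m, hm⟩ := Nat.exists_eq_add_of_le' hpos
  have hmT : (m : ℝ) ≤ κ * T := by
    rw [hm] at hcount
    push_cast at hcount
    linarith
  have hN : n + (K + 1) * m + B ≤ ⌊θ * T⌋₊ := by
    refine Nat.le_floor ?_
    push_cast
    calc (n : ℝ) + (K + 1) * m + B ≤ n + (K + 1) * κ * T + B := by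
          rw [mul_assoc _ κ]
          gcongr
      _ ≤ n + θ / 2 * T + B := by
          gcongr
          exact add_one_mul_le_of_mul_log_le hΛ.pos hδ hδ1 hκ hcond
      _ ≤ θ * T := by linarith
  refine (hbound T m _ hT hs₀T hm.symm hN (hθ ▸ Nat.floor_le (by positivity))).trans ?_
  rw [add_assoc _ r]
  exact top_coeff_bound_le_exp hΛ.pos hδ hδ1 hD (by positivity) hT hmT hcond

/-- The density inequality with the Beurling-type trade-off: the smaller `δ`, the smaller the
admissible density `κ` but the weaker the demand on the band radius `r`. -/
theorem exists_eventually_lt_ncard_of_annihilatesBand (K : ℕ) : ∃ ε > (0 : ℝ),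
    ∀ {η c r : ℝ} {Λ : Set ℝ} {a : ℕ → ℝ → ℂ}, SeparatedBy η Λ → 0 < r →
    AnnihilatesBand K a Λ c r → ∀ {δ κ : ℝ}, 0 < δ → δ ≤ Real.exp (-1) → 0 ≤ κ →
    (K + 1) * (4 * δ / η + κ * Real.log (1 / δ)) ≤ ε * r / 2 → (∃ x, ∃ n ≤ K, a n x ≠ 0) →
    ∀ᶠ T : ℝ in atTop, κ * T < (Λ ∩ Icc (-T) T).ncard := by
  obtain ⟨C, g, hg⟩ := exists_isBandKernel K
  have hC := hg.const_pos
  refine ⟨1 / (2 * Real.exp 1 * C), by positivity, ?_⟩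
  intro η c r Λ a hΛ hr ha δ κ hδ hδ1 hκ hcond ⟨s₀, hne⟩
  rw [one_div_mul_eq_div] at hcond
  obtain ⟨n, hn, hns₀, htop⟩ := exists_top_degree hne
  have hs₀ : s₀ ∈ Λ := not_imp_comm.1 (ha.eq_zero n) hns₀
  obtain ⟨D, M, hbound⟩ := exists_norm_top_coeff_le_exp hg hr hΛ ha hs₀ hn htop hδ hδ1 hκ rfl hcond
  filter_upwards [hbound, (tendsto_const_mul_pow_mul_exp_neg (r / (2 * Real.exp 1 * C) / 2)
    (by positivity) D M).eventually (gt_mem_nhds (norm_pos_iff.2 hns₀))] with T hT hsmall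
  by_contra! hcount
  exact (hT hcount).not_gt hsmall

theorem exists_radius_forall_annihilatesBand_eq_zero (K : ℕ) (hη : 0 < η) : ∃ r₀ > (0 : ℝ),
    ∀ {Λ : Set ℝ} {a : ℕ → ℝ → ℂ} {c r : ℝ}, SeparatedBy η Λ → r₀ ≤ r → AnnihilatesBand K a Λ c r →
    ∀ x, ∀ n ≤ K, a n x = 0 := by
  obtain ⟨ε, hε, hdensity⟩ := exists_eventually_lt_ncard_of_annihilatesBand K
  have hpos : 0 < 2 * ((K + 1) * (4 * Real.exp (-1) / η + 3 / η)) / ε := by positivity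
  refine ⟨_, hpos, ?_⟩
  intro Λ a c r hΛ hr ha
  by_contra! hne
  have hr0 := hpos.trans_le hr
  rw [div_le_iff₀ hε] at hr
  have hdense := hdensity hΛ hr0 ha (Real.exp_pos (-1)) le_rfl (κ := 3 / η) (by positivity)
    (by rw [one_div, ← Real.exp_neg, Real.log_exp]; linarith) hne
  obtain ⟨T, hT, hηT⟩ := (hdense.and (eventually_ge_atTop η)).exists
  have hcount := hΛ.ncard_inter_Icc_le (show -T ≤ T by linarith)
  have hTη : 1 ≤ T / η := by rwa [one_le_div hη]
  rw [show (T - -T) / η = 2 * (T / η) by ring] at hcount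
  rw [show 3 / η * T = 3 * (T / η) by ring] at hT
  linarith

theorem exists_density_of_annihilatesBand (K : ℕ) (hη : 0 < η) (hr : 0 < r) : ∃ κ > (0 : ℝ),
    ∀ {Λ : Set ℝ} {a : ℕ → ℝ → ℂ} {c : ℝ}, SeparatedBy η Λ → AnnihilatesBand K a Λ c r →
    (∃ x, ∃ n ≤ K, a n x ≠ 0) → ∀ᶠ T : ℝ in atTop, κ * T < (Λ ∩ Icc (-T) T).ncard := by
  obtain ⟨ε, hε, hdensity⟩ := exists_eventually_lt_ncard_of_annihilatesBand K
  set δ := min (Real.exp (-1)) (ε * r * η / (16 * (K + 1)))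
  have hδ : 0 < δ := lt_min (Real.exp_pos _) (by positivity)
  have hδ1 : δ ≤ Real.exp (-1) := min_le_left _ _
  have hδ2 : δ ≤ ε * r * η / (16 * (K + 1)) := min_le_right _ _
  have hlog : 0 < Real.log (1 / δ) := Real.log_pos <| by
    rw [one_lt_div hδ]
    exact hδ1.trans_lt (by rw [Real.exp_lt_one_iff]; norm_num)
  refine ⟨ε * r / (4 * (K + 1) * Real.log (1 / δ)), by positivity, ?_⟩
  intro Λ a c hΛ ha
  refine hdensity hΛ hr ha hδ hδ1 (by positivity) ?_
  calc (K + 1) * (4 * δ / η + ε * r / (4 * (K + 1) * Real.log (1 / δ)) * Real.log (1 / δ))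
      ≤ (K + 1) * (4 * (ε * r * η / (16 * (K + 1))) / η +
        ε * r / (4 * (K + 1) * Real.log (1 / δ)) * Real.log (1 / δ)) := by gcongr
    _ = ε * r / 2 := by
        field_simp
        norm_num

end Density

/-! ### Coefficients are determined by band-limited test functions -/

lemma exists_bandLimited_iteratedDeriv_eq_one (N : ℕ) :
    ∃ g : 𝓢(ℝ, ℂ), BandLimited 0 1 g ∧ iteratedDeriv N g 0 = 1 := by
  obtain ⟨g, hg, hg0⟩ := exists_bandLimited_apply_zero_eq_one
  obtain ⟨ψ, hψ, hψg⟩ := hg.exists_eval_mul (Polynomial.C (N.factorial : ℂ)⁻¹ * Polynomial.X ^ N)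
  refine ⟨ψ, hψ, ?_⟩
  have hcoe : ⇑ψ = fun x : ℝ => ((x : ℂ) - (0 : ℝ)) ^ N * ((N.factorial : ℂ)⁻¹ * g x) := by
    ext x
    simp only [hψg, Polynomial.eval_mul, Polynomial.eval_C, Polynomial.eval_pow, Polynomial.eval_X,
      Complex.ofReal_zero, sub_zero]
    ring
  rw [hcoe, iteratedDeriv_ofReal_sub_pow_mul 0 (contDiff_const.mul (g.smooth N)) le_rfl,
    if_pos rfl, hg0, mul_one, mul_inv_cancel₀ (by exact_mod_cast N.factorial_ne_zero)]

/-- The functions `x ↦ (m + 1)⁻ᴺ g ((m + 1) (x - s))`: as `m → ∞` they concentrate at `s`, where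
their `N`-th derivative does not depend on `m`. -/
def concentrate (g : 𝓢(ℝ, ℂ)) (N : ℕ) (s : ℝ) (m : ℕ) : 𝓢(ℝ, ℂ) :=
  ((m : ℂ) + 1)⁻¹ ^ N • affineComp (Units.mk0 ((m : ℝ) + 1) (by positivity)) s g

section Concentrate

variable {g : 𝓢(ℝ, ℂ)} {N k : ℕ}

lemma BandLimited.concentrate (hg : BandLimited 0 1 g) (N : ℕ) (s : ℝ) (m : ℕ) :
    BandLimited 0 (m + 1) (concentrate g N s m) := by
  have hpos : (0 : ℝ) < m + 1 := by positivity
  exact ((hg.affineComp (a := Units.mk0 _ hpos.ne') hpos s).smul _).mono (mul_one _).le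

lemma iteratedDeriv_concentrate (hk : k ≤ N) (s : ℝ) (m : ℕ) (x : ℝ) :
    iteratedDeriv k (concentrate g N s m) x =
      ((m : ℂ) + 1)⁻¹ ^ (N - k) * iteratedDeriv k g ((m + 1) * (x - s)) := by
  have hcoe : ⇑(concentrate g N s m) = fun x => ((m : ℂ) + 1)⁻¹ ^ N *
      affineComp (Units.mk0 ((m : ℝ) + 1) (by positivity)) s g x := rfl
  have hm : ((m : ℂ) + 1) ≠ 0 := by exact_mod_cast m.succ_ne_zero
  rw [hcoe, iteratedDeriv_const_mul_field, iteratedDeriv_affineComp, Units.val_mk0, ← mul_assoc]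
  congr 1
  push_cast
  rw [← Nat.sub_add_cancel hk, pow_add, Nat.add_sub_cancel, mul_assoc, ← mul_pow,
    inv_mul_cancel₀ hm, one_pow, mul_one]

lemma norm_natCast_add_one_inv (m : ℕ) : ‖((m : ℂ) + 1)⁻¹‖ = ((m : ℝ) + 1)⁻¹ := by
  rw [norm_inv, ← Nat.cast_succ, Complex.norm_natCast, Nat.cast_succ]

lemma exists_norm_iteratedDeriv_concentrate_le (g : 𝓢(ℝ, ℂ)) (N B : ℕ) (s : ℝ) :
    ∃ M ≥ (0 : ℝ), ∀ m, ∀ k ≤ N, ∀ x,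
      ‖iteratedDeriv k (concentrate g N s m) x‖ ≤ M * ((1 + |x|) ^ B)⁻¹ := by
  obtain ⟨M, hM, hg⟩ := exists_iteratedDeriv_decay g N B
  refine ⟨M * (1 + |s|) ^ B, by positivity, fun m k hk x => ?_⟩
  have hdilate : |x - s| ≤ |(m + 1) * (x - s)| := by
    rw [abs_mul, abs_of_nonneg (by positivity : (0 : ℝ) ≤ m + 1)]
    exact le_mul_of_one_le_left (abs_nonneg _) (by linarith [m.cast_nonneg (α := ℝ)])
  have hpow : ‖((m : ℂ) + 1)⁻¹ ^ (N - k)‖ ≤ 1 := by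
    rw [norm_pow, norm_natCast_add_one_inv]
    exact pow_le_one₀ (by positivity) (inv_le_one_of_one_le₀ (by linarith [m.cast_nonneg (α := ℝ)]))
  rw [iteratedDeriv_concentrate hk, norm_mul, ← div_eq_mul_inv, le_div_iff₀ (by positivity)]
  calc ‖((m : ℂ) + 1)⁻¹ ^ (N - k)‖ * ‖iteratedDeriv k g ((m + 1) * (x - s))‖ * (1 + |x|) ^ B
      ≤ 1 * ‖iteratedDeriv k g ((m + 1) * (x - s))‖ *
          ((1 + |(m + 1) * (x - s)|) * (1 + |s|)) ^ B := by
        gcongr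
        exact (one_add_abs_le_mul x s).trans (by gcongr)
    _ = (1 + |(m + 1) * (x - s)|) ^ B * ‖iteratedDeriv k g ((m + 1) * (x - s))‖ *
          (1 + |s|) ^ B := by
        rw [mul_pow]
        ring
    _ ≤ M * (1 + |s|) ^ B := by
        gcongr
        exact hg k hk _

lemma tendsto_iteratedDeriv_concentrate (hg : iteratedDeriv N g 0 = 1) (hk : k ≤ N) (s x : ℝ) :
    Tendsto (fun m => iteratedDeriv k (concentrate g N s m) x) atTop
      (𝓝 (if k = N ∧ x = s then 1 else 0)) := by
  simp only [iteratedDeriv_concentrate hk]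
  have hinv : Tendsto (fun m : ℕ => ((m : ℂ) + 1)⁻¹) atTop (𝓝 0) := by
    simpa using tendsto_one_div_add_atTop_nhds_zero_nat (𝕜 := ℂ)
  rcases eq_or_ne x s with rfl | hx
  · simp only [sub_self, mul_zero, and_true]
    rcases hk.eq_or_lt with rfl | hlt
    · simp [hg]
    · rw [if_neg hlt.ne]
      simpa [(Nat.sub_pos_of_lt hlt).ne'] using (hinv.pow (N - k)).mul_const (iteratedDeriv k g 0)
  · rw [if_neg fun h => hx h.2]
    have hcocompact : Tendsto (fun m : ℕ => ((m : ℝ) + 1) * (x - s)) atTop (cocompact ℝ) := by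
      rw [← Metric.cobounded_eq_cocompact, ← tendsto_norm_atTop_iff_cobounded]
      simp only [norm_mul]
      refine Tendsto.atTop_mul_const (norm_pos_iff.2 (sub_ne_zero.2 hx)) ?_
      exact tendsto_norm_atTop_atTop.comp
        (tendsto_atTop_add_const_right _ _ tendsto_natCast_atTop_atTop)
    have hjet := (zero_at_infty (schwartzIteratedDeriv k g)).comp hcocompact
    rw [coe_schwartzIteratedDeriv] at hjet
    simpa using (hinv.pow (N - k)).mul hjet

end Concentrate

section Uniqueness

variable {N B : ℕ} {b : ℕ → ℝ → ℂ}
  (hb : ∀ k, Summable fun s : ℝ => ‖b k s‖ * ((1 + |s|) ^ B)⁻¹)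

include hb

lemma top_coeff_eq_zero_of_forall_bandLimited
    (h : ∀ ψ R, BandLimited 0 R ψ →
      ∑ k ∈ Finset.range (N + 1), ∑' s, b k s * iteratedDeriv k ψ s = 0) (s : ℝ) :
    b N s = 0 := by
  obtain ⟨g, hg, hgN⟩ := exists_bandLimited_iteratedDeriv_eq_one N
  obtain ⟨M, -, hbound⟩ := exists_norm_iteratedDeriv_concentrate_le g N B s
  have hlim : Tendsto (fun m => ∑ k ∈ Finset.range (N + 1),
      ∑' x, b k x * iteratedDeriv k (concentrate g N s m) x) atTop
      (𝓝 (∑ k ∈ Finset.range (N + 1), ∑' x, b k x * if k = N ∧ x = s then 1 else 0)) := by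
    refine tendsto_finsetSum _ fun k hk => ?_
    have hkN : k ≤ N := Nat.lt_succ_iff.1 (Finset.mem_range.1 hk)
    refine tendsto_tsum_of_dominated_convergence ((hb k).mul_left M)
      (fun x => (tendsto_iteratedDeriv_concentrate hgN hkN s x).const_mul _)
      (Eventually.of_forall fun m x => ?_)
    rw [norm_mul, mul_left_comm]
    gcongr
    exact hbound m k hkN x
  simp only [fun m => h _ _ (hg.concentrate N s m)] at hlim
  have hzero := tendsto_nhds_unique hlim tendsto_const_nhds
  rw [Finset.sum_eq_single_of_mem N (Finset.self_mem_range_succ N)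
    fun k _ hk => by simp [hk]] at hzero
  simpa using hzero

lemma coeff_eq_zero_of_forall_bandLimited
    (h : ∀ ψ R, BandLimited 0 R ψ →
      ∑ k ∈ Finset.range N, ∑' s, b k s * iteratedDeriv k ψ s = 0) :
    ∀ k < N, ∀ s, b k s = 0 := by
  induction N with
  | zero => exact fun k hk => absurd hk k.not_lt_zero
  | succ N ih =>
    have htop := top_coeff_eq_zero_of_forall_bandLimited hb h
    refine Nat.forall_lt_succ_right.2 ⟨ih fun ψ R hψ => ?_, htop⟩
    simpa [Finset.sum_range_succ, htop] using h ψ R hψ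

end Uniqueness

section Antidiagonal

variable {w : ℝ → ℝ} {c : ℝ → ℝ → ℂ} {M : ℝ} {B : ℕ}

/-- Coordinates on the plane in which the fibres of addition are the vertical lines. -/
def antidiagonalEquiv : ℝ × ℝ ≃ ℝ × ℝ :=
  (Equiv.prodComm ℝ ℝ).trans (Equiv.prodShear (Equiv.refl ℝ) Equiv.subRight)

lemma antidiagonalEquiv_apply (q : ℝ × ℝ) : antidiagonalEquiv q = (q.2, q.1 - q.2) := rfl

lemma summable_antidiagonal (hw0 : ∀ x, 0 ≤ w x) (hw1 : ∀ x, w x ≤ 1) (hw : Summable w)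
    (hM : 0 ≤ M) (hc : ∀ x y, ‖c x y‖ ≤ M * (w x * w y) * (1 + |x + y|) ^ B) (s : ℝ) :
    Summable fun x => c x (s - x) := by
  refine .of_norm_bounded (hw.mul_left (M * (1 + |s|) ^ B)) fun x => (hc x (s - x)).trans ?_
  rw [add_sub_cancel]
  calc M * (w x * w (s - x)) * (1 + |s|) ^ B ≤ M * (w x * 1) * (1 + |s|) ^ B := by
        gcongr
        exacts [hw0 x, hw1 _]
    _ = M * (1 + |s|) ^ B * w x := by ring

lemma summable_norm_tsum_antidiagonal (hw0 : ∀ x, 0 ≤ w x) (hw : Summable w)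
    (hc : ∀ x y, ‖c x y‖ ≤ M * (w x * w y) * (1 + |x + y|) ^ B) :
    Summable fun s : ℝ => ‖∑' x, c x (s - x)‖ * ((1 + |s|) ^ B)⁻¹ := by
  have hprod : Summable fun q : ℝ × ℝ => w q.2 * w (q.1 - q.2) :=
    antidiagonalEquiv.summable_iff.2 (hw.mul_of_nonneg hw hw0 hw0)
  refine .of_nonneg_of_le (fun s => by positivity) (fun s => ?_) (hprod.prod.mul_left M)
  rw [← div_eq_mul_inv, div_le_iff₀ (by positivity)]
  refine tsum_of_norm_bounded (((hprod.prod_factor s).hasSum.mul_left M).mul_right _) fun x => ?_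
  simpa only [add_sub_cancel] using hc x (s - x)

lemma summable_mul_comp_add (hw0 : ∀ x, 0 ≤ w x) (hw : Summable w) (hM : 0 ≤ M)
    (hc : ∀ x y, ‖c x y‖ ≤ M * (w x * w y) * (1 + |x + y|) ^ B) {u : ℝ → ℂ} {D : ℝ}
    (hu : ∀ s, (1 + |s|) ^ B * ‖u s‖ ≤ D) :
    Summable fun q : ℝ × ℝ => c q.1 q.2 * u (q.1 + q.2) := by
  refine .of_norm_bounded ((hw.mul_of_nonneg hw hw0 hw0).mul_left (M * D)) fun q => ?_
  have hq := mul_nonneg (hw0 q.1) (hw0 q.2)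
  calc ‖c q.1 q.2 * u (q.1 + q.2)‖
      ≤ M * (w q.1 * w q.2) * (1 + |q.1 + q.2|) ^ B * ‖u (q.1 + q.2)‖ := by
        rw [norm_mul]
        gcongr
        exact hc _ _
    _ = M * (w q.1 * w q.2) * ((1 + |q.1 + q.2|) ^ B * ‖u (q.1 + q.2)‖) := by ring
    _ ≤ M * (w q.1 * w q.2) * D := by
        gcongr
        exact hu _
    _ = M * D * (w q.1 * w q.2) := by ring

lemma tsum_mul_comp_add {u : ℝ → ℂ} (h : Summable fun q : ℝ × ℝ => c q.1 q.2 * u (q.1 + q.2)) :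
    ∑' q : ℝ × ℝ, c q.1 q.2 * u (q.1 + q.2) = ∑' s, (∑' x, c x (s - x)) * u s := by
  have hshear : Summable fun q => c (antidiagonalEquiv q).1 (antidiagonalEquiv q).2 *
      u ((antidiagonalEquiv q).1 + (antidiagonalEquiv q).2) :=
    h.comp_injective antidiagonalEquiv.injective
  rw [← antidiagonalEquiv.tsum_eq fun q : ℝ × ℝ => c q.1 q.2 * u (q.1 + q.2), hshear.tsum_prod]
  refine tsum_congr fun s => ?_
  simp only [antidiagonalEquiv_apply, add_sub_cancel, tsum_mul_right]

lemma hasSum_antidiagonal_eq_zero {c : ℕ → ℝ → ℝ → ℂ} (hw0 : ∀ x, 0 ≤ w x) (hw1 : ∀ x, w x ≤ 1)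
    (hw : Summable w) (hM : 0 ≤ M)
    (hc : ∀ k x y, ‖c k x y‖ ≤ M * (w x * w y) * (1 + |x + y|) ^ B) {N : ℕ}
    (h : ∀ ψ R, BandLimited 0 R ψ →
      ∑' x, ∑' y, ∑ k ∈ Finset.range N, c k x y * iteratedDeriv k ψ (x + y) = 0) :
    ∀ k < N, ∀ s, HasSum (fun x => c k x (s - x)) 0 := by
  have hfiber := coeff_eq_zero_of_forall_bandLimited (N := N)
    (fun k => summable_norm_tsum_antidiagonal hw0 hw (hc k)) fun ψ R hψ => ?_
  · intro k hk s
    rw [← hfiber k hk s]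
    exact (summable_antidiagonal hw0 hw1 hw hM (hc k) s).hasSum
  · have hsummable : ∀ k, Summable fun q : ℝ × ℝ => c k q.1 q.2 * iteratedDeriv k ψ (q.1 + q.2) :=
      fun k => by
        obtain ⟨D, -, hψ⟩ := exists_iteratedDeriv_decay ψ k B
        exact summable_mul_comp_add hw0 hw hM (hc k) (hψ k le_rfl)
    have hdouble := (summable_sum (f := fun k (q : ℝ × ℝ) => c k q.1 q.2 *
      iteratedDeriv k ψ (q.1 + q.2)) (s := Finset.range N) fun k _ => hsummable k).tsum_prod
    rw [← h ψ R hψ, ← hdouble, Summable.tsum_finsetSum fun k _ => hsummable k]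
    exact Finset.sum_congr rfl fun k _ => (tsum_mul_comp_add (hsummable k)).symm

end Antidiagonal

/-! ### Correlations and the spectral gap -/

/-- The correlation `x ↦ f (ψ (· + x))` of a distribution with a test function. -/
def correlation (f : TemperedDistR) (ψ : 𝓢(ℝ, ℂ)) (x : ℝ) : ℂ :=
  f (affineComp 1 (-x) ψ)

lemma schwartzIteratedDeriv_add (m n : ℕ) (φ : 𝓢(ℝ, ℂ)) :
    schwartzIteratedDeriv (m + n) φ = schwartzIteratedDeriv m (schwartzIteratedDeriv n φ) := by
  simp only [schwartzIteratedDeriv, pow_add]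
  rfl

lemma iteratedDeriv_schwartzIteratedDeriv (m n : ℕ) (φ : 𝓢(ℝ, ℂ)) :
    iteratedDeriv m (schwartzIteratedDeriv n φ) = iteratedDeriv (m + n) φ := by
  rw [← coe_schwartzIteratedDeriv, ← schwartzIteratedDeriv_add, coe_schwartzIteratedDeriv]

section Correlation

variable {f : TemperedDistR} {K : ℕ} {p : ℕ → ℝ → ℂ} {Λ : Set ℝ} {η : ℝ}

lemma IsDeltaSeries.hasSum_correlation (h : IsDeltaSeries f K p Λ) (ψ : 𝓢(ℝ, ℂ)) (x : ℝ) :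
    HasSum (fun y => ∑ n ∈ Finset.range (K + 1), p n y * iteratedDeriv n ψ (x + y))
      (correlation f ψ x) := by
  simpa only [funext (jetPairing.eq_1 K p _), iteratedDeriv_affineComp_one, sub_neg_eq_add,
    add_comm, correlation] using h.hasSum (affineComp 1 (-x) ψ)

lemma hasDerivAt_jetPairing_translate (K : ℕ) (p : ℕ → ℝ → ℂ) (ψ : 𝓢(ℝ, ℂ)) (x y : ℝ) :
    HasDerivAt (fun x => jetPairing K p (affineComp 1 (-x) ψ) y)
      (jetPairing K p (affineComp 1 (-x) (schwartzIteratedDeriv 1 ψ)) y) x := by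
  simp only [jetPairing, iteratedDeriv_affineComp_one, iteratedDeriv_schwartzIteratedDeriv,
    sub_neg_eq_add]
  exact HasDerivAt.fun_sum fun n _ =>
    ((hasDerivAt_iteratedDeriv_schwartz ψ n (y + x)).comp_const_add y x).const_mul _

lemma hasDerivAt_correlation (hs : SeparatedBy η Λ) (h : IsDeltaSeries f K p Λ) (ψ : 𝓢(ℝ, ℂ))
    (x : ℝ) :
    HasDerivAt (correlation f ψ) (correlation f (schwartzIteratedDeriv 1 ψ) x) x := by
  obtain ⟨C, -, A, hgrowth⟩ := h.growth
  obtain ⟨M, -, hdecay⟩ := exists_iteratedDeriv_decay (schwartzIteratedDeriv 1 ψ) K (A + 2)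
  have hseries : ∀ φ : 𝓢(ℝ, ℂ), correlation f φ = fun x =>
      ∑' y, jetPairing K p (affineComp 1 (-x) φ) y := fun φ =>
    funext fun x => (h.hasSum _).tsum_eq.symm
  rw [hseries ψ, hseries (schwartzIteratedDeriv 1 ψ)]
  refine hasDerivAt_tsum_of_isPreconnected (t := ball x 1) (y₀ := x)
    (hs.summable_indicator.mul_left ((K + 1) * (C * (M * (2 + |x|) ^ (A + 2))))) isOpen_ball
    (convex_ball x 1).isPreconnected (fun y z _ => hasDerivAt_jetPairing_translate K p ψ z y)
    (fun y z hz => norm_jetPairing_le_indicator h.toSlowlyGrowingOn hgrowth fun _ n hn => ?_)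
    (mem_ball_self one_pos) (h.hasSum _).summable (mem_ball_self one_pos)
  have hz' : |-z| ≤ 1 + |x| := by
    rw [mem_ball, Real.dist_eq] at hz
    rw [abs_neg]
    linarith [abs_sub_abs_le_abs_sub z x]
  rw [iteratedDeriv_affineComp_one]
  calc (1 + |y|) ^ (A + 2) * ‖iteratedDeriv n (schwartzIteratedDeriv 1 ψ) (y - -z)‖
      ≤ ((1 + |y - -z|) * (2 + |x|)) ^ (A + 2) *
          ‖iteratedDeriv n (schwartzIteratedDeriv 1 ψ) (y - -z)‖ := by
        gcongr
        exact (one_add_abs_le_mul y (-z)).trans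
          (mul_le_mul_of_nonneg_left (by linarith) (by positivity))
    _ = (1 + |y - -z|) ^ (A + 2) * ‖iteratedDeriv n (schwartzIteratedDeriv 1 ψ) (y - -z)‖ *
          (2 + |x|) ^ (A + 2) := by
        rw [mul_pow]
        ring
    _ ≤ M * (2 + |x|) ^ (A + 2) := by
        gcongr
        exact hdecay n hn _

lemma iteratedDeriv_correlation (hs : SeparatedBy η Λ) (h : IsDeltaSeries f K p Λ) (ψ : 𝓢(ℝ, ℂ))
    (j : ℕ) :
    iteratedDeriv j (correlation f ψ) = correlation f (schwartzIteratedDeriv j ψ) := by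
  induction j with
  | zero => rw [iteratedDeriv_zero, schwartzIteratedDeriv, pow_zero, one_apply_eq_self]
  | succ j ih =>
    ext x
    rw [iteratedDeriv_succ, ih, (hasDerivAt_correlation hs h _ x).deriv,
      ← schwartzIteratedDeriv_add, add_comm]

lemma contDiff_correlation (hs : SeparatedBy η Λ) (h : IsDeltaSeries f K p Λ) (ψ : 𝓢(ℝ, ℂ))
    (n : ℕ) : ContDiff ℝ n (correlation f ψ) := by
  refine contDiff_of_differentiable_iteratedDeriv fun m _ x => ?_
  rw [iteratedDeriv_correlation hs h]
  exact (hasDerivAt_correlation hs h _ x).differentiableAt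

end Correlation

lemma BandLimited.iteratedDeriv_fourierInv_eq_zero {c r t : ℝ} {φ : 𝓢(ℝ, ℂ)}
    (h : BandLimited c r φ) (ht : r < |t - c|) (n : ℕ) :
    iteratedDeriv n (𝓕⁻ φ : 𝓢(ℝ, ℂ)) t = 0 := by
  have hcont : Continuous fun t : ℝ => |t - c| := by fun_prop
  exact iteratedDeriv_eq_zero_of_eventuallyEq
    ((hcont.continuousAt.eventually (lt_mem_nhds ht)).mono fun t ht => h t ht) n

lemma jetPairing_fourierInv_eq_zero {M : ℕ} {q : ℕ → ℝ → ℂ} {Γ : Set ℝ} {c r t : ℝ} {φ : 𝓢(ℝ, ℂ)}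
    (hq : SlowlyGrowingOn q Γ) (hφ : BandLimited c r φ) (ht : t ∈ Γ → r < |t - c|) :
    jetPairing M q (𝓕⁻ φ : 𝓢(ℝ, ℂ)) t = 0 := by
  by_cases hΓ : t ∈ Γ
  · refine Finset.sum_eq_zero fun n _ => ?_
    rw [hφ.iteratedDeriv_fourierInv_eq_zero (ht hΓ), mul_zero]
  · exact jetPairing_eq_zero (fun n => hq.eq_zero n hΓ) M _

lemma apply_eq_fourierTDR_fourierInv (f : TemperedDistR) (φ : 𝓢(ℝ, ℂ)) :
    f φ = fourierTDR f (𝓕⁻ φ) := by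
  simp [fourierTDR, fourierTransformCLM_apply]

/-- `f` annihilates `φ * G` whenever `φ` is band-limited to `[c - r, c + r]`; it is part of the
notion that these products are Schwartz functions. -/
def AnnihilatesMul (f : TemperedDistR) (c r : ℝ) (G : ℝ → ℂ) : Prop :=
  ∀ φ, BandLimited c r φ → ∃ Ψ : 𝓢(ℝ, ℂ), (∀ x, Ψ x = φ x * G x) ∧ f Ψ = 0

lemma AnnihilatesMul.sum {f : TemperedDistR} {c r : ℝ} {ι : Type*} {S : Finset ι} {G : ι → ℝ → ℂ}
    (h : ∀ i ∈ S, AnnihilatesMul f c r (G i)) : AnnihilatesMul f c r fun x => ∑ i ∈ S, G i x := by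
  intro φ hφ
  choose! Ψ hΨ hf using fun i hi => h i hi φ hφ
  refine ⟨∑ i ∈ S, Ψ i, fun x => ?_, by rw [map_sum, Finset.sum_eq_zero hf]⟩
  rw [sum_apply, Finset.mul_sum]
  exact Finset.sum_congr rfl fun i hi => hΨ i hi x

lemma iteratedDeriv_fourierInv_affineComp_one (s : ℝ) (φ : 𝓢(ℝ, ℂ)) (m : ℕ) (x : ℝ) :
    iteratedDeriv m (𝓕⁻ (affineComp 1 s φ) : 𝓢(ℝ, ℂ)) x = ∑ j ∈ Finset.range (m + 1),
      m.choose j * iteratedDeriv j (𝓕⁻ φ : 𝓢(ℝ, ℂ)) x *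
        ((2 * Real.pi * s * Complex.I) ^ (m - j) * e2piR x s) := by
  have hcoe : ⇑(𝓕⁻ (affineComp 1 s φ) : 𝓢(ℝ, ℂ)) = fun t => (𝓕⁻ φ : 𝓢(ℝ, ℂ)) t * e2piR t s := by
    ext t
    simp [fourierInv_affineComp, e2piR_comm, mul_comm]
  rw [hcoe, iteratedDeriv_fun_mul ((𝓕⁻ φ : 𝓢(ℝ, ℂ)).smooth m).contDiffAt
    (contDiff_e2piR s m).contDiffAt]
  simp only [iteratedDeriv_e2piR]

lemma exists_polynomial_jetPairing_fourierInv_translate (M : ℕ) (q : ℕ → ℝ → ℂ) (ψ : 𝓢(ℝ, ℂ))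
    (γ : ℝ) :
    ∃ P : Polynomial ℂ, ∀ x : ℝ,
      jetPairing M q (𝓕⁻ (affineComp 1 (-x) ψ) : 𝓢(ℝ, ℂ)) γ = P.eval (x : ℂ) * e2piR x (-γ) := by
  refine ⟨∑ m ∈ Finset.range (M + 1), ∑ i ∈ Finset.range (m + 1), Polynomial.C (q m γ *
    (m.choose i * iteratedDeriv i (𝓕⁻ ψ : 𝓢(ℝ, ℂ)) γ *
      (-(2 * Real.pi * Complex.I)) ^ (m - i))) * Polynomial.X ^ (m - i), fun x => ?_⟩
  have hchar : e2piR γ (-x) = e2piR x (-γ) := by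
    simp only [e2piR, mul_neg, mul_comm γ x]
  have hpow : ∀ k : ℕ, (2 * Real.pi * ((-x : ℝ) : ℂ) * Complex.I) ^ k =
      (-(2 * Real.pi * Complex.I)) ^ k * (x : ℂ) ^ k := fun k => by
    rw [← mul_pow]
    push_cast
    ring
  simp only [jetPairing, Polynomial.eval_finsetSum, Polynomial.eval_mul, Polynomial.eval_C,
    Polynomial.eval_pow, Polynomial.eval_X, Finset.sum_mul, Finset.mul_sum,
    iteratedDeriv_fourierInv_affineComp_one, hchar, hpow]
  refine Finset.sum_congr rfl fun m _ => Finset.sum_congr rfl fun i _ => ?_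
  ring

section Spectrum

variable {f : TemperedDistR} {M : ℕ} {q : ℕ → ℝ → ℂ} {Γ : Set ℝ} {η c r : ℝ}

lemma apply_eq_zero_of_bandLimited (h : IsDeltaSeries (fourierTDR f) M q Γ) {φ : 𝓢(ℝ, ℂ)}
    (hφ : BandLimited c r φ) (hΓ : ∀ γ ∈ Γ, r < |γ - c|) : f φ = 0 := by
  rw [apply_eq_fourierTDR_fourierInv]
  refine (h.hasSum (𝓕⁻ φ)).unique ?_
  have hzero : jetPairing M q (𝓕⁻ φ : 𝓢(ℝ, ℂ)) = fun _ => 0 :=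
    funext fun γ => jetPairing_fourierInv_eq_zero h.toSlowlyGrowingOn hφ (hΓ γ)
  rw [hzero]
  exact hasSum_zero

lemma exists_correlation_eq_sum (hs : SeparatedBy η Γ) (h : IsDeltaSeries (fourierTDR f) M q Γ)
    {R : ℝ} {ψ : 𝓢(ℝ, ℂ)} (hψ : BandLimited 0 R ψ) :
    ∃ (S : Finset ℝ) (P : ℝ → Polynomial ℂ), ↑S ⊆ Γ ∧
      ∀ x, correlation f ψ x = ∑ γ ∈ S, (P γ).eval (x : ℂ) * e2piR x (-γ) := by
  choose P hP using exists_polynomial_jetPairing_fourierInv_translate M q ψ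
  have hfin := hs.finite_inter_Icc (-R) R
  refine ⟨hfin.toFinset, P, by simp, fun x => ?_⟩
  rw [correlation, apply_eq_fourierTDR_fourierInv]
  refine (h.hasSum _).unique ?_
  simp only [← hP]
  refine hasSum_sum_of_ne_finset_zero fun γ hγ => ?_
  refine jetPairing_fourierInv_eq_zero h.toSlowlyGrowingOn (hψ.affineComp one_pos (-x))
    fun hγΓ => ?_
  rw [sub_zero, Units.val_one, one_mul]
  by_contra! hle
  exact hγ (hfin.mem_toFinset.2 ⟨hγΓ, abs_le.1 hle⟩)

lemma annihilatesMul_correlation (hs : SeparatedBy η Γ) (h : IsDeltaSeries (fourierTDR f) M q Γ)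
    (hgap : ∀ γ ∈ Γ, ∀ γ' ∈ Γ, r < |γ' - γ - c|) {R : ℝ} {ψ : 𝓢(ℝ, ℂ)} (hψ : BandLimited 0 R ψ) :
    AnnihilatesMul f c r (correlation f ψ) := by
  obtain ⟨S, P, hS, hcorr⟩ := exists_correlation_eq_sum hs h hψ
  rw [funext hcorr]
  refine AnnihilatesMul.sum fun γ hγ φ hφ => ?_
  obtain ⟨Ψ, hΨ, hΨ_apply⟩ := (hφ.modulate (-γ)).exists_eval_mul (P γ)
  refine ⟨Ψ, fun x => ?_, apply_eq_zero_of_bandLimited h hΨ fun γ' hγ' => ?_⟩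
  · rw [hΨ_apply, modulate_apply]
    ring
  · have hlt := hgap γ (hS hγ) γ' hγ'
    rwa [show γ' - γ - c = γ' - (c - -γ) by ring] at hlt

end Spectrum

lemma SeparatedBy.quarter_lt_abs_sub_sub_half {η : ℝ} {Γ : Set ℝ} (h : SeparatedBy η Γ) {γ γ' : ℝ}
    (hγ : γ ∈ Γ) (hγ' : γ' ∈ Γ) : η / 4 < |γ' - γ - η / 2| := by
  have hη := h.pos
  rcases eq_or_ne γ' γ with rfl | hne
  · rw [sub_self, zero_sub, abs_neg, abs_of_pos (half_pos hη)]
    linarith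
  · have hsep := h.le_abs_sub γ' hγ' γ hγ hne
    have habs := abs_sub_abs_le_abs_sub (γ' - γ) (η / 2)
    rw [abs_of_pos (half_pos hη)] at habs
    linarith

/-- The coefficient of `φ⁽ⁱ⁾ (x) ψ⁽ᵏ⁾ (x + y)` when the series with coefficients `p` is evaluated at
the product of `φ` with its own correlation with `ψ`. -/
def pairCoeff (K : ℕ) (p : ℕ → ℝ → ℂ) (k i : ℕ) (x y : ℝ) : ℂ :=
  ∑ n ∈ Finset.range (K + 1), ∑ n' ∈ Finset.range (K + 1),
    if n + n' = k + i then n.choose i * (p n x * p n' y) else 0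

section PairCoeff

variable {K : ℕ} {p : ℕ → ℝ → ℂ} {Λ : Set ℝ}

lemma SlowlyGrowingOn.pairCoeff_eq_zero (hp : SlowlyGrowingOn p Λ) {x y : ℝ}
    (hxy : ¬(x ∈ Λ ∧ y ∈ Λ)) (k i : ℕ) : pairCoeff K p k i x y = 0 := by
  rcases not_and_or.1 hxy with hx | hy
  · simp [pairCoeff, hp.eq_zero _ hx]
  · simp [pairCoeff, hp.eq_zero _ hy]

lemma norm_pairCoeff_le {C : ℝ} {A : ℕ} (hC : 0 ≤ C) (hp : ∀ n x, ‖p n x‖ ≤ C * (1 + |x|) ^ A)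
    (k i : ℕ) (x y : ℝ) :
    ‖pairCoeff K p k i x y‖ ≤
      (K + 1) ^ 2 * 2 ^ K * C ^ 2 * ((1 + |x|) ^ A * (1 + |y|) ^ A) := by
  set B := 2 ^ K * (C * (1 + |x|) ^ A * (C * (1 + |y|) ^ A)) with hB
  have hterm : ∀ n ∈ Finset.range (K + 1), ∀ n' ∈ Finset.range (K + 1),
      ‖if n + n' = k + i then (n.choose i : ℂ) * (p n x * p n' y) else 0‖ ≤ B := by
    intro n hn n' _
    split_ifs
    · have hchoose : (n.choose i : ℝ) ≤ 2 ^ K := by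
        exact_mod_cast (n.choose_le_two_pow i).trans
          (Nat.pow_le_pow_right two_pos (Nat.le_of_lt_succ (Finset.mem_range.1 hn)))
      rw [norm_mul, norm_mul, Complex.norm_natCast, hB]
      gcongr
      exacts [hp n x, hp n' y]
    · rw [norm_zero]
      positivity
  calc ‖pairCoeff K p k i x y‖
      ≤ ∑ _n ∈ Finset.range (K + 1), ∑ _n' ∈ Finset.range (K + 1), B :=
        norm_sum_le_of_le _ fun n hn => norm_sum_le_of_le _ (hterm n hn)
    _ = (K + 1) ^ 2 * 2 ^ K * C ^ 2 * ((1 + |x|) ^ A * (1 + |y|) ^ A) := by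
        rw [Finset.sum_const, Finset.sum_const, Finset.card_range, nsmul_eq_mul, nsmul_eq_mul, hB]
        push_cast
        ring

lemma sum_pairCoeff_mul (K : ℕ) (p : ℕ → ℝ → ℂ) (x y : ℝ) (u v : ℕ → ℂ) :
    ∑ k ∈ Finset.range (2 * K + 1),
        (∑ i ∈ Finset.range (K + 1), pairCoeff K p k i x y * u i) * v k =
      ∑ n ∈ Finset.range (K + 1), p n x * ∑ i ∈ Finset.range (n + 1), n.choose i * u i *
        ∑ n' ∈ Finset.range (K + 1), p n' y * v (n - i + n') := by
  have hinner : ∀ n ∈ Finset.range (K + 1), ∀ i ∈ Finset.range (K + 1),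
      ∀ n' ∈ Finset.range (K + 1), ∑ k ∈ Finset.range (2 * K + 1),
        (if n + n' = k + i then (n.choose i : ℂ) * (p n x * p n' y) else 0) * u i * v k =
      p n x * (n.choose i * u i * (p n' y * v (n - i + n'))) := by
    intro n hn i _ n' hn'
    simp only [Finset.mem_range] at hn hn'
    rcases lt_or_ge n i with hni | hin
    · simp [Nat.choose_eq_zero_of_lt hni]
    · rw [Finset.sum_eq_single_of_mem (n - i + n') (Finset.mem_range.2 (by lia)) fun k _ hk => by
        rw [if_neg (by lia), zero_mul, zero_mul], if_pos (by lia)]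
      ring
  have hrange : ∀ n ∈ Finset.range (K + 1), ∀ g : ℕ → ℂ,
      ∑ i ∈ Finset.range (n + 1), n.choose i * u i * g i =
        ∑ i ∈ Finset.range (K + 1), n.choose i * u i * g i := fun n hn g =>
    Finset.sum_subset (Finset.range_mono (Finset.mem_range.1 hn)) fun i _ hi => by
      rw [Nat.choose_eq_zero_of_lt (by simpa using hi), Nat.cast_zero, zero_mul, zero_mul]
  calc _ = ∑ k ∈ Finset.range (2 * K + 1), ∑ i ∈ Finset.range (K + 1),
        ∑ n ∈ Finset.range (K + 1), ∑ n' ∈ Finset.range (K + 1),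
          (if n + n' = k + i then (n.choose i : ℂ) * (p n x * p n' y) else 0) * u i * v k := by
        simp only [pairCoeff, Finset.sum_mul]
    _ = ∑ i ∈ Finset.range (K + 1), ∑ n ∈ Finset.range (K + 1), ∑ n' ∈ Finset.range (K + 1),
        ∑ k ∈ Finset.range (2 * K + 1),
          (if n + n' = k + i then (n.choose i : ℂ) * (p n x * p n' y) else 0) * u i * v k := by
        rw [Finset.sum_comm]
        refine Finset.sum_congr rfl fun i _ => ?_
        rw [Finset.sum_comm]
        exact Finset.sum_congr rfl fun n _ => Finset.sum_comm
    _ = ∑ n ∈ Finset.range (K + 1), ∑ i ∈ Finset.range (K + 1), ∑ n' ∈ Finset.range (K + 1),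
        p n x * (n.choose i * u i * (p n' y * v (n - i + n'))) := by
        rw [Finset.sum_comm]
        exact Finset.sum_congr rfl fun n hn => Finset.sum_congr rfl fun i hi =>
          Finset.sum_congr rfl fun n' hn' => hinner n hn i hi n' hn'
    _ = _ := by
        refine Finset.sum_congr rfl fun n hn => ?_
        rw [hrange n hn, Finset.mul_sum]
        exact Finset.sum_congr rfl fun i _ => by rw [Finset.mul_sum, Finset.mul_sum]

end PairCoeff

section SpectralGap

variable {f : TemperedDistR} {K M : ℕ} {p q : ℕ → ℝ → ℂ} {Λ Γ : Set ℝ} {η η' c r : ℝ}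

lemma exists_norm_pairCoeff_jetPairing_le (hp : SlowlyGrowingOn p Λ) (φ : 𝓢(ℝ, ℂ)) :
    ∃ D ≥ 0, ∃ B, ∀ k x y, ‖jetPairing K (fun i _ => pairCoeff K p k i x y) φ x‖ ≤
      D * (Λ.indicator (fun x => ((1 + |x|) ^ 2)⁻¹) x *
        Λ.indicator (fun x => ((1 + |x|) ^ 2)⁻¹) y) * (1 + |x + y|) ^ B := by
  obtain ⟨C, hC, A, hgrowth⟩ := hp.growth
  obtain ⟨N, hN, hdecay⟩ := exists_iteratedDeriv_decay φ K (2 * A + 2 + 2)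
  set D := ((K : ℝ) + 1) ^ 2 * 2 ^ K * C ^ 2
  refine ⟨(K + 1) * (D * N), by positivity, A + 2, fun k x y => ?_⟩
  by_cases hxy : x ∈ Λ ∧ y ∈ Λ
  · rw [indicator_of_mem hxy.1, indicator_of_mem hxy.2]
    have hpeetre : 1 + |y| ≤ (1 + |x + y|) * (1 + |x|) := by
      simpa [add_comm y x] using one_add_abs_le_mul y (-x)
    refine (norm_jetPairing_le (C := D * ((1 + |x + y|) ^ (A + 2) * ((1 + |y|) ^ 2)⁻¹))
      (A := 2 * A + 2) (fun i => ?_) fun n hn => hdecay n hn x).trans_eq (by ring)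
    calc ‖pairCoeff K p k i x y‖ ≤ D * ((1 + |x|) ^ A * (1 + |y|) ^ A) :=
          norm_pairCoeff_le hC hgrowth k i x y
      _ = D * ((1 + |x|) ^ A * ((1 + |y|) ^ (A + 2) * ((1 + |y|) ^ 2)⁻¹)) := by
          rw [pow_add (1 + |y|) A 2, mul_inv_cancel_right₀ (by positivity)]
      _ ≤ D * ((1 + |x|) ^ A * (((1 + |x + y|) * (1 + |x|)) ^ (A + 2) * ((1 + |y|) ^ 2)⁻¹)) := by
          gcongr
      _ = D * ((1 + |x + y|) ^ (A + 2) * ((1 + |y|) ^ 2)⁻¹) * (1 + |x|) ^ (2 * A + 2) := by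
          rw [mul_pow]
          ring
  · rw [jetPairing_eq_zero (p := fun i _ => pairCoeff K p k i x y)
      (fun i => hp.pairCoeff_eq_zero hxy k i), norm_zero]
    have hw : ∀ x, 0 ≤ Λ.indicator (fun x : ℝ => ((1 + |x|) ^ 2)⁻¹) x :=
      indicator_nonneg fun _ _ => by positivity
    exact mul_nonneg (mul_nonneg (by positivity) (mul_nonneg (hw x) (hw y))) (by positivity)

lemma hasSum_jetPairing_mul_correlation (hs : SeparatedBy η Λ) (h : IsDeltaSeries f K p Λ)
    {φ ψ Ψ : 𝓢(ℝ, ℂ)} (hΨ : ∀ x, Ψ x = φ x * correlation f ψ x) (x : ℝ) :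
    HasSum (fun y => ∑ k ∈ Finset.range (2 * K + 1),
        jetPairing K (fun i _ => pairCoeff K p k i x y) φ x * iteratedDeriv k ψ (x + y))
      (jetPairing K p Ψ x) := by
  have hleibniz : ∀ n, iteratedDeriv n Ψ x = ∑ i ∈ Finset.range (n + 1),
      n.choose i * iteratedDeriv i φ x * correlation f (schwartzIteratedDeriv (n - i) ψ) x :=
    fun n => by
      rw [funext hΨ, iteratedDeriv_fun_mul (φ.smooth n).contDiffAt
        (contDiff_correlation hs h ψ n).contDiffAt]
      simp only [iteratedDeriv_correlation hs h]
  simp only [jetPairing, sum_pairCoeff_mul, hleibniz]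
  refine hasSum_sum fun n _ => (hasSum_sum fun i _ => ?_).mul_left _
  simpa only [iteratedDeriv_schwartzIteratedDeriv, add_comm] using
    (h.hasSum_correlation (schwartzIteratedDeriv (n - i) ψ) x).mul_left
      (n.choose i * iteratedDeriv i φ x)

lemma hasSum_pairCoeff_eq_zero (hs : SeparatedBy η Λ) (h : IsDeltaSeries f K p Λ)
    (hs' : SeparatedBy η' Γ) (h' : IsDeltaSeries (fourierTDR f) M q Γ)
    (hgap : ∀ γ ∈ Γ, ∀ γ' ∈ Γ, r < |γ' - γ - c|) {φ : 𝓢(ℝ, ℂ)} (hφ : BandLimited c r φ) :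
    ∀ k < 2 * K + 1, ∀ s,
      HasSum (fun x => jetPairing K (fun i _ => pairCoeff K p k i x (s - x)) φ x) 0 := by
  obtain ⟨D, hD, B, hbound⟩ := exists_norm_pairCoeff_jetPairing_le (K := K) h.toSlowlyGrowingOn φ
  refine hasSum_antidiagonal_eq_zero (indicator_nonneg fun _ _ => by positivity) (fun x => ?_)
    hs.summable_indicator hD hbound fun ψ R hψ => ?_
  · refine indicator_apply_le' (fun _ => ?_) fun _ => zero_le_one
    exact inv_le_one_of_one_le₀ (one_le_pow₀ (le_add_of_nonneg_right (abs_nonneg x)))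
  · obtain ⟨Ψ, hΨ, hfΨ⟩ := annihilatesMul_correlation hs' h' hgap hψ φ hφ
    rw [← hfΨ, ← (h.hasSum Ψ).tsum_eq]
    exact tsum_congr fun x => (hasSum_jetPairing_mul_correlation hs h hΨ x).tsum_eq

lemma annihilatesBand_pairCoeff (hs : SeparatedBy η Λ) (h : IsDeltaSeries f K p Λ)
    (hs' : SeparatedBy η' Γ) (h' : IsDeltaSeries (fourierTDR f) M q Γ)
    (hgap : ∀ γ ∈ Γ, ∀ γ' ∈ Γ, r < |γ' - γ - c|) {k : ℕ} (hk : k < 2 * K + 1) (s : ℝ) :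
    AnnihilatesBand K (fun i x => pairCoeff K p k i x (s - x)) {x | x ∈ Λ ∧ s - x ∈ Λ} c r where
  supp n x hx := by
    contrapose! hx
    exact h.pairCoeff_eq_zero hx k n
  growth := by
    obtain ⟨C, hC, A, hgrowth⟩ := h.growth
    refine ⟨(K + 1) ^ 2 * 2 ^ K * C ^ 2 * (1 + |s|) ^ A, by positivity, 2 * A, fun n x => ?_⟩
    have hpeetre : 1 + |s - x| ≤ (1 + |s|) * (1 + |x|) := by
      simpa using one_add_abs_le_mul (s - x) (-x)
    calc ‖pairCoeff K p k n x (s - x)‖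
        ≤ (K + 1) ^ 2 * 2 ^ K * C ^ 2 * ((1 + |x|) ^ A * (1 + |s - x|) ^ A) :=
          norm_pairCoeff_le hC hgrowth k n x (s - x)
      _ ≤ (K + 1) ^ 2 * 2 ^ K * C ^ 2 * ((1 + |x|) ^ A * ((1 + |s|) * (1 + |x|)) ^ A) := by gcongr
      _ = (K + 1) ^ 2 * 2 ^ K * C ^ 2 * (1 + |s|) ^ A * (1 + |x|) ^ (2 * A) := by
          rw [mul_pow]
          ring
  hasSum φ hφ := hasSum_pairCoeff_eq_zero hs h hs' h' hgap hφ k hk s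

end SpectralGap

/-- The points where some coefficient of the family `p` does not vanish. -/
def jetSupport (p : ℕ → ℝ → ℂ) : Set ℝ :=
  {x | ∃ n, p n x ≠ 0}

lemma eq_zero_of_notMem_jetSupport {p : ℕ → ℝ → ℂ} {x : ℝ} (hx : x ∉ jetSupport p) (n : ℕ) :
    p n x = 0 :=
  not_not.1 fun h => hx ⟨n, h⟩

section SumSet

variable {f : TemperedDistR} {K M : ℕ} {p q : ℕ → ℝ → ℂ} {Λ : Set ℝ} {η η' : ℝ}

lemma SlowlyGrowingOn.jetSupport_subset (hp : SlowlyGrowingOn p Λ) : jetSupport p ⊆ Λ :=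
  fun x ⟨n, hn⟩ => hp.supp n x hn

lemma IsDeltaSeries.isDeltaSeries_jetSupport (h : IsDeltaSeries f K p Λ) :
    IsDeltaSeries f K p (jetSupport p) where
  supp n _ hn := ⟨n, hn⟩
  growth := h.growth
  top := h.top
  hasSum := h.hasSum

lemma IsDeltaSeries.exists_top_coeff (h : IsDeltaSeries f K p Λ) {x : ℝ} (hx : x ∈ jetSupport p) :
    ∃ n ≤ K, p n x ≠ 0 ∧ ∀ m, n < m → p m x = 0 := by
  obtain ⟨n, hn⟩ := hx
  have hnK : n ≤ K := not_lt.1 fun hlt => hn (h.top n x hlt)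
  obtain ⟨m, hm, hne, hzero⟩ := exists_top_degree (a := fun n => p n x) ⟨n, hnK, hn⟩
  exact ⟨m, hm, hne, fun l hl => (le_or_gt l K).elim (hzero l hl) (h.top l x)⟩

lemma pairCoeff_top {n m : ℕ} {x y : ℝ} (hn : n ≤ K) (hm : m ≤ K)
    (hx : ∀ l, n < l → p l x = 0) (hy : ∀ l, m < l → p l y = 0) :
    pairCoeff K p (n + m) 0 x y = p n x * p m y := by
  rw [pairCoeff, Finset.sum_eq_single_of_mem n (Finset.mem_range_succ_iff.2 hn) fun l _ hl => ?_,
    Finset.sum_eq_single_of_mem m (Finset.mem_range_succ_iff.2 hm) fun l _ hl => if_neg (by lia)]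
  · simp
  · refine Finset.sum_eq_zero fun l' _ => ?_
    split_ifs with heq
    · rcases lt_or_gt_of_ne hl with hlt | hlt
      · rw [hy l' (by lia), mul_zero, mul_zero]
      · rw [hx l hlt, zero_mul, mul_zero]
    · rfl

lemma exists_density_inter_sub (hs : SeparatedBy η (jetSupport p))
    (h : IsDeltaSeries f K p (jetSupport p)) (hs' : SeparatedBy η' (jetSupport q))
    (h' : IsDeltaSeries (fourierTDR f) M q (jetSupport q)) :
    ∃ κ > 0, ∀ s ∈ jetSupport p + jetSupport p, ∀ᶠ T in atTop,
      κ * T < ({z | z ∈ jetSupport p ∧ s - z ∈ jetSupport p} ∩ Icc (-T) T).ncard := by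
  obtain ⟨κ, hκ, hdensity⟩ :=
    exists_density_of_annihilatesBand K hs.pos (div_pos hs'.pos four_pos)
  refine ⟨κ, hκ, ?_⟩
  rintro _ ⟨x, hx, y, hy, rfl⟩
  obtain ⟨n, hn, hnx, hxtop⟩ := h.exists_top_coeff hx
  obtain ⟨m, hm, hmy, hytop⟩ := h.exists_top_coeff hy
  refine hdensity (hs.mono fun z hz => hz.1) (annihilatesBand_pairCoeff hs h hs' h'
    (fun γ hγ γ' hγ' => hs'.quarter_lt_abs_sub_sub_half hγ hγ') (k := n + m) (by lia) (x + y))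
    ⟨x, 0, K.zero_le, ?_⟩
  rw [add_sub_cancel_left, pairCoeff_top hn hm hxtop hytop]
  exact mul_ne_zero hnx hmy

end SumSet

section DoubleCounting

variable {Λ : Set ℝ} {η κ R T : ℝ} {S : Finset ℝ}

lemma SeparatedBy.card_filter_sub_mem_le (hs : SeparatedBy η Λ) (hR : 0 ≤ R)
    (hS : ↑S ⊆ Icc (-R) R) (z : ℝ) [DecidablePred (· ∈ Λ)] :
    ((S.filter fun s => s - z ∈ Λ).card : ℝ) ≤ 2 * R / η + 1 := by
  have hle : (S.filter fun s => s - z ∈ Λ).card ≤ (Λ ∩ Icc (-R - z) (R - z)).ncard := by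
    rw [← ncard_coe_finset]
    refine ncard_le_ncard_of_injOn (fun s => s - z) (fun s hsz => ?_)
      (sub_left_injective.injOn) (hs.finite_inter_Icc _ _)
    obtain ⟨hsS, hsΛ⟩ := Finset.mem_filter.1 (Finset.mem_coe.1 hsz)
    obtain ⟨hlo, hhi⟩ := hS hsS
    exact ⟨hsΛ, by linarith, by linarith⟩
  calc ((S.filter fun s => s - z ∈ Λ).card : ℝ) ≤ (Λ ∩ Icc (-R - z) (R - z)).ncard := by
        exact_mod_cast hle
    _ ≤ (R - z - (-R - z)) / η + 1 := hs.ncard_inter_Icc_le (by linarith)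
    _ = 2 * R / η + 1 := by ring

lemma SeparatedBy.card_mul_le (hs : SeparatedBy η Λ) (hR : 0 ≤ R) (hT : 0 ≤ T)
    (hS : ↑S ⊆ Icc (-R) R)
    (h : ∀ s ∈ S, κ * T ≤ ({z | z ∈ Λ ∧ s - z ∈ Λ} ∩ Icc (-T) T).ncard) :
    S.card * (κ * T) ≤ (2 * T / η + 1) * (2 * R / η + 1) := by
  classical
  have hη := hs.pos
  have hfin := hs.finite_inter_Icc (-T) T
  set F := hfin.toFinset
  have hcard : ∀ s, ({z | z ∈ Λ ∧ s - z ∈ Λ} ∩ Icc (-T) T).ncard =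
      (F.filter fun z => s - z ∈ Λ).card := by
    intro s
    rw [← ncard_coe_finset]
    congr 1
    ext z
    simp only [F, mem_inter_iff, Set.mem_ofPred_eq, Finset.coe_filter, Finite.mem_toFinset]
    tauto
  have hF : (F.card : ℝ) ≤ 2 * T / η + 1 := by
    rw [← ncard_eq_toFinset_card _ hfin]
    exact (hs.ncard_inter_Icc_le (by linarith)).trans_eq (by ring)
  calc S.card * (κ * T) ≤ ∑ s ∈ S, ((F.filter fun z => s - z ∈ Λ).card : ℝ) := by
        rw [← nsmul_eq_mul]
        exact Finset.card_nsmul_le_sum _ _ _ fun s hs => (h s hs).trans_eq (by rw [hcard])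
    _ = ∑ z ∈ F, ((S.filter fun s => s - z ∈ Λ).card : ℝ) := by
        exact_mod_cast Finset.sum_card_bipartiteAbove_eq_sum_card_bipartiteBelow
          fun s z => s - z ∈ Λ
    _ ≤ F.card • (2 * R / η + 1) :=
        Finset.sum_le_card_nsmul _ _ _ fun z _ => hs.card_filter_sub_mem_le hR hS z
    _ ≤ (2 * T / η + 1) * (2 * R / η + 1) := by
        rw [nsmul_eq_mul]
        gcongr

lemma SeparatedBy.finite_of_density (hs : SeparatedBy η Λ) (hκ : 0 < κ) (hR : 0 ≤ R) {S : Set ℝ}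
    (hS : S ⊆ Icc (-R) R) (h : ∀ s ∈ S, ∀ᶠ T in atTop,
      κ * T < ({z | z ∈ Λ ∧ s - z ∈ Λ} ∩ Icc (-T) T).ncard) : S.Finite := by
  have hη := hs.pos
  by_contra hinf
  obtain ⟨m, hm⟩ := exists_nat_gt (3 * (2 * R / η + 1) / (κ * η))
  obtain ⟨S', hS', rfl⟩ := Set.Infinite.exists_subset_card_eq hinf m
  obtain ⟨T, hT, hηT⟩ := (((Finset.eventually_all S').2 fun s hs => h s (hS' hs)).and
    (eventually_ge_atTop η)).exists
  have hTpos : 0 < T := hη.trans_le hηT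
  have hcount := hs.card_mul_le hR hTpos.le (hS'.trans hS) fun s hs => (hT s hs).le
  have hone : 2 * T / η + 1 ≤ 3 * T / η := by
    rw [div_add_one hη.ne']
    gcongr
    linarith
  rw [div_lt_iff₀ (by positivity)] at hm
  refine lt_irrefl (S'.card * (κ * T)) (hcount.trans_lt ?_)
  calc (2 * T / η + 1) * (2 * R / η + 1) ≤ 3 * T / η * (2 * R / η + 1) := by gcongr
    _ = T / η * (3 * (2 * R / η + 1)) := by ring
    _ < T / η * (S'.card * (κ * η)) := by gcongr
    _ = S'.card * (κ * T) := by field_simp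

end DoubleCounting

section Window

variable {ι : Type*} [Fintype ι] {f : TemperedDistR} {K M : ℕ} {p q : ℕ → ℝ → ℂ} {Λ Γ : Set ℝ}
  {η η' : ℝ}

lemma finite_jetSupport_add_inter_Icc (hs : SeparatedBy η (jetSupport p))
    (h : IsDeltaSeries f K p (jetSupport p)) (hs' : SeparatedBy η' (jetSupport q))
    (h' : IsDeltaSeries (fourierTDR f) M q (jetSupport q)) {R : ℝ} (hR : 0 ≤ R) :
    ((jetSupport p + jetSupport p) ∩ Icc (-R) R).Finite := by
  obtain ⟨κ, hκ, hdensity⟩ := exists_density_inter_sub hs h hs' h'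
  exact hs.finite_of_density hκ hR inter_subset_right fun s hs => hdensity s hs.1

/-! ### Linear relations between translates -/

/-- The coefficients of the combination `∑ i, c i • τ (y i)` of translates of a series with
coefficients `p`. -/
def translateSum (c : ι → ℂ) (y : ι → ℝ) (p : ℕ → ℝ → ℂ) (n : ℕ) (z : ℝ) : ℂ :=
  ∑ i, c i * p n (z - y i)

lemma IsDeltaSeries.hasSum_translateSum (h : IsDeltaSeries f K p Λ) (c : ι → ℂ) (y : ι → ℝ)
    (φ : 𝓢(ℝ, ℂ)) :
    HasSum (jetPairing K (translateSum c y p) φ) (∑ i, c i * f (affineComp 1 (-y i) φ)) := by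
  have hterm : ∀ i, HasSum (fun z => c i * ∑ n ∈ Finset.range (K + 1),
      p n (z - y i) * iteratedDeriv n φ z) (c i * f (affineComp 1 (-y i) φ)) := fun i => by
    have hsum := h.hasSum (affineComp 1 (-y i) φ)
    rw [← (Equiv.subRight (y i)).hasSum_iff] at hsum
    simpa only [Function.comp_def, Equiv.subRight_apply, jetPairing, iteratedDeriv_affineComp_one,
      sub_neg_eq_add, sub_add_cancel] using hsum.mul_left (c i)
  convert hasSum_sum fun i _ => hterm i using 1
  ext z
  simp only [jetPairing, translateSum, Finset.mul_sum, Finset.sum_mul, mul_assoc]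
  exact Finset.sum_comm

lemma coeff_eq_zero_of_forall_hasSum_zero {b : ℕ → ℝ → ℂ}
    (hb : ∀ z, ∀ᶠ x in 𝓝[≠] z, ∀ n, b n x = 0)
    (h : ∀ φ : 𝓢(ℝ, ℂ), HasSum (jetPairing K b φ) 0) {n : ℕ} (hn : n ≤ K) (z : ℝ) :
    b n z = 0 := by
  obtain ⟨r, hr, hzero⟩ := Metric.eventually_nhds_iff.1 (eventually_nhdsWithin_iff.1 (hb z))
  obtain ⟨e, hvanish, hjet⟩ := exists_schwartz_with_jet (half_pos hr) n
  have hsingle : HasSum (jetPairing K b (affineComp 1 z e)) (b n z) := by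
    convert hasSum_single (f := jetPairing K b (affineComp 1 z e)) z fun x hx => ?_ using 1
    · simp [jetPairing, iteratedDeriv_affineComp_one, hjet, Nat.lt_succ_of_le hn]
    · refine Finset.sum_eq_zero fun l _ => ?_
      rcases lt_or_ge (dist x z) r with hxz | hxz
      · rw [hzero hxz hx, zero_mul]
      · have hfar : ∀ᶠ t in 𝓝 (x - z), r / 2 < |t| :=
          continuous_abs.continuousAt.eventually (lt_mem_nhds ((half_lt_self hr).trans_le hxz))
        rw [iteratedDeriv_affineComp_one,
          iteratedDeriv_eq_zero_of_eventuallyEq (hfar.mono fun t ht => hvanish t ht.le), mul_zero]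
  exact hsingle.unique (h _)

lemma SeparatedBy.eventually_notMem (hs : SeparatedBy η Λ) (z : ℝ) : ∀ᶠ x in 𝓝[≠] z, x ∉ Λ := by
  rw [eventually_nhdsWithin_iff]
  have hfin : ((Λ ∩ Icc (z - 1) (z + 1)) \ {z}).Finite := (hs.finite_inter_Icc _ _).sdiff
  filter_upwards [hfin.isClosed.isOpen_compl.mem_nhds fun hz => hz.2 rfl,
    Icc_mem_nhds (sub_one_lt z) (lt_add_one z)] with x hx hxz hne hxΛ
  exact hx ⟨⟨hxΛ, hxz⟩, hne⟩

lemma translateSum_eq_zero_of_forall_apply_eq_zero (hs : SeparatedBy η Λ)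
    (h : IsDeltaSeries f K p Λ) {c : ι → ℂ} {y : ι → ℝ}
    (hf : ∀ φ, ∑ i, c i * f (affineComp 1 (-y i) φ) = 0) (n : ℕ) (z : ℝ) :
    translateSum c y p n z = 0 := by
  rcases le_or_gt n K with hn | hn
  · refine coeff_eq_zero_of_forall_hasSum_zero (fun z => ?_)
      (fun φ => hf φ ▸ h.hasSum_translateSum c y φ) hn z
    have hout : ∀ i, ∀ᶠ x in 𝓝[≠] z, x - y i ∉ Λ := fun i => by
      have hmap := hs.eventually_notMem (z - y i)
      rwa [← map_subRight_nhdsNE, eventually_map] at hmap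
    filter_upwards [eventually_all.2 hout] with x hx n
    exact Finset.sum_eq_zero fun i _ => by rw [h.eq_zero n (hx i), mul_zero]
  · exact Finset.sum_eq_zero fun i _ => by rw [h.top n _ hn, mul_zero]

/-- If `q` are the coefficients of the Fourier transform of `f`, these are the ones of the Fourier
transform of `∑ i, c i • τ (y i) f`, as given by the Leibniz rule. -/
def dualCoeff (M : ℕ) (q : ℕ → ℝ → ℂ) (c : ι → ℂ) (y : ι → ℝ) (j : ℕ) (x : ℝ) : ℂ :=
  ∑ m ∈ Finset.range (M + 1), q m x * (m.choose j * ∑ i, c i *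
    ((2 * Real.pi * ((-y i : ℝ) : ℂ) * Complex.I) ^ (m - j) * e2piR x (-y i)))

lemma IsDeltaSeries.hasSum_dualCoeff (h' : IsDeltaSeries (fourierTDR f) M q Γ) (c : ι → ℂ)
    (y : ι → ℝ) (φ : 𝓢(ℝ, ℂ)) :
    HasSum (jetPairing M (dualCoeff M q c y) (𝓕⁻ φ : 𝓢(ℝ, ℂ)))
      (∑ i, c i * f (affineComp 1 (-y i) φ)) := by
  have hterm : ∀ i, HasSum (fun x => c i * jetPairing M q (𝓕⁻ (affineComp 1 (-y i) φ) : 𝓢(ℝ, ℂ)) x)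
      (c i * f (affineComp 1 (-y i) φ)) := fun i => by
    rw [apply_eq_fourierTDR_fourierInv f]
    exact (h'.hasSum _).mul_left _
  convert hasSum_sum fun i _ => hterm i using 1
  ext x
  have hleibniz : ∀ i, ∀ m ∈ Finset.range (M + 1),
      iteratedDeriv m (𝓕⁻ (affineComp 1 (-y i) φ) : 𝓢(ℝ, ℂ)) x = ∑ j ∈ Finset.range (M + 1),
        m.choose j * iteratedDeriv j (𝓕⁻ φ : 𝓢(ℝ, ℂ)) x *
          ((2 * Real.pi * ((-y i : ℝ) : ℂ) * Complex.I) ^ (m - j) * e2piR x (-y i)) := by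
    intro i m hm
    rw [iteratedDeriv_fourierInv_affineComp_one]
    refine Finset.sum_subset (Finset.range_subset_range.2 (Finset.mem_range.1 hm)) fun j _ hj => ?_
    rw [Nat.choose_eq_zero_of_lt (by simpa using hj), Nat.cast_zero, zero_mul, zero_mul]
  simp only [jetPairing]
  rw [Finset.sum_congr rfl fun i _ => congrArg (c i * ·)
    (Finset.sum_congr rfl fun m hm => congrArg (q m x * ·) (hleibniz i m hm))]
  simp only [dualCoeff, Finset.sum_mul, Finset.mul_sum]
  rw [Finset.sum_comm, Finset.sum_comm (s := Finset.univ)]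
  refine Finset.sum_congr rfl fun m _ => ?_
  rw [Finset.sum_comm (s := Finset.univ)]
  refine Finset.sum_congr rfl fun j _ => Finset.sum_congr rfl fun i _ => ?_
  ring

lemma SlowlyGrowingOn.slowlyGrowingOn_dualCoeff (hq : SlowlyGrowingOn q Γ) (M : ℕ) (c : ι → ℂ)
    (y : ι → ℝ) :
    SlowlyGrowingOn (dualCoeff M q c y) Γ := by
  constructor
  · intro j x hx
    by_contra hxΓ
    exact hx (Finset.sum_eq_zero fun m _ => by rw [hq.eq_zero m hxΓ, zero_mul])
  obtain ⟨C, hC, A, hgrowth⟩ := hq.growth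
  let B : ℝ := ∑ m ∈ Finset.range (M + 1), 2 ^ m *
    ∑ i, ‖c i‖ * (1 + ‖2 * Real.pi * ((-y i : ℝ) : ℂ) * Complex.I‖) ^ m
  refine ⟨C * B, by positivity, A, fun j x => ?_⟩
  rw [dualCoeff, mul_right_comm, Finset.mul_sum]
  refine norm_sum_le_of_le _ fun m _ => ?_
  rw [norm_mul, norm_mul, Complex.norm_natCast]
  gcongr
  · exact hgrowth m x
  · exact_mod_cast m.choose_le_two_pow j
  · refine norm_sum_le_of_le _ fun i _ => ?_
    rw [norm_mul, norm_mul, norm_pow, norm_e2piR, mul_one]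
    gcongr
    exact (pow_le_pow_left₀ (norm_nonneg _) (le_add_of_nonneg_left zero_le_one) _).trans
      (pow_le_pow_right₀ (le_add_of_nonneg_right (norm_nonneg _)) (m.sub_le j))

lemma sum_mul_e2piR_eq_zero_of_dualCoeff_eq_zero (h : IsDeltaSeries f M q Γ) {c : ι → ℂ}
    {y : ι → ℝ} {γ : ℝ} (hγ : γ ∈ jetSupport q) (hzero : ∀ j ≤ M, dualCoeff M q c y j γ = 0) :
    ∑ i, c i * e2piR γ (-y i) = 0 := by
  obtain ⟨m, hm, hne, htop⟩ := h.exists_top_coeff hγ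
  have hm0 := hzero m hm
  rw [dualCoeff, Finset.sum_eq_single_of_mem m (Finset.mem_range_succ_iff.2 hm)
    fun l _ hl => ?_] at hm0
  · simpa [hne] using hm0
  · rcases lt_or_gt_of_ne hl with hlt | hlt
    · rw [Nat.choose_eq_zero_of_lt hlt, Nat.cast_zero, zero_mul, mul_zero]
    · rw [htop l hlt, zero_mul]

lemma BandLimited.iteratedDeriv_fourier_eq_zero {φ : 𝓢(ℝ, ℂ)} {R z : ℝ} (hφ : BandLimited 0 R φ)
    (hz : R < |z|) (n : ℕ) : iteratedDeriv n (𝓕 φ : 𝓢(ℝ, ℂ)) z = 0 := by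
  refine iteratedDeriv_eq_zero_of_eventuallyEq ?_ n
  filter_upwards [continuous_abs.continuousAt.eventually (lt_mem_nhds hz)] with t ht
  have hneg : (𝓕 φ : 𝓢(ℝ, ℂ)) t = (𝓕⁻ φ : 𝓢(ℝ, ℂ)) (-t) := by
    rw [fourierInv_coe, fourier_coe, Real.fourierInv_eq_fourier_neg, neg_neg]
  rw [hneg]
  exact hφ _ (by rwa [sub_zero, abs_neg])

lemma exists_window (h : IsDeltaSeries f K p (jetSupport p)) (hs : SeparatedBy η (jetSupport p))
    (h' : IsDeltaSeries (fourierTDR f) M q (jetSupport q))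
    (hs' : SeparatedBy η' (jetSupport q)) :
    ∃ R > 0, ∀ (N : ℕ) (c : Fin N → ℂ) (y : Fin N → ℝ),
      (∀ n z, |z| ≤ R → translateSum c y p n z = 0) →
        (∀ n z, translateSum c y p n z = 0) ∧
          ∀ γ ∈ jetSupport q, ∑ i, c i * e2piR γ (-y i) = 0 := by
  obtain ⟨R, hR, hunique⟩ := exists_radius_forall_annihilatesBand_eq_zero M hs'.pos
  refine ⟨R, hR, fun N c y hwindow => ?_⟩
  have hann : AnnihilatesBand M (dualCoeff M q c y) (jetSupport q) 0 R := by
    refine ⟨h'.toSlowlyGrowingOn.slowlyGrowingOn_dualCoeff M c y, fun φ hφ => ?_⟩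
    have hdual := h'.hasSum_dualCoeff c y (𝓕 φ)
    rw [FourierTransform.fourierInv_fourier_eq] at hdual
    convert hdual using 1
    refine HasSum.unique ?_ (h.hasSum_translateSum c y (𝓕 φ))
    convert hasSum_zero using 1
    ext z
    refine Finset.sum_eq_zero fun n _ => ?_
    rcases le_or_gt |z| R with hz | hz
    · rw [hwindow n z hz, zero_mul]
    · rw [hφ.iteratedDeriv_fourier_eq_zero hz, mul_zero]
  have hzero := hunique hs' le_rfl hann
  refine ⟨translateSum_eq_zero_of_forall_apply_eq_zero hs h fun φ => ?_,
    fun γ hγ => sum_mul_e2piR_eq_zero_of_dualCoeff_eq_zero h' hγ (hzero γ)⟩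
  refine (h'.hasSum_dualCoeff c y φ).unique ?_
  convert hasSum_zero using 1
  ext x
  exact Finset.sum_eq_zero fun j hj => by rw [hzero x j (Finset.mem_range_succ_iff.1 hj), zero_mul]

end Window

/-! ### Almost periods -/

/-- The `ε`-almost periods common to the characters with frequencies in `Γ`. -/
def almostPeriods (Γ : Set ℝ) (ε : ℝ) : Set ℝ :=
  {y | ∀ γ ∈ Γ, ‖e2piR y γ - 1‖ ≤ ε}

section AlmostPeriods

variable {Λ Γ t : Set ℝ} {ε ε' x y : ℝ}

lemma norm_e2piR_sub_sub_one (x y w : ℝ) : ‖e2piR (x - y) w - 1‖ = ‖e2piR x w - e2piR y w‖ := by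
  have hfactor : e2piR x w - e2piR y w = (e2piR (x - y) w - 1) * e2piR y w := by
    rw [sub_mul, ← e2piR_add_left, sub_add_cancel, one_mul]
  rw [hfactor, norm_mul, norm_e2piR, mul_one]

lemma sub_mem_almostPeriods (hx : x ∈ almostPeriods Γ ε) (hy : y ∈ almostPeriods Γ ε') :
    x - y ∈ almostPeriods Γ (ε + ε') := by
  intro γ hγ
  rw [norm_e2piR_sub_sub_one, ← sub_sub_sub_cancel_right _ _ (1 : ℂ)]
  exact norm_sub_le_of_le (hx γ hγ) (hy γ hγ)

lemma neg_mem_almostPeriods (hx : x ∈ almostPeriods Γ ε) : -x ∈ almostPeriods Γ ε := by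
  have hzero : (0 : ℝ) ∈ almostPeriods Γ 0 := fun γ _ => by simp [e2piR_zero_left]
  simpa using sub_mem_almostPeriods hzero hx

lemma add_mem_almostPeriods (hx : x ∈ almostPeriods Γ ε) (hy : y ∈ almostPeriods Γ ε') :
    x + y ∈ almostPeriods Γ (ε + ε') := by
  simpa using sub_mem_almostPeriods hx (neg_mem_almostPeriods hy)

lemma almostPeriods_mono (h : ε ≤ ε') : almostPeriods Γ ε ⊆ almostPeriods Γ ε' :=
  fun _ hx γ hγ => (hx γ hγ).trans h

lemma natCast_mul_mem_almostPeriods (hx : x ∈ almostPeriods Γ ε) (k : ℕ) :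
    k * x ∈ almostPeriods Γ (k * ε) := by
  induction k with
  | zero => intro γ _; simp [e2piR_zero_left]
  | succ k ih =>
    push_cast
    simpa only [add_one_mul] using add_mem_almostPeriods ih hx

lemma eq_zero_of_mem_almostPeriods {L : ℝ} (hΓ : ∀ a, ∃ γ ∈ Γ, |γ - a| ≤ L)
    (hy : y ∈ almostPeriods Γ 1) (hyL : |y| * (8 * L) < 1) : y = 0 := by
  by_contra hne
  obtain ⟨γ, hγ, hγL⟩ := hΓ (1 / (2 * y))
  have hhalf : |y * γ - 1 / 2| < 1 / 8 := by
    have hfactor : y * γ - 1 / 2 = y * (γ - 1 / (2 * y)) := by field_simp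
    rw [hfactor, abs_mul]
    linarith [mul_le_mul_of_nonneg_left hγL (abs_nonneg y)]
  have hcos : Real.cos (2 * Real.pi * (y * γ)) < 0 := by
    rw [abs_lt] at hhalf
    have hpi := Real.pi_pos
    apply Real.cos_neg_of_pi_div_two_lt_of_lt <;> nlinarith
  have hre : (e2piR y γ - 1).re = Real.cos (2 * Real.pi * (y * γ)) - 1 := by
    rw [Complex.sub_re, Complex.one_re, e2piR, Complex.exp_ofReal_mul_I_re]
  have hnorm := (Complex.abs_re_le_norm _).trans (hy γ hγ)
  rw [hre] at hnorm
  linarith [(abs_le.1 hnorm).1]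

lemma exists_separatedBy_almostPeriods {L : ℝ} (hΓ : ∀ a, ∃ γ ∈ Γ, |γ - a| ≤ L) :
    ∃ δ, SeparatedBy δ (almostPeriods Γ (1 / 2)) := by
  have hL : 0 ≤ L := let ⟨_, _, h⟩ := hΓ 0; (abs_nonneg _).trans h
  refine ⟨1 / (8 * (L + 1)), by positivity, fun x hx y hy hxy => ?_⟩
  by_contra! hlt
  have hdiff := almostPeriods_mono (ε' := 1) (by norm_num) (sub_mem_almostPeriods hx hy)
  refine hxy (sub_eq_zero.1 (eq_zero_of_mem_almostPeriods
    (fun a => (hΓ a).imp fun γ hγ => ⟨hγ.1, hγ.2.trans (le_add_of_nonneg_right zero_le_one)⟩)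
    hdiff ?_))
  rwa [← lt_div_iff₀ (by positivity)]

lemma exists_pos_mem_almostPeriods (hΛ : Λ.Infinite) (ht : t.Finite)
    (hcover : Λ ⊆ t + almostPeriods Γ ε) : ∃ x > 0, x ∈ almostPeriods Γ (ε + ε) := by
  choose! g hg τ hτ heq using fun x (hx : x ∈ Λ) => Set.mem_add.1 (hcover hx)
  obtain ⟨a, ha, b, hb, hab, hgab⟩ := hΛ.exists_ne_map_eq_of_mapsTo hg ht
  have hperiod : a - b ∈ almostPeriods Γ (ε + ε) := by
    have hsub := sub_mem_almostPeriods (hτ a ha) (hτ b hb)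
    rwa [← add_sub_add_left_eq_sub _ _ (g a), heq a ha, hgab, heq b hb] at hsub
  rcases lt_or_gt_of_ne hab with hlt | hlt
  · exact ⟨b - a, sub_pos.2 hlt, by simpa using neg_mem_almostPeriods hperiod⟩
  · exact ⟨a - b, sub_pos.2 hlt, hperiod⟩

lemma SeparatedBy.finite_add_inter_Icc {δ : ℝ} {A : Set ℝ} (hA : SeparatedBy δ A) (ht : t.Finite)
    (a b : ℝ) : ((t + A) ∩ Icc a b).Finite := by
  refine (ht.biUnion fun y _ => (hA.finite_inter_Icc (a - y) (b - y)).image (y + ·)).subset ?_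
  rintro _ ⟨⟨y, hy, x, hx, rfl⟩, hlo, hhi⟩
  exact mem_biUnion hy ⟨x, ⟨hx, by linarith, by linarith⟩, rfl⟩

end AlmostPeriods

section TotallyBounded

lemma finiteDimensional_span_of_forall_not_linearIndependent {𝕜 E : Type*} [DivisionRing 𝕜]
    [AddCommGroup E] [Module 𝕜 E] {S : Set E} {D : ℕ}
    (h : ∀ v : Fin D → E, (∀ i, v i ∈ S) → ¬LinearIndependent 𝕜 v) :
    FiniteDimensional 𝕜 (Submodule.span 𝕜 S) := by
  obtain ⟨b, hbS, hspan, hli⟩ := exists_linearIndependent 𝕜 S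
  have hfin : b.Finite := by
    by_contra hinf
    obtain ⟨F, hF, hcard⟩ := Set.Infinite.exists_subset_card_eq hinf D
    let e : Fin D ≃ F := (F.equivFinOfCardEq hcard).symm
    exact h (fun i => e i) (fun i => hbS (hF (e i).2)) <| hli.comp
      (fun i => ⟨e i, hF (e i).2⟩) fun i j hij => e.injective (Subtype.ext (by simpa using hij))
  rw [← hspan]
  exact FiniteDimensional.span_of_finite 𝕜 hfin

lemma totallyBounded_of_finiteDimensional_span (𝕜 : Type*) {E : Type*} [NontriviallyNormedField 𝕜]
    [LocallyCompactSpace 𝕜] [NormedAddCommGroup E] [NormedSpace 𝕜 E] {S : Set E}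
    [FiniteDimensional 𝕜 (Submodule.span 𝕜 S)] (hS : Bornology.IsBounded S) :
    TotallyBounded S := by
  have : ProperSpace (Submodule.span 𝕜 S) := FiniteDimensional.proper 𝕜 _
  let S' : Set (Submodule.span 𝕜 S) := Subtype.val ⁻¹' S
  have himage : Subtype.val '' S' = S := Subset.antisymm (image_preimage_subset _ _)
    fun v hv => ⟨⟨v, Submodule.subset_span hv⟩, hv, rfl⟩
  have hbounded : Bornology.IsBounded S' := by
    obtain ⟨C, hC⟩ := hS.exists_norm_le
    exact isBounded_iff_forall_norm_le.2 ⟨C, fun u hu => hC _ hu⟩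
  rw [← himage]
  exact (hbounded.isCompact_closure.totallyBounded.subset subset_closure).image
    uniformContinuous_subtype_val

/-- The character `γ ↦ e^{-2πiyγ}` restricted to `Γ`. -/
def characterOn (Γ : Set ℝ) (y : ℝ) : BoundedContinuousFunction Γ ℂ :=
  BoundedContinuousFunction.ofNormedAddCommGroup (fun γ : Γ => e2piR γ (-y))
    (by simp only [e2piR]; fun_prop) 1 fun γ => (norm_e2piR _ _).le

lemma exists_finite_subset_add_almostPeriods {Λ Γ : Set ℝ} {D : ℕ}
    (h : ∀ y : Fin D → ℝ, (∀ i, y i ∈ Λ) →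
      ∃ c : Fin D → ℂ, c ≠ 0 ∧ ∀ γ ∈ Γ, ∑ i, c i * e2piR γ (-y i) = 0) {ε : ℝ} (hε : 0 < ε) :
    ∃ t : Set ℝ, t.Finite ∧ Λ ⊆ t + almostPeriods Γ ε := by
  have hdim : FiniteDimensional ℂ (Submodule.span ℂ (characterOn Γ '' Λ)) := by
    refine finiteDimensional_span_of_forall_not_linearIndependent (D := D) fun v hv hli => ?_
    choose y hy hyv using hv
    obtain ⟨c, hc0, hc⟩ := h y hy
    refine hc0 (funext (Fintype.linearIndependent_iff.1 hli c ?_))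
    ext γ
    simpa [← hyv, characterOn] using hc γ γ.2
  have hbounded : Bornology.IsBounded (characterOn Γ '' Λ) := by
    refine isBounded_iff_forall_norm_le.2 ⟨1, ?_⟩
    rintro _ ⟨y, -, rfl⟩
    exact BoundedContinuousFunction.norm_ofNormedAddCommGroup_le _ zero_le_one _
  obtain ⟨t, -, htfin, hcover⟩ := exists_subset_image_finite_and.1
    (Metric.finite_approx_of_totallyBounded
      (totallyBounded_of_finiteDimensional_span ℂ hbounded) ε hε)
  refine ⟨t, htfin, fun x hx => ?_⟩
  obtain ⟨_, ⟨y, hy, rfl⟩, hxy⟩ := mem_iUnion₂.1 (hcover (mem_image_of_mem _ hx))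
  refine ⟨y, hy, x - y, ?_, add_sub_cancel y x⟩
  rw [← neg_sub]
  refine neg_mem_almostPeriods fun γ hγ => ?_
  rw [← neg_sub_neg x y, norm_e2piR_sub_sub_one, e2piR_comm _ γ, e2piR_comm _ γ, ← dist_eq_norm]
  exact (BoundedContinuousFunction.dist_coe_le_dist (⟨γ, hγ⟩ : Γ)).trans (mem_ball.1 hxy).le

end TotallyBounded

section Relation

variable {f : TemperedDistR} {K M : ℕ} {p q : ℕ → ℝ → ℂ} {Λ Γ : Set ℝ} {η η' : ℝ}

lemma exists_translateSum_eq_zero {ι : Type*} [Fintype ι] (htop : ∀ n x, K < n → p n x = 0)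
    {W : Set ℝ} {Z : Finset ℝ} {y : ι → ℝ}
    (hZ : ∀ z ∈ W, ∀ i, z - y i ∈ jetSupport p → z ∈ Z)
    (hcard : (K + 1) * Z.card < Fintype.card ι) :
    ∃ c : ι → ℂ, c ≠ 0 ∧ ∀ n, ∀ z ∈ W, translateSum c y p n z = 0 := by
  let A : Matrix (Fin (K + 1) × Z) ι ℂ := fun nz i => p nz.1 (nz.2 - y i)
  have hker : LinearMap.ker A.mulVecLin ≠ ⊥ :=
    LinearMap.ker_ne_bot_of_finrank_lt (by simpa using hcard)
  obtain ⟨c, hc, hc0⟩ := (Submodule.ne_bot_iff _).1 hker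
  refine ⟨c, hc0, fun n z hz => ?_⟩
  rcases lt_or_ge K n with hn | hn
  · exact Finset.sum_eq_zero fun i _ => by rw [htop n _ hn, mul_zero]
  by_cases hzZ : z ∈ Z
  · have hrow := congrFun (LinearMap.mem_ker.1 hc) (⟨n, Nat.lt_succ_of_le hn⟩, ⟨z, hzZ⟩)
    rw [Matrix.mulVecLin_apply, Pi.zero_apply] at hrow
    rw [← hrow]
    exact Finset.sum_congr rfl fun i _ => mul_comm _ _
  · refine Finset.sum_eq_zero fun i _ => ?_
    rw [eq_zero_of_notMem_jetSupport fun hi => hzZ (hZ z hz i hi), mul_zero]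

lemma IsDeltaSeries.exists_abs_sub_le (hs : SeparatedBy η Λ) (h : IsDeltaSeries f K p Λ)
    (h' : IsDeltaSeries (fourierTDR f) M q Γ) (hne : (jetSupport p).Nonempty) :
    ∃ L, ∀ a, ∃ γ ∈ Γ, |γ - a| ≤ L := by
  obtain ⟨L, -, hunique⟩ := exists_radius_forall_annihilatesBand_eq_zero K hs.pos
  refine ⟨L, fun a => ?_⟩
  by_contra! hgap
  obtain ⟨x, hx⟩ := hne
  obtain ⟨n, hn, hnx, -⟩ := h.exists_top_coeff hx
  refine hnx (hunique hs le_rfl (c := a) ⟨h.toSlowlyGrowingOn, fun φ hφ => ?_⟩ x n hn)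
  rw [← apply_eq_zero_of_bandLimited h' hφ hgap]
  exact h.hasSum φ

lemma infinite_jetSupport (hs : SeparatedBy η (jetSupport p))
    (h : IsDeltaSeries f K p (jetSupport p)) (hs' : SeparatedBy η' (jetSupport q))
    (h' : IsDeltaSeries (fourierTDR f) M q (jetSupport q)) (hne : (jetSupport p).Nonempty) :
    (jetSupport p).Infinite := by
  intro hfin
  obtain ⟨x, hx⟩ := hne
  obtain ⟨κ, hκ, hdensity⟩ := exists_density_inter_sub hs h hs' h'
  obtain ⟨T, hT, hlarge⟩ := ((hdensity _ (Set.add_mem_add hx hx)).and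
    (eventually_ge_atTop ((jetSupport p).ncard / κ))).exists
  rw [div_le_iff₀' hκ] at hlarge
  have hle := ncard_le_ncard (inter_subset_left.trans (sep_subset _ _) :
    {z | z ∈ jetSupport p ∧ x + x - z ∈ jetSupport p} ∩ Icc (-T) T ⊆ jetSupport p) hfin
  have hlt := hlarge.trans_lt hT
  exact absurd (by exact_mod_cast hlt) hle.not_gt

lemma exists_finite_jetSupport_subset_add_almostPeriods (hs : SeparatedBy η (jetSupport p))
    (h : IsDeltaSeries f K p (jetSupport p)) (hs' : SeparatedBy η' (jetSupport q))
    (h' : IsDeltaSeries (fourierTDR f) M q (jetSupport q)) {ε : ℝ} (hε : 0 < ε) :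
    ∃ t : Set ℝ, t.Finite ∧ jetSupport p ⊆ t + almostPeriods (jetSupport q) ε := by
  obtain ⟨R, hR, hwindow⟩ := exists_window h hs h' hs'
  have hfin := finite_jetSupport_add_inter_Icc hs h hs' h' hR.le
  refine exists_finite_subset_add_almostPeriods (D := (K + 1) * hfin.toFinset.card + 1)
    (fun y hy => ?_) hε
  obtain ⟨c, hc0, hc⟩ := exists_translateSum_eq_zero (W := {z | |z| ≤ R}) (y := y) h.top
    (fun z hz i hi => hfin.mem_toFinset.2
      ⟨⟨z - y i, hi, y i, hy i, sub_add_cancel _ _⟩, abs_le.1 hz⟩) (by simp)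
  exact ⟨c, hc0, (hwindow _ c y hc).2⟩

lemma exists_progression_translateSum_eq_zero (hs : SeparatedBy η (jetSupport p))
    (h : IsDeltaSeries f K p (jetSupport p)) (hs' : SeparatedBy η' (jetSupport q))
    (h' : IsDeltaSeries (fourierTDR f) M q (jetSupport q)) (hne : (jetSupport p).Nonempty) :
    ∃ x > 0, ∃ N, ∃ c : Fin N → ℂ, c ≠ 0 ∧
      ∀ n z, translateSum c (fun i => i * x) p n z = 0 := by
  obtain ⟨R, -, hwindow⟩ := exists_window h hs h' hs'
  obtain ⟨L, hL⟩ := h.exists_abs_sub_le hs h' hne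
  obtain ⟨δ, hδ⟩ := exists_separatedBy_almostPeriods hL
  have hcover := fun {ε : ℝ} => exists_finite_jetSupport_subset_add_almostPeriods hs h hs' h'
    (ε := ε)
  obtain ⟨t, htfin, ht⟩ := hcover (ε := 1 / 4) (by norm_num)
  have hZ := hδ.finite_add_inter_Icc htfin (-R) R
  let N := (K + 1) * hZ.toFinset.card + 1
  have hN : (0 : ℝ) < N := by positivity
  obtain ⟨t', htfin', ht'⟩ := hcover (ε := 1 / (8 * N)) (by positivity)
  obtain ⟨x, hx, hperiod⟩ :=
    exists_pos_mem_almostPeriods (infinite_jetSupport hs h hs' h' hne) htfin' ht'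
  have hmul : ∀ i : Fin N, i * x ∈ almostPeriods (jetSupport q) (1 / 4) := fun i => by
    refine almostPeriods_mono ?_ (natCast_mul_mem_almostPeriods hperiod i)
    have hi : ((i : ℕ) : ℝ) ≤ N := by exact_mod_cast i.2.le
    calc (i : ℝ) * (1 / (8 * N) + 1 / (8 * N)) ≤ N * (1 / (8 * N) + 1 / (8 * N)) := by gcongr
      _ = 1 / 4 := by field_simp; norm_num
  have hwin : ∀ z ∈ {z | |z| ≤ R}, ∀ i : Fin N, z - i * x ∈ jetSupport p → z ∈ hZ.toFinset := by
    intro z hz i hi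
    obtain ⟨y, hy, τ, hτ, heq⟩ := ht hi
    refine hZ.mem_toFinset.2 ⟨⟨y, hy, τ + i * x, ?_, by linarith⟩, abs_le.1 hz⟩
    exact almostPeriods_mono (by norm_num) (add_mem_almostPeriods hτ (hmul i))
  obtain ⟨c, hc0, hc⟩ := exists_translateSum_eq_zero h.top hwin (by simp [N])
  exact ⟨x, hx, N, c, hc0, (hwindow N c _ hc).1⟩

end Relation

/-! ### Recurrences with slowly growing solutions -/

section Recurrence

/-- The shift `(u j) ↦ (u (j - 1))` of bilateral sequences. -/
def shift : Module.End ℂ (ℤ → ℂ) where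
  toFun u j := u (j - 1)
  map_add' _ _ := rfl
  map_smul' _ _ := rfl

lemma shift_apply (u : ℤ → ℂ) (j : ℤ) : shift u j = u (j - 1) := rfl

lemma shift_pow_apply (u : ℤ → ℂ) (k : ℕ) (j : ℤ) : (shift ^ k) u j = u (j - k) := by
  induction k generalizing j with
  | zero => simp
  | succ k ih =>
    rw [pow_succ', Module.End.mul_apply, shift_apply, ih]
    push_cast
    rw [sub_right_comm, sub_sub]

/-- The sequence `j ↦ j ^ l * e^{2πijθ}`. -/
def expMonomial (l : ℕ) (θ : ℝ) (j : ℤ) : ℂ :=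
  (j : ℂ) ^ l * e2piR j θ

/-- The bilateral exponential polynomials with unimodular characteristic roots. -/
def exponentialPolynomials : Submodule ℂ (ℤ → ℂ) :=
  Submodule.span ℂ (Set.range fun a : ℕ × ℝ => expMonomial a.1 a.2)

lemma expMonomial_mem (l : ℕ) (θ : ℝ) : expMonomial l θ ∈ exponentialPolynomials :=
  Submodule.subset_span ⟨(l, θ), rfl⟩

lemma shift_expMonomial (l : ℕ) (θ : ℝ) :
    shift (expMonomial l θ) = ∑ i ∈ Finset.range (l + 1),
      ((l.choose i : ℂ) * (-1) ^ (l - i) * e2piR (-1) θ) • expMonomial i θ := by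
  ext j
  have hexp : e2piR ((j - 1 : ℤ) : ℝ) θ = e2piR (-1) θ * e2piR j θ := by
    rw [← e2piR_add_left, Int.cast_sub, Int.cast_one, neg_add_eq_sub]
  rw [shift_apply, expMonomial, hexp, Int.cast_sub, Int.cast_one, sub_eq_add_neg, add_pow,
    Finset.sum_mul, Finset.sum_apply]
  refine Finset.sum_congr rfl fun i _ => ?_
  rw [Pi.smul_apply, smul_eq_mul, expMonomial]
  ring

/-- The bilateral sequences bounded by a polynomial. -/
def polynomialGrowth : Submodule ℂ (ℤ → ℂ) where
  carrier := {u | ∃ C ≥ (0 : ℝ), ∃ A : ℕ, ∀ j : ℤ, ‖u j‖ ≤ C * (1 + |(j : ℝ)|) ^ A}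
  zero_mem' := ⟨0, le_rfl, 0, by simp⟩
  add_mem' := by
    rintro u v ⟨C, hC, A, hu⟩ ⟨C', hC', A', hv⟩
    refine ⟨C + C', by positivity, A + A', fun j => ?_⟩
    have hj : (1 : ℝ) ≤ 1 + |(j : ℝ)| := le_add_of_nonneg_right (abs_nonneg _)
    calc ‖u j + v j‖ ≤ C * (1 + |(j : ℝ)|) ^ A + C' * (1 + |(j : ℝ)|) ^ A' :=
          norm_add_le_of_le (hu j) (hv j)
      _ ≤ C * (1 + |(j : ℝ)|) ^ (A + A') + C' * (1 + |(j : ℝ)|) ^ (A + A') := by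
          gcongr <;> omega
      _ = (C + C') * (1 + |(j : ℝ)|) ^ (A + A') := by ring
  smul_mem' := by
    rintro a u ⟨C, hC, A, hu⟩
    refine ⟨‖a‖ * C, by positivity, A, fun j => ?_⟩
    rw [Pi.smul_apply, norm_smul, mul_assoc]
    gcongr
    exact hu j

lemma exponentialPolynomials_le_polynomialGrowth : exponentialPolynomials ≤ polynomialGrowth := by
  refine Submodule.span_le.2 ?_
  rintro _ ⟨⟨l, θ⟩, rfl⟩
  refine ⟨1, zero_le_one, l, fun j => ?_⟩
  simp only [expMonomial, norm_mul, norm_pow, norm_e2piR, mul_one, one_mul, Complex.norm_intCast]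
  gcongr
  exact le_add_of_nonneg_left zero_le_one

lemma shift_mem_polynomialGrowth {u : ℤ → ℂ} (hu : u ∈ polynomialGrowth) :
    shift u ∈ polynomialGrowth := by
  obtain ⟨C, hC, A, hu⟩ := hu
  refine ⟨C * 2 ^ A, by positivity, A, fun j => (hu _).trans ?_⟩
  rw [mul_assoc, ← mul_pow]
  gcongr
  push_cast
  have := abs_sub (j : ℝ) 1
  rw [abs_one] at this
  linarith [abs_nonneg (j : ℝ)]

/-- The first-order difference operator `shift - r`. -/
def shiftSub (r : ℂ) : Module.End ℂ (ℤ → ℂ) :=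
  shift - r • LinearMap.id

lemma shiftSub_apply (r : ℂ) (u : ℤ → ℂ) : shiftSub r u = shift u - r • u := rfl

lemma shiftSub_expMonomial (r : ℂ) (l : ℕ) (θ : ℝ) :
    shiftSub r (expMonomial l θ) = ∑ i ∈ Finset.range l,
      ((l.choose i : ℂ) * (-1) ^ (l - i) * e2piR (-1) θ) • expMonomial i θ +
        (e2piR (-1) θ - r) • expMonomial l θ := by
  rw [shiftSub_apply, shift_expMonomial, Finset.sum_range_succ, Nat.choose_self, Nat.sub_self,
    pow_zero, Nat.cast_one, one_mul, one_mul, sub_smul, add_sub_assoc]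

/-- Resonance: if `r` is the characteristic root of `expMonomial l θ`, then the leading term cancels
and one has to start from the monomial of degree `l + 1`. -/
lemma expMonomial_mem_map_shiftSub (r : ℂ) (l : ℕ) (θ : ℝ) :
    expMonomial l θ ∈ exponentialPolynomials.map (shiftSub r) := by
  induction l using Nat.strong_induction_on with
  | _ l ih =>
    have hlower : ∀ b : ℕ → ℂ, ∑ i ∈ Finset.range l, b i • expMonomial i θ ∈
        exponentialPolynomials.map (shiftSub r) := fun b =>
      Submodule.sum_mem _ fun i hi => Submodule.smul_mem _ _ (ih i (Finset.mem_range.1 hi))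
    have himage := fun m => Submodule.mem_map_of_mem (f := shiftSub r) (expMonomial_mem m θ)
    by_cases hr : e2piR (-1) θ = r
    · have h := himage (l + 1)
      rw [shiftSub_expMonomial, hr, sub_self, zero_smul, add_zero, Finset.sum_range_succ,
        Submodule.add_mem_iff_right _ (hlower _)] at h
      refine (Submodule.smul_mem_iff _ (mul_ne_zero (mul_ne_zero ?_ ?_) ?_)).1 h
      · exact_mod_cast (Nat.choose_pos l.le_succ).ne'
      · simp
      · exact hr ▸ e2piR_ne_zero _ _
    · have h := himage l
      rw [shiftSub_expMonomial, Submodule.add_mem_iff_right _ (hlower _)] at h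
      exact (Submodule.smul_mem_iff _ (sub_ne_zero.2 hr)).1 h

lemma exponentialPolynomials_le_map_shiftSub (r : ℂ) :
    exponentialPolynomials ≤ exponentialPolynomials.map (shiftSub r) :=
  Submodule.span_le.2 <| by
    rintro _ ⟨⟨l, θ⟩, rfl⟩
    exact expMonomial_mem_map_shiftSub r l θ

lemma le_one_of_forall_pow_le {ρ C : ℝ} {A : ℕ} (h : ∀ m : ℕ, ρ ^ m ≤ C * (1 + (m : ℝ)) ^ A) :
    ρ ≤ 1 := by
  by_contra! hρ
  have hlim := (tendsto_pow_const_div_const_pow_of_one_lt A hρ).comp (tendsto_add_atTop_nat 1)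
    |>.const_mul (C * ρ)
  rw [mul_zero] at hlim
  obtain ⟨m, hm⟩ := (hlim.eventually (gt_mem_nhds one_pos)).exists
  have hpos : 0 < ρ ^ m := by positivity
  have heq : C * ρ * (((m + 1 : ℕ) : ℝ) ^ A / ρ ^ (m + 1)) = C * (1 + (m : ℝ)) ^ A / ρ ^ m := by
    push_cast
    rw [add_comm (m : ℝ) 1, pow_succ]
    field_simp
  rw [Function.comp_apply, heq, div_lt_one hpos] at hm
  exact hm.not_ge (h m)

lemma norm_eq_one_of_zpow_mem_polynomialGrowth {s : ℂ} (hs : s ≠ 0)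
    (h : (fun j : ℤ => s ^ j) ∈ polynomialGrowth) : ‖s‖ = 1 := by
  obtain ⟨C, -, A, h⟩ := h
  refine le_antisymm (le_one_of_forall_pow_le (C := C) (A := A) fun m => ?_) ?_
  · simpa using h m
  · rw [← inv_le_one₀ (norm_pos_iff.2 hs), ← norm_inv]
    exact le_one_of_forall_pow_le (C := C) (A := A) fun m => by simpa using h (-m)

lemma expMonomial_zero_eq_zpow (θ : ℝ) : expMonomial 0 θ = fun j => e2piR 1 θ ^ j := by
  ext j
  rw [expMonomial, pow_zero, one_mul, e2piR, e2piR, ← Complex.exp_int_mul]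
  congr 1
  push_cast
  ring

lemma exists_e2piR_one_eq {s : ℂ} (hs : ‖s‖ = 1) : ∃ θ, e2piR 1 θ = s := by
  obtain ⟨t, rfl⟩ := (Complex.norm_eq_one_iff s).1 hs
  refine ⟨t / (2 * Real.pi), ?_⟩
  rw [e2piR, one_mul, mul_div_cancel₀ _ Real.two_pi_pos.ne']

lemma eq_smul_zpow_of_shiftSub_eq_zero {r : ℂ} (hr : r ≠ 0) {w : ℤ → ℂ} (h : shiftSub r w = 0) :
    w = w 0 • fun j : ℤ => r⁻¹ ^ j := by
  have hstep : ∀ j, w (j - 1) = r * w j := fun j => by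
    simpa only [shiftSub_apply, shift_apply, Pi.sub_apply, Pi.smul_apply, smul_eq_mul,
      Pi.zero_apply, sub_eq_zero] using congrFun h j
  ext j
  induction j using Int.induction_on with
  | zero => simp
  | succ j ih =>
    have hj := hstep (j + 1)
    rw [add_sub_cancel_right, ih, ← inv_mul_eq_iff_eq_mul₀ hr] at hj
    rw [← hj, Pi.smul_apply, Pi.smul_apply, smul_eq_mul, smul_eq_mul,
      zpow_add_one₀ (inv_ne_zero hr)]
    ring
  | pred j ih =>
    rw [hstep, ih, Pi.smul_apply, Pi.smul_apply, smul_eq_mul, smul_eq_mul,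
      zpow_sub_one₀ (inv_ne_zero hr), inv_inv]
    ring

lemma mem_exponentialPolynomials_of_shiftSub_eq_zero {r : ℂ} {w : ℤ → ℂ}
    (hw : w ∈ polynomialGrowth) (h : shiftSub r w = 0) : w ∈ exponentialPolynomials := by
  rcases eq_or_ne r 0 with rfl | hr
  · have hzero : w = 0 := by
      ext j
      simpa [shiftSub_apply, shift_apply] using congrFun h (j + 1)
    exact hzero ▸ Submodule.zero_mem _
  have hgeom := eq_smul_zpow_of_shiftSub_eq_zero hr h
  rcases eq_or_ne (w 0) 0 with h0 | h0
  · rw [hgeom, h0, zero_smul]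
    exact Submodule.zero_mem _
  rw [hgeom, Submodule.smul_mem_iff _ h0] at hw ⊢
  obtain ⟨θ, hθ⟩ := exists_e2piR_one_eq
    (norm_eq_one_of_zpow_mem_polynomialGrowth (inv_ne_zero hr) hw)
  rw [← hθ, ← expMonomial_zero_eq_zpow]
  exact expMonomial_mem 0 θ

lemma mem_exponentialPolynomials_of_shiftSub_mem {r : ℂ} {u : ℤ → ℂ} (hu : u ∈ polynomialGrowth)
    (h : shiftSub r u ∈ exponentialPolynomials) : u ∈ exponentialPolynomials := by
  obtain ⟨v, hv, hvu⟩ := exponentialPolynomials_le_map_shiftSub r h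
  rw [← Submodule.sub_mem_iff_left _ hv]
  refine mem_exponentialPolynomials_of_shiftSub_eq_zero (r := r) (Submodule.sub_mem _ hu
    (exponentialPolynomials_le_polynomialGrowth hv)) ?_
  rw [map_sub, hvu, sub_self]

lemma mem_exponentialPolynomials_of_aeval_prod_eq_zero (s : Multiset ℂ) {u : ℤ → ℂ}
    (hu : u ∈ polynomialGrowth)
    (h : Polynomial.aeval shift (s.map fun r => Polynomial.X - Polynomial.C r).prod u = 0) :
    u ∈ exponentialPolynomials := by
  induction s using Multiset.induction_on generalizing u with
  | empty =>
    rw [Multiset.map_zero, Multiset.prod_zero, map_one, Module.End.one_apply] at h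
    exact h ▸ Submodule.zero_mem _
  | cons r s ih =>
    have hfactor : Polynomial.aeval shift (Polynomial.X - Polynomial.C r) = shiftSub r := by
      rw [map_sub, Polynomial.aeval_X, Polynomial.aeval_C]
      rfl
    rw [Multiset.map_cons, Multiset.prod_cons, mul_comm, map_mul, Module.End.mul_apply,
      hfactor] at h
    exact mem_exponentialPolynomials_of_shiftSub_mem hu <| ih (Submodule.sub_mem _
      (shift_mem_polynomialGrowth hu) (Submodule.smul_mem _ r hu)) h

lemma mem_exponentialPolynomials_of_aeval_eq_zero {P : Polynomial ℂ} (hP : P ≠ 0) {u : ℤ → ℂ}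
    (hu : u ∈ polynomialGrowth) (h : Polynomial.aeval shift P u = 0) :
    u ∈ exponentialPolynomials := by
  refine mem_exponentialPolynomials_of_aeval_prod_eq_zero P.roots hu ?_
  rw [(IsAlgClosed.splits P).eq_prod_roots, map_mul, Polynomial.aeval_C, Module.End.mul_apply] at h
  exact (smul_eq_zero.1 h).resolve_left (Polynomial.leadingCoeff_ne_zero.2 hP)

variable {N : ℕ} {c : Fin N → ℂ} {u : ℤ → ℂ}

lemma mem_exponentialPolynomials_of_recurrence (hc : c ≠ 0) (hu : u ∈ polynomialGrowth)
    (h : ∀ j : ℤ, ∑ i, c i * u (j - (i : ℕ)) = 0) : u ∈ exponentialPolynomials := by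
  let P : Polynomial ℂ := ∑ i : Fin N, Polynomial.monomial (i : ℕ) (c i)
  have hcoeff : ∀ i : Fin N, P.coeff i = c i := fun i => by
    simp [P, Polynomial.finsetSum_coeff, Polynomial.coeff_monomial, Fin.val_inj]
  have hP : P ≠ 0 := fun h0 => hc (funext fun i => by rw [← hcoeff, h0]; simp)
  refine mem_exponentialPolynomials_of_aeval_eq_zero hP hu (funext fun j => ?_)
  rw [Pi.zero_apply, ← h j]
  simp only [P, map_sum, Polynomial.aeval_monomial, LinearMap.sum_apply, Finset.sum_apply]
  refine Finset.sum_congr rfl fun i _ => ?_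
  rw [Module.End.mul_apply, ← shift_pow_apply u]
  rfl

lemma forall_ge_eq_zero_of_recurrence (hc : c ≠ 0) (h : ∀ j : ℤ, ∑ i, c i * u (j - (i : ℕ)) = 0)
    {a : ℤ} (ha : ∀ j, a ≤ j → j < a + N → u j = 0) (j : ℤ) (hj : a ≤ j) : u j = 0 := by
  obtain ⟨k, rfl⟩ := Int.exists_add_of_le hj
  induction k using Nat.strong_induction_on with
  | _ k ih =>
    by_cases hk : k < N
    · exact ha _ hj (by omega)
    obtain ⟨b, hb, hmin⟩ : ∃ b, c b ≠ 0 ∧ ∀ i < b, c i = 0 := by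
      obtain ⟨b, hb, hmin⟩ := WellFounded.has_min (wellFounded_lt (α := Fin N)) {i | c i ≠ 0}
        (Function.ne_iff.1 hc)
      exact ⟨b, hb, fun i hi => not_not.1 fun hci => hmin i hci hi⟩
    have hsum := h (a + k + (b : ℕ))
    rw [Finset.sum_eq_single b, add_sub_cancel_right] at hsum
    · exact (mul_eq_zero.1 hsum).resolve_left hb
    · intro i _ hib
      rcases lt_or_gt_of_ne hib with hlt | hlt
      · rw [hmin i hlt, zero_mul]
      · have hprev := ih (k + b - i) (by omega) (by omega)
        rw [show a + k + (b : ℕ) - (i : ℕ) = a + (k + b - i : ℕ) by omega, hprev, mul_zero]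
    · simp

lemma eq_zero_of_recurrence (hc : c ≠ 0) (h : ∀ j : ℤ, ∑ i, c i * u (j - (i : ℕ)) = 0)
    (h0 : ∀ j : ℤ, 0 ≤ j → j < N → u j = 0) : u = 0 := by
  have hreflected : ∀ j : ℤ, ∑ i : Fin N, c i.rev * u (-(j - (i : ℕ))) = 0 := fun j => by
    rw [← h (N - 1 - j), ← Equiv.sum_comp Fin.revPerm]
    refine Finset.sum_congr rfl fun i _ => ?_
    rw [Fin.revPerm_apply, Fin.rev_rev, Fin.val_rev]
    congr 2
    omega
  have hcrev : (fun i : Fin N => c i.rev) ≠ 0 := fun hzero =>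
    hc (funext fun i => by simpa using congrFun hzero i.rev)
  ext j
  rcases le_or_gt 0 j with hj | hj
  · exact forall_ge_eq_zero_of_recurrence (a := 0) hc h (by simpa using h0) j hj
  · simpa using forall_ge_eq_zero_of_recurrence (u := fun j => u (-j)) (a := 1 - N) hcrev hreflected
      (fun i hi hi' => h0 _ (by omega) (by omega)) (-j) (by omega)

end Recurrence

/-! ### Sums over progressions and lattices -/

section Progressions

variable {x τ : ℝ} {u v : ℤ → ℂ}

/-- The functional `φ ↦ ∑ u j * φ⁽ⁿ⁾(τ + j x)` attached to a sequence of coefficients on the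
progression `τ + ℤ x`. -/
def progressionPairing (x τ : ℝ) (n : ℕ) (u : ℤ → ℂ) (φ : 𝓢(ℝ, ℂ)) : ℂ :=
  ∑' j : ℤ, u j * iteratedDeriv n φ (τ + j * x)

lemma one_add_abs_le_mul_progression (hx : 0 < x) (τ t : ℝ) :
    1 + |t| ≤ (1 + (1 + |τ|) * x⁻¹) * (1 + |τ + t * x|) := by
  have htx : |t| * x ≤ |τ| + |τ + t * x| := by
    have habs := abs_sub (τ + t * x) τ
    rw [add_sub_cancel_left, abs_mul, abs_of_pos hx] at habs
    linarith
  have ht : |t| ≤ (|τ| + |τ + t * x|) * x⁻¹ := (le_mul_inv_iff₀ hx).2 htx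
  nlinarith [mul_nonneg (abs_nonneg τ) (abs_nonneg (τ + t * x)), abs_nonneg τ,
    abs_nonneg (τ + t * x), inv_pos.2 hx,
    mul_nonneg (mul_nonneg (abs_nonneg τ) (abs_nonneg (τ + t * x))) (inv_pos.2 hx).le]

lemma summable_progressionPairing (hx : 0 < x) (τ : ℝ) (n : ℕ) (hu : u ∈ polynomialGrowth)
    (φ : 𝓢(ℝ, ℂ)) : Summable fun j : ℤ => u j * iteratedDeriv n φ (τ + j * x) := by
  obtain ⟨C, hC, A, hu⟩ := hu
  obtain ⟨M, -, hφ⟩ := exists_iteratedDeriv_decay φ n (A + 2)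
  let D := 1 + (1 + |τ|) * x⁻¹
  refine .of_norm_bounded (summable_inv_one_add_abs_int_sq.mul_left (C * D ^ (A + 2) * M))
    fun j => ?_
  rw [← div_eq_mul_inv, le_div_iff₀ (by positivity), norm_mul]
  calc ‖u j‖ * ‖iteratedDeriv n φ (τ + j * x)‖ * (1 + |(j : ℝ)|) ^ 2
      ≤ C * (1 + |(j : ℝ)|) ^ A * ‖iteratedDeriv n φ (τ + j * x)‖ * (1 + |(j : ℝ)|) ^ 2 := by
        gcongr
        exact hu j
    _ = C * ((1 + |(j : ℝ)|) ^ (A + 2) * ‖iteratedDeriv n φ (τ + j * x)‖) := by ring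
    _ ≤ C * ((D * (1 + |τ + j * x|)) ^ (A + 2) * ‖iteratedDeriv n φ (τ + j * x)‖) := by
        gcongr
        exact one_add_abs_le_mul_progression hx τ j
    _ = C * D ^ (A + 2) * ((1 + |τ + j * x|) ^ (A + 2) * ‖iteratedDeriv n φ (τ + j * x)‖) := by
        rw [mul_pow]
        ring
    _ ≤ C * D ^ (A + 2) * M := by
        gcongr
        exact hφ n le_rfl _

lemma progressionPairing_add (hx : 0 < x) (τ : ℝ) (n : ℕ) (hu : u ∈ polynomialGrowth)
    (hv : v ∈ polynomialGrowth) :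
    progressionPairing x τ n (u + v) = progressionPairing x τ n u + progressionPairing x τ n v := by
  ext φ
  simp only [progressionPairing, Pi.add_apply, add_mul]
  exact (summable_progressionPairing hx τ n hu φ).tsum_add (summable_progressionPairing hx τ n hv φ)

lemma progressionPairing_smul (x τ : ℝ) (n : ℕ) (a : ℂ) (u : ℤ → ℂ) :
    progressionPairing x τ n (a • u) = a • progressionPairing x τ n u := by
  ext φ
  simp only [progressionPairing, Pi.smul_apply, smul_eq_mul, mul_assoc, tsum_mul_left]

lemma progressionPairing_zero (x τ : ℝ) (n : ℕ) : progressionPairing x τ n 0 = 0 := by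
  simpa using progressionPairing_smul x τ n 0 0

/-- The distribution `∑ λ ^ l * e^{2πiλw} * δ_{λ+τ}⁽ⁿ⁾`, summed over `λ ∈ αℤ`. -/
def latticeComb (α τ w : ℝ) (l n : ℕ) (φ : 𝓢(ℝ, ℂ)) : ℂ :=
  ∑' lam : {y : ℝ // ∃ m : ℤ, y = α * m}, (((lam : ℝ) ^ l : ℝ) : ℂ) * e2piR (lam : ℝ) w *
    ((-1 : ℂ) ^ n * iteratedDeriv n φ ((lam : ℝ) + τ))

/-- The span of the lattice combs over `αℤ`. -/
def latticeCombs (α : ℝ) : Submodule ℂ (𝓢(ℝ, ℂ) → ℂ) :=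
  Submodule.span ℂ (Set.range fun a : (ℝ × ℝ) × ℕ × ℕ => latticeComb α a.1.1 a.1.2 a.2.1 a.2.2)

lemma latticeComb_eq_tsum_int {α : ℝ} (hα : α ≠ 0) (τ w : ℝ) (l n : ℕ) (φ : 𝓢(ℝ, ℂ)) :
    latticeComb α τ w l n φ = ∑' j : ℤ, (((α * j) ^ l : ℝ) : ℂ) * e2piR (α * j) w *
      ((-1 : ℂ) ^ n * iteratedDeriv n φ (α * j + τ)) := by
  let e : ℤ ≃ {y : ℝ // ∃ m : ℤ, y = α * m} :=
    Equiv.ofBijective (fun j => ⟨α * j, j, rfl⟩) ⟨fun i j hij => by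
      exact_mod_cast mul_left_cancel₀ hα (congrArg Subtype.val hij),
      fun ⟨_, m, hm⟩ => ⟨m, Subtype.ext hm.symm⟩⟩
  exact (e.tsum_eq _).symm

lemma progressionPairing_expMonomial (hx : x ≠ 0) (τ : ℝ) (n l : ℕ) (θ : ℝ) :
    progressionPairing x τ n (expMonomial l θ) =
      (((x : ℂ) ^ l)⁻¹ * (-1) ^ n) • latticeComb x τ (θ / x) l n := by
  ext φ
  rw [Pi.smul_apply, smul_eq_mul, latticeComb_eq_tsum_int hx, ← tsum_mul_left]
  refine tsum_congr fun j => ?_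
  have hexp : e2piR (x * j) (θ / x) = e2piR j θ := by
    rw [e2piR, e2piR, show x * (j : ℝ) * (θ / x) = j * θ by field_simp]
  have hsign : (-1 : ℂ) ^ n * (-1) ^ n = 1 := by rw [← mul_pow, neg_one_mul, neg_neg, one_pow]
  have hscale : ((x : ℂ) ^ l)⁻¹ * (x : ℂ) ^ l = 1 :=
    inv_mul_cancel₀ (pow_ne_zero _ (Complex.ofReal_ne_zero.2 hx))
  rw [hexp, expMonomial, add_comm (x * (j : ℝ)) τ, mul_comm x (j : ℝ)]
  push_cast
  rw [mul_pow]
  linear_combination (-(j : ℂ) ^ l * e2piR j θ * iteratedDeriv n φ (τ + j * x)) *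
    (hscale + ((x : ℂ) ^ l)⁻¹ * (x : ℂ) ^ l * hsign)

lemma progressionPairing_mem_latticeCombs (hx : 0 < x) (τ : ℝ) (n : ℕ)
    (hu : u ∈ exponentialPolynomials) : progressionPairing x τ n u ∈ latticeCombs x := by
  induction hu using Submodule.span_induction with
  | mem u hu =>
    obtain ⟨⟨l, θ⟩, rfl⟩ := hu
    rw [progressionPairing_expMonomial hx.ne']
    exact Submodule.smul_mem _ _ (Submodule.subset_span ⟨((τ, θ / x), (l, n)), rfl⟩)
  | zero => exact progressionPairing_zero x τ n ▸ Submodule.zero_mem _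
  | add u v hu hv ihu ihv =>
    rw [progressionPairing_add hx τ n (exponentialPolynomials_le_polynomialGrowth hu)
      (exponentialPolynomials_le_polynomialGrowth hv)]
    exact Submodule.add_mem _ ihu ihv
  | smul a u _ ih =>
    rw [progressionPairing_smul]
    exact Submodule.smul_mem _ _ ih

end Progressions

section Decomposition

variable {f : TemperedDistR} {K : ℕ} {p : ℕ → ℝ → ℂ} {Λ : Set ℝ} {η x : ℝ}

lemma SlowlyGrowingOn.comp_progression_mem_polynomialGrowth (hp : SlowlyGrowingOn p Λ) (x τ : ℝ)
    (n : ℕ) : (fun j : ℤ => p n (τ + j * x)) ∈ polynomialGrowth := by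
  obtain ⟨C, hC, A, hgrowth⟩ := hp.growth
  refine ⟨C * (1 + |τ| + |x|) ^ A, by positivity, A, fun j => (hgrowth _ _).trans ?_⟩
  rw [mul_assoc, ← mul_pow]
  gcongr
  have habs := abs_add_le τ (j * x)
  rw [abs_mul] at habs
  nlinarith [abs_nonneg τ, abs_nonneg x, mul_nonneg (abs_nonneg τ) (abs_nonneg (j : ℝ)),
    abs_nonneg (j : ℝ)]

/-- The points of `[0, x)` whose progression with step `x` meets the support of the jets. -/
def residues (p : ℕ → ℝ → ℂ) (x : ℝ) : Set (Ico 0 x) :=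
  {τ | ∃ n, ∃ j : ℤ, p n (τ + j * x) ≠ 0}

/-- Division with remainder by `x`: every real number is `τ + j x` for unique `τ ∈ [0, x)` and
`j ∈ ℤ`. -/
def progressionEquiv (hx : 0 < x) : Ico 0 x × ℤ ≃ ℝ where
  toFun a := a.1 + a.2 * x
  invFun y := (⟨toIcoMod hx 0 y, by simpa using toIcoMod_mem_Ico hx 0 y⟩, toIcoDiv hx 0 y)
  left_inv := fun ⟨⟨τ, hτ⟩, j⟩ => by
    have hdiv : toIcoDiv hx 0 (τ + j * x) = j :=
      toIcoDiv_eq_of_sub_zsmul_mem_Ico hx (by simpa using hτ)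
    simp [hdiv, toIcoMod]
  right_inv y := by simp

variable {N : ℕ} {c : Fin N → ℂ}

lemma recurrence_of_translateSum_eq_zero
    (h : ∀ n z, translateSum c (fun i => i * x) p n z = 0) (τ : ℝ) (n : ℕ) (j : ℤ) :
    ∑ i, c i * p n (τ + (j - (i : ℕ) : ℤ) * x) = 0 := by
  rw [← h n (τ + j * x), translateSum]
  refine Finset.sum_congr rfl fun i _ => ?_
  push_cast
  rw [sub_mul, add_sub_assoc]

lemma finite_residues (hs : SeparatedBy η Λ) (hp : SlowlyGrowingOn p Λ) (hc : c ≠ 0)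
    (hrec : ∀ n z, translateSum c (fun i => i * x) p n z = 0) : (residues p x).Finite := by
  have hfin := ((hs.finite_inter_Icc 0 ((N + 1) * x)).prod (Set.finite_Icc (0 : ℤ) N)).image
    fun a : ℝ × ℤ => a.1 - a.2 * x
  refine (hfin.preimage Subtype.val_injective.injOn).subset ?_
  rintro ⟨τ, hτ0, hτx⟩ ⟨n, j, hj⟩
  obtain ⟨i, hi0, hiN, hi⟩ : ∃ i : ℤ, 0 ≤ i ∧ i < N ∧ p n (τ + i * x) ≠ 0 := by
    by_contra! hzero
    exact hj (congrFun (eq_zero_of_recurrence (u := fun j : ℤ => p n (τ + j * x)) hc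
      (recurrence_of_translateSum_eq_zero hrec τ n) hzero) j)
  have hi0' : (0 : ℝ) ≤ i := by exact_mod_cast hi0
  have hiN' : (i : ℝ) ≤ N := by exact_mod_cast hiN.le
  exact ⟨(τ + i * x, i), ⟨⟨hp.supp _ _ hi, by nlinarith, by nlinarith⟩, hi0, hiN.le⟩,
    add_sub_cancel_right _ _⟩

lemma IsDeltaSeries.eq_sum_progressionPairing (h : IsDeltaSeries f K p Λ) (hx : 0 < x)
    (hfin : (residues p x).Finite) :
    ⇑f = ∑ τ ∈ hfin.toFinset, ∑ n ∈ Finset.range (K + 1),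
      progressionPairing x τ n fun j => p n (τ + j * x) := by
  ext φ
  have hsum := ((progressionEquiv hx).hasSum_iff.2 (h.hasSum φ)).prod_fiberwise
    fun τ : Ico 0 x => hasSum_sum fun n (_ : n ∈ Finset.range (K + 1)) =>
      (summable_progressionPairing hx τ n (h.comp_progression_mem_polynomialGrowth x τ n) φ).hasSum
  have hzero : ∀ τ ∉ hfin.toFinset, ∑ n ∈ Finset.range (K + 1),
      progressionPairing x τ n (fun j => p n (τ + j * x)) φ = 0 := fun τ hτ => by
    refine Finset.sum_eq_zero fun n _ => ?_
    have hcoeff : (fun j : ℤ => p n (τ + j * x)) = 0 := funext fun j =>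
      not_not.1 fun hj => hτ (hfin.mem_toFinset.2 ⟨n, j, hj⟩)
    rw [hcoeff, progressionPairing_zero, Pi.zero_apply]
  rw [hsum.unique (hasSum_sum_of_ne_finset_zero hzero)]
  simp only [Finset.sum_apply, progressionPairing]

lemma IsDeltaSeries.coe_mem_latticeCombs (hs : SeparatedBy η Λ) (h : IsDeltaSeries f K p Λ)
    (hx : 0 < x) (hc : c ≠ 0) (hrec : ∀ n z, translateSum c (fun i => i * x) p n z = 0) :
    ⇑f ∈ latticeCombs x := by
  rw [h.eq_sum_progressionPairing hx (finite_residues hs h.toSlowlyGrowingOn hc hrec)]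
  exact Submodule.sum_mem _ fun τ _ => Submodule.sum_mem _ fun n _ =>
    progressionPairing_mem_latticeCombs hx τ n <| mem_exponentialPolynomials_of_recurrence hc
      (h.comp_progression_mem_polynomialGrowth x τ n) (recurrence_of_translateSum_eq_zero hrec τ n)

end Decomposition

lemma UniformlyDiscreteR.exists_separatedBy {A : Set ℝ} (hA : UniformlyDiscreteR A) :
    ∃ η, SeparatedBy η A :=
  let ⟨η, hη, h⟩ := hA
  ⟨η, hη, h⟩

lemma exists_coe_mem_latticeCombs {f : TemperedDistR} (hΛ : UniformlyDiscreteR (tdSupportR f))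
    (hΓ : UniformlyDiscreteR (tdSupportR (fourierTDR f))) : ∃ α > 0, ⇑f ∈ latticeCombs α := by
  obtain ⟨η, hs⟩ := hΛ.exists_separatedBy
  obtain ⟨η', hs'⟩ := hΓ.exists_separatedBy
  obtain ⟨K, p, hp⟩ := exists_isDeltaSeries f hs
  obtain ⟨M, q, hq⟩ := exists_isDeltaSeries _ hs'
  have hsp := hs.mono hp.jetSupport_subset
  rcases (jetSupport p).eq_empty_or_nonempty with hempty | hne
  · refine ⟨1, one_pos, hp.coe_mem_latticeCombs hs one_pos (N := 1) (c := 1) one_ne_zero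
      fun n z => Finset.sum_eq_zero fun i _ => ?_⟩
    rw [eq_zero_of_notMem_jetSupport (p := p) (by simp [hempty]), mul_zero]
  · obtain ⟨x, hx, N, c, hc, hrec⟩ := exists_progression_translateSum_eq_zero hsp
      hp.isDeltaSeries_jetSupport (hs'.mono hq.jetSupport_subset) hq.isDeltaSeries_jetSupport hne
    exact ⟨x, hx, hp.coe_mem_latticeCombs hs hx hc hrec⟩

theorem statement16_general (f : TemperedDistR) (hΛ : UniformlyDiscreteR (tdSupportR f))
    (hΓ : UniformlyDiscreteR (tdSupportR (fourierTDR f))) :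
    ∃ α : ℝ, 0 < α ∧
      ∃ (Q : ℕ) (τ w : Fin Q → ℝ) (l n : Fin Q → ℕ) (cc : Fin Q → ℂ),
        ∀ φ : 𝓢(ℝ, ℂ), f φ = ∑ i, cc i * ∑' lam : {y : ℝ // ∃ m : ℤ, y = α * m},
          (((lam : ℝ) ^ (l i) : ℝ) : ℂ) * e2piR (lam : ℝ) (w i) *
            ((-1 : ℂ) ^ (n i) * iteratedDeriv (n i) φ ((lam : ℝ) + τ i)) := by
  obtain ⟨α, hα, hf⟩ := exists_coe_mem_latticeCombs hΛ hΓ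
  obtain ⟨Q, cc, g, hg⟩ := Submodule.mem_span_set'.1 hf
  choose a ha using fun i => (g i).2
  refine ⟨α, hα, Q, fun i => (a i).1.1, fun i => (a i).1.2, fun i => (a i).2.1,
    fun i => (a i).2.2, cc, fun φ => ?_⟩
  rw [← hg, Finset.sum_apply]
  exact Finset.sum_congr rfl fun i _ => by rw [Pi.smul_apply, ← ha i]; rfl

end

/-- (Theorem 3, Lev–Reti.) Let
`f = Σ_{λ∈Λ} Σ_n p_n(λ) δ_λ^{(n)}` be a tempered distribution on `ℝ` whose
support `Λ` and spectrum `Γ` are uniformly discrete. Then there are a lattice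
`L = αℤ`, a finite set of quadruples `(τ, ω, l, n)` and complex numbers
`c(τ,ω,l,n)` with
`f = Σ_{(τ,ω,l,n)} c(τ,ω,l,n) Σ_{λ∈L} λ^l e^{2πiλω} δ_{λ+τ}^{(n)}`. -/
theorem statement16 (f : TemperedDistR) (K : ℕ) (p : ℕ → ℝ → ℂ)
    (hp0 : ∀ n > K, ∀ x, p n x = 0)
    (hsupp : ∀ n x, p n x ≠ 0 → x ∈ tdSupportR f)
    (hrep : ∀ φ : SchwartzMap ℝ ℂ, HasCompactSupport (⇑φ) →
      f φ = ∑' x : ℝ, ∑ n ∈ Finset.range (K + 1),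
        p n x * ((-1 : ℂ) ^ n * iteratedDeriv n (⇑φ) x))
    (hΛ : UniformlyDiscreteR (tdSupportR f))
    (hΓ : UniformlyDiscreteR (tdSupportR (fourierTDR f))) :
    ∃ α : ℝ, 0 < α ∧
      ∃ (Q : ℕ) (τ w : Fin Q → ℝ) (l n : Fin Q → ℕ) (cc : Fin Q → ℂ),
        ∀ φ : SchwartzMap ℝ ℂ, HasCompactSupport (⇑φ) →
          f φ = ∑ i, cc i * ∑' lam : {y : ℝ // ∃ m : ℤ, y = α * m},
            (((lam : ℝ) ^ (l i) : ℝ) : ℂ) * e2piR (lam : ℝ) (w i) *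
              ((-1 : ℂ) ^ (n i) * iteratedDeriv (n i) (⇑φ) ((lam : ℝ) + τ i)) :=
  let ⟨α, hα, Q, τ, w, l, n, cc, h⟩ := statement16_general f hΛ hΓ
  ⟨α, hα, Q, τ, w, l, n, cc, fun φ _ => h φ⟩
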